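/- For every quasi-isometry φ : Sol → Sol there exist bilipschitz homeomorphisms f, g : ℝ → ℝ and a constant D ≥ 0 such that either d_Sol(φ(x,y,z), (f(x), g(y), z)) ≤ D for all (x,y,z) ∈ ℝ³, or d_Sol(φ(x,y,z), (f(y), g(x), −z)) ≤ D for all (x,y,z) ∈ ℝ³. -/

import Mathlib

open Set

noncomputable section

/-- A path `γ : ℝ → E` is piecewise `C¹` on `[0,1]`. -/
def PiecewiseC1 {E : Type*} [NormedAddCommGroup E] [NormedSpace ℝ E] (γ : ℝ → E) : Prop :=
  ∃ (n : ℕ) (τ : ℕ → ℝ), τ 0 = 0 ∧ τ n = 1 ∧ (∀ i < n, τ i ≤ τ (i + 1)) ∧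
    ∀ i < n, ContDiffOn ℝ 1 γ (Set.Icc (τ i) (τ (i + 1)))

/-- The `Sol` length of a path `γ(t) = (x(t), y(t), z(t))`, for the metric
`ds² = e^{-z} dx² + e^{z} dy² + dz²`. -/
def solLength (γ : ℝ → ℝ × ℝ × ℝ) : ℝ :=
  ∫ t in (0:ℝ)..1,
    Real.sqrt (Real.exp (-(γ t).2.2) * (deriv (fun s => (γ s).1) t) ^ 2 +
      Real.exp ((γ t).2.2) * (deriv (fun s => (γ s).2.1) t) ^ 2 +
      (deriv (fun s => (γ s).2.2) t) ^ 2)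

/-- The left-invariant distance on `Sol = ℝ³`. -/
def dSol (p q : ℝ × ℝ × ℝ) : ℝ :=
  sInf {ℓ : ℝ | ∃ γ : ℝ → ℝ × ℝ × ℝ,
    γ 0 = p ∧ γ 1 = q ∧ PiecewiseC1 γ ∧ solLength γ = ℓ}

/-- Height function on `Sol`. -/
def solHeight (p : ℝ × ℝ × ℝ) : ℝ := p.2.2

/-- `f` is a `(K, C)`-quasi-isometric embedding with respect to the given distances. -/
def IsQIE {X Y : Type*} (dX : X → X → ℝ) (dY : Y → Y → ℝ) (K C : ℝ) (f : X → Y) : Prop :=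
  ∀ a b : X, (1 / K) * dX a b - C ≤ dY (f a) (f b) ∧ dY (f a) (f b) ≤ K * dX a b + C

/-- `f` is a `(K, C)`-quasi-isometry with respect to the given distances. -/
def IsQI {X Y : Type*} (dX : X → X → ℝ) (dY : Y → Y → ℝ) (K C : ℝ) (f : X → Y) : Prop :=
  IsQIE dX dY K C f ∧ ∀ y : Y, ∃ x : X, dY (f x) y ≤ C

/-- Two "metric spaces", given by distance functions, are quasi-isometric. -/
def QuasiIsometric {X Y : Type*} (dX : X → X → ℝ) (dY : Y → Y → ℝ) : Prop :=
  ∃ (K C : ℝ) (f : X → Y), 1 ≤ K ∧ 0 ≤ C ∧ IsQI dX dY K C f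

/-- `f : ℝ → ℝ` is a bilipschitz homeomorphism. -/
def IsBilip (f : ℝ → ℝ) : Prop :=
  Function.Surjective f ∧ ∃ M : ℝ, 1 ≤ M ∧
    ∀ s t : ℝ, (1 / M) * |s - t| ≤ |f s - f t| ∧ |f s - f t| ≤ M * |s - t|

/-- A continuous function that is locally constant on the interior of an interval is constant. -/
theorem eq_of_locally_eq_on_Ioo {J : ℝ → ℝ} (hJ : Continuous J) {a b : ℝ} (hab : a ≤ b)
    (h : ∀ s ∈ Ioo a b, ∃ r > 0, ∀ t, |s - t| < r → J s = J t) : J a = J b := by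
  rcases hab.eq_or_lt with rfl | hlt
  · rfl
  have hd : ∀ s ∈ Ioo a b, HasDerivAt J 0 s := by
    intro s hs
    obtain ⟨r, hr, h'⟩ := h s hs
    have : J =ᶠ[nhds s] fun _ => J s := by
      filter_upwards [Metric.ball_mem_nhds s hr] with t ht
      refine (h' t ?_).symm
      rwa [abs_sub_comm, ← Real.dist_eq]
    exact (hasDerivAt_const s (J s)).congr_of_eventuallyEq this
  obtain ⟨c, hc, h'⟩ := exists_hasDerivAt_eq_slope J (fun _ => 0) hlt hJ.continuousOn hd
  have : (b - a) ≠ 0 := by linarith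
  field_simp at h'
  linarith

/-- A continuous function which is nowhere locally decreasing to the right is monotone. -/
theorem le_of_locally_le_on_Ioo {G : ℝ → ℝ} (hG : Continuous G) {a b : ℝ}
    (h : ∀ s ∈ Ioo a b, ∃ r > 0, ∀ t, s ≤ t → t - s < r → G s ≤ G t) :
    ∀ s ∈ Ioo a b, ∀ t ∈ Ioo a b, s ≤ t → G s ≤ G t := by
  intro s hs t ht hst
  have hsub : Icc s t ⊆ {w | G s ≤ G w} := by
    refine IsClosed.Icc_subset_of_forall_exists_gt ?_ (by simp) ?_
    · exact (isClosed_le continuous_const hG).inter isClosed_Icc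
    · rintro x ⟨hx1, hx2⟩ y hy
      obtain ⟨r, hr, h'⟩ := h x ⟨hs.1.trans_le hx2.1, hx2.2.trans ht.2⟩
      have hy' : x < y := hy
      have hm : 0 < min (r / 2) (y - x) := lt_min (by linarith) (by linarith)
      refine ⟨x + min (r / 2) (y - x), ?_, by linarith, ?_⟩
      · have hx1' : G s ≤ G x := hx1
        have := h' (x + min (r / 2) (y - x)) (by linarith)
          (by have := min_le_left (r / 2) (y - x); linarith)
        exact hx1'.trans this
      · have := min_le_right (r / 2) (y - x); linarith
  exact hsub ⟨hst, le_rfl⟩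

/-- Rigidity of the height profile of a geodesic quadrilateral of unit side: `u` is the height
along the boundary of the quadrilateral, `J` and `j` the heights at which the horizontal
coordinates branch off from those of the fourth side. -/
theorem quadrilateral_profile {u J j : ℝ → ℝ} {c : ℝ} (hc : 0 < c)
    (hju : ∀ t, j t ≤ u t) (huJ : ∀ t, u t ≤ J t)
    (hu : ∀ s t, |u s - u t| ≤ |s - t|)
    (hJu : ∀ s t, |(2 * J s - u s) - (2 * J t - u t)| ≤ |s - t|)
    (hjl : ∀ s t, |(2 * j s - u s) - (2 * j t - u t)| ≤ |s - t|)
    (hJc : ∀ s t, 4 * |s - t| < J s - u s → J s = J t)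
    (hjc : ∀ s t, 4 * |s - t| < u s - j s → j s = j t)
    (hfar : ∀ t, c * min t (3 - t) ≤ J t - j t)
    (hJ0 : J 0 = 1) (hu0 : u 0 = 1) (hj0 : j 0 = 1)
    (hJ3 : J 3 = 0) (hu3 : u 3 = 0) (hj3 : j 3 = 0) :
    u 1 = 0 ∧ J 1 = 1 ∧ u 2 = 1 ∧ j 2 = 0 := by
  have lipc : ∀ f : ℝ → ℝ, (∀ s t, |f s - f t| ≤ |s - t|) → Continuous f := by
    intro f hf
    have : LipschitzWith 1 f := LipschitzWith.of_dist_le_mul (by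
      intro s t; simpa [Real.dist_eq] using hf s t)
    exact this.continuous
  have cu : Continuous u := lipc u hu
  have cJ : Continuous J := by
    have := ((lipc _ hJu).add cu).div_const 2
    refine this.congr fun t => by simp only [Pi.add_apply]; ring
  have cj : Continuous j := by
    have := ((lipc _ hjl).add cu).div_const 2
    refine this.congr fun t => by simp only [Pi.add_apply]; ring
  have hpos : ∀ t ∈ Ioo (0:ℝ) 3, j t < J t := by
    intro t ht
    have : 0 < min t (3 - t) := lt_min ht.1 (by linarith [ht.2])
    have := mul_pos hc this
    linarith [hfar t]
  have Jconst : ∀ a b, a ≤ b → (∀ t ∈ Ioo a b, u t < J t) → J a = J b := by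
    intro a b hab h
    refine eq_of_locally_eq_on_Ioo cJ hab fun s hs => ⟨(J s - u s) / 4, ?_, fun t ht => ?_⟩
    · have := h s hs; linarith
    · exact hJc s t (by linarith)
  have jconst : ∀ a b, a ≤ b → (∀ t ∈ Ioo a b, j t < u t) → j a = j b := by
    intro a b hab h
    refine eq_of_locally_eq_on_Ioo cj hab fun s hs => ⟨(u s - j s) / 4, ?_, fun t ht => ?_⟩
    · have := h s hs; linarith
    · exact hjc s t (by linarith)
  -- the potential
  have hG : ∀ s ∈ Ioo (0:ℝ) 3, ∀ t ∈ Ioo (0:ℝ) 3, s ≤ t →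
      2 * J s + 2 * j s - u s + s ≤ 2 * J t + 2 * j t - u t + t := by
    refine le_of_locally_le_on_Ioo (G := fun s => 2 * J s + 2 * j s - u s + s) (by fun_prop) ?_
    intro s hs
    rcases lt_or_ge (u s) (J s) with h | h
    · refine ⟨(J s - u s) / 4, by linarith, fun t hst ht => ?_⟩
      have h1 := hJc s t (by rw [abs_sub_comm, abs_of_nonneg (by linarith)]; linarith)
      have h2 := (abs_le.1 (hjl s t)).2
      rw [abs_sub_comm s t, abs_of_nonneg (sub_nonneg.2 hst)] at h2
      linarith
    · have h' : j s < u s := lt_of_lt_of_le (hpos s hs) h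
      refine ⟨(u s - j s) / 4, by linarith, fun t hst ht => ?_⟩
      have h1 := hjc s t (by rw [abs_sub_comm, abs_of_nonneg (by linarith)]; linarith)
      have h2 := (abs_le.1 (hJu s t)).2
      rw [abs_sub_comm s t, abs_of_nonneg (sub_nonneg.2 hst)] at h2
      linarith
  have noback : ∀ w w', 0 < w → w < w' → w' < 3 → J w = u w → j w' = u w' → False := by
    intro w w' hw hww hw' hJw hjw
    obtain ⟨w1, ⟨hw1, hw1'⟩, hmax⟩ := (isCompact_Icc.inter_right
      (isClosed_eq cJ cu) : IsCompact (Icc w w' ∩ {t | J t = u t})).exists_isGreatest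
        ⟨w, ⟨le_rfl, hww.le⟩, hJw⟩
    obtain ⟨w2, ⟨hw2, hw2'⟩, hmin⟩ := (isCompact_Icc.inter_right
      (isClosed_eq cj cu) : IsCompact (Icc w1 w' ∩ {t | j t = u t})).exists_isLeast
        ⟨w', ⟨hw1.2, le_rfl⟩, hjw⟩
    simp only [mem_ofPred_eq] at hw1' hw2'
    have e1 : J w1 = J w2 := by
      refine Jconst w1 w2 hw2.1 fun t ht => lt_of_le_of_ne (huJ t) fun he => ?_
      have := hmax ⟨⟨hw1.1.trans ht.1.le, ht.2.le.trans hw2.2⟩, he.symm⟩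
      linarith [ht.1]
    have e2 : j w1 = j w2 := by
      refine jconst w1 w2 hw2.1 fun t ht => lt_of_le_of_ne (hju t) fun he => ?_
      have := hmin ⟨⟨ht.1.le, ht.2.le.trans hw2.2⟩, he⟩
      linarith [ht.2]
    have i1 : w1 ∈ Ioo (0:ℝ) 3 := ⟨by linarith [hw1.1], by linarith [hw1.2]⟩
    have i2 : w2 ∈ Ioo (0:ℝ) 3 := ⟨by linarith [hw1.1, hw2.1], by linarith [hw2.2]⟩
    -- the potential at `w2` is at most its extremal value
    have k1 : 3 ≤ 2 * J w1 + 2 * j w1 - u w1 + w1 := by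
      have : Filter.Tendsto (fun s => 2 * J s + 2 * j s - u s + s) (nhdsWithin 0 (Ioi 0))
          (nhds (2 * J 0 + 2 * j 0 - u 0 + 0)) :=
        ((by fun_prop : Continuous fun s => 2 * J s + 2 * j s - u s + s).tendsto 0).mono_left
          nhdsWithin_le_nhds
      have h3 : 2 * J 0 + 2 * j 0 - u 0 + 0 = (3:ℝ) := by rw [hJ0, hj0, hu0]; norm_num
      rw [h3] at this
      refine le_of_tendsto this ?_
      filter_upwards [Ioo_mem_nhdsGT i1.1] with s hs
      exact hG s ⟨hs.1, hs.2.trans i1.2⟩ w1 i1 hs.2.le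
    have k2 : 2 * J w2 + 2 * j w2 - u w2 + w2 ≤ 3 := by
      have : Filter.Tendsto (fun s => 2 * J s + 2 * j s - u s + s) (nhdsWithin 3 (Iio 3))
          (nhds (2 * J 3 + 2 * j 3 - u 3 + 3)) :=
        ((by fun_prop : Continuous fun s => 2 * J s + 2 * j s - u s + s).tendsto 3).mono_left
          nhdsWithin_le_nhds
      have h3 : 2 * J 3 + 2 * j 3 - u 3 + 3 = (3:ℝ) := by rw [hJ3, hj3, hu3]; norm_num
      rw [h3] at this
      refine ge_of_tendsto this ?_
      filter_upwards [Ioo_mem_nhdsLT i2.2] with s hs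
      exact hG w2 i2 s ⟨i2.1.trans hs.1, hs.2⟩ hs.1.le
    have := hpos w1 i1
    have := hw2.1
    linarith
  -- there are interior contact points of both kinds
  have exj : ∃ t ∈ Ioo (0:ℝ) 3, j t = u t := by
    by_contra hne
    push Not at hne
    have := jconst 0 3 (by norm_num) fun t ht => lt_of_le_of_ne (hju t) (hne t ht)
    linarith
  have exJ : ∃ t ∈ Ioo (0:ℝ) 3, J t = u t := by
    by_contra hne
    push Not at hne
    have := Jconst 0 3 (by norm_num) fun t ht => lt_of_le_of_ne (huJ t) (hne t ht).symm
    linarith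
  obtain ⟨tj, htj, htj'⟩ := exj
  obtain ⟨tJ, htJ, htJ'⟩ := exJ
  have hle : ∀ s ∈ Ioo (0:ℝ) 3, ∀ t ∈ Ioo (0:ℝ) 3, j s = u s → J t = u t → s < t := by
    intro s hs t ht h1 h2
    by_contra hlt
    rcases (not_lt.1 hlt).eq_or_lt with rfl | h
    · have := hpos _ hs; linarith
    · exact noback t s ht.1 h hs.2 h2 h1
  obtain ⟨b, ⟨hb, hb'⟩, hbmax⟩ := (isCompact_Icc.inter_right
      (isClosed_eq cj cu) : IsCompact (Icc tj tJ ∩ {t | j t = u t})).exists_isGreatest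
        ⟨tj, ⟨le_rfl, (hle tj htj tJ htJ htj' htJ').le⟩, htj'⟩
  obtain ⟨a, ⟨ha, ha'⟩, hamin⟩ := (isCompact_Icc.inter_right
      (isClosed_eq cJ cu) : IsCompact (Icc tj tJ ∩ {t | J t = u t})).exists_isLeast
        ⟨tJ, ⟨(hle tj htj tJ htJ htj' htJ').le, le_rfl⟩, htJ'⟩
  simp only [mem_ofPred_eq] at hb' ha'
  have ib : b ∈ Ioo (0:ℝ) 3 := ⟨by linarith [hb.1, htj.1], by linarith [hb.2, htJ.2]⟩
  have ia : a ∈ Ioo (0:ℝ) 3 := ⟨by linarith [ha.1, htj.1], by linarith [ha.2, htJ.2]⟩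
  have eb : j b = j 3 := by
    refine jconst b 3 ib.2.le fun t ht => lt_of_le_of_ne (hju t) fun he => ?_
    have h1 := hle t ⟨ib.1.trans ht.1, ht.2⟩ tJ htJ he htJ'
    have := hbmax ⟨⟨by linarith [hb.1, ht.1], h1.le⟩, he⟩
    linarith [ht.1]
  have ea : J 0 = J a := by
    refine Jconst 0 a ia.1.le fun t ht => lt_of_le_of_ne (huJ t) fun he => ?_
    have h1 := hle tj htj t ⟨ht.1, ht.2.trans ia.2⟩ htj' he.symm
    have := hamin ⟨⟨h1.le, by linarith [ha.2, ht.2]⟩, he.symm⟩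
    linarith [ht.2]
  have hab := hle b ib a ia hb' ha'
  have q1 := (abs_le.1 (hu 0 b)).2
  have q2 := (abs_le.1 (hu a b)).2
  have q3 := (abs_le.1 (hu a 3)).2
  rw [zero_sub, abs_neg, abs_of_pos ib.1] at q1
  rw [abs_of_pos (by linarith)] at q2
  rw [abs_sub_comm, abs_of_pos (by linarith [ia.2])] at q3
  have b1 : b = 1 := by linarith
  have a2 : a = 2 := by linarith
  subst b1 a2
  refine ⟨by linarith, ?_, by linarith, ?_⟩
  · refine (Jconst 0 1 (by norm_num) fun t ht => lt_of_le_of_ne (huJ t) fun he => ?_).symm.trans hJ0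
    have h1 := hle 1 ib t ⟨ht.1, ht.2.trans ib.2⟩ hb' he.symm
    linarith [ht.2]
  · refine (jconst 2 3 (by norm_num) fun t ht => lt_of_le_of_ne (hju t) fun he => ?_).trans hj3
    have h1 := hle t ⟨ia.1.trans ht.1, ht.2⟩ 2 ia he ha'
    linarith [ht.1]

/-- An approximate version of the hypotheses of `quadrilateral_profile`. -/
structure ApproxProfile (c ε : ℝ) (u J j : ℝ → ℝ) : Prop where
  hju : ∀ t ∈ Icc (0:ℝ) 3, j t ≤ u t + ε
  huJ : ∀ t ∈ Icc (0:ℝ) 3, u t ≤ J t + ε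
  hu : ∀ s ∈ Icc (0:ℝ) 3, ∀ t ∈ Icc (0:ℝ) 3, |u s - u t| ≤ |s - t| + ε
  hJu : ∀ s ∈ Icc (0:ℝ) 3, ∀ t ∈ Icc (0:ℝ) 3,
    |(2 * J s - u s) - (2 * J t - u t)| ≤ |s - t| + ε
  hjl : ∀ s ∈ Icc (0:ℝ) 3, ∀ t ∈ Icc (0:ℝ) 3,
    |(2 * j s - u s) - (2 * j t - u t)| ≤ |s - t| + ε
  hJc : ∀ s ∈ Icc (0:ℝ) 3, ∀ t ∈ Icc (0:ℝ) 3, 4 * |s - t| + ε < J s - u s → |J s - J t| ≤ ε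
  hjc : ∀ s ∈ Icc (0:ℝ) 3, ∀ t ∈ Icc (0:ℝ) 3, 4 * |s - t| + ε < u s - j s → |j s - j t| ≤ ε
  hfar : ∀ t ∈ Icc (0:ℝ) 3, c * min t (3 - t) ≤ J t - j t + ε
  h0 : |J 0 - 1| ≤ ε ∧ |u 0 - 1| ≤ ε ∧ |j 0 - 1| ≤ ε
  h3 : |J 3| ≤ ε ∧ |u 3| ≤ ε ∧ |j 3| ≤ ε

theorem abs_clamp_sub_clamp_le (a b s t : ℝ) :
    |max a (min b s) - max a (min b t)| ≤ |s - t| := by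
  refine (abs_max_sub_max_le_max _ _ _ _).trans ?_
  simp only [sub_self, abs_zero]
  refine max_le (abs_nonneg _) ((abs_min_sub_min_le_max _ _ _ _).trans ?_)
  simp

/-- Stability of `quadrilateral_profile`. -/
theorem approx_quadrilateral_profile {c δ : ℝ} (hc : 0 < c) (hδ : 0 < δ) :
    ∃ ε > 0, ∀ u J j : ℝ → ℝ, ApproxProfile c ε u J j →
      |u 1| ≤ δ ∧ |J 1 - 1| ≤ δ ∧ |u 2 - 1| ≤ δ ∧ |j 2| ≤ δ := by
  by_contra! hne
  have hpos : ∀ n : ℕ, (0:ℝ) < 1 / ((n:ℝ) + 1) := fun n => Nat.one_div_pos_of_nat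
  choose u J j hP hbad using fun n : ℕ => hne _ (hpos n)
  set e : ℕ → ℝ := fun n => 1 / ((n:ℝ) + 1) with he
  have e1 : ∀ n, e n ≤ 1 := by
    intro n
    simp only [he]
    rw [div_le_one (by positivity)]
    linarith [(Nat.cast_nonneg n : (0:ℝ) ≤ n)]
  let F : Filter ℕ := (Filter.hyperfilter ℕ : Filter ℕ)
  have eF : Filter.Tendsto e F (nhds 0) :=
    tendsto_one_div_add_atTop_nhds_zero_nat.mono_left Nat.hyperfilter_le_atTop
  let cl : ℝ → ℝ := fun t => max 0 (min 3 t)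
  have clm : ∀ t, cl t ∈ Icc (0:ℝ) 3 := fun t =>
    ⟨le_max_left _ _, max_le (by norm_num) (min_le_left _ _)⟩
  have clid : ∀ t ∈ Icc (0:ℝ) 3, cl t = t := fun t ht => by
    simp only [cl]; rw [min_eq_right ht.2, max_eq_right ht.1]
  have cll : ∀ s t, |cl s - cl t| ≤ |s - t| := abs_clamp_sub_clamp_le 0 3
  have lim : ∀ v : ℕ → ℝ, (∀ n, |v n| ≤ 20) → ∃ l, Filter.Tendsto v F (nhds l) := by
    intro v hv
    have hm : ((Filter.hyperfilter ℕ).map v : Filter ℝ) ≤ Filter.principal (Icc (-20) 20) := by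
      rw [Filter.le_principal_iff]
      exact Filter.mem_map.2 (Filter.Eventually.of_forall fun n => abs_le.1 (hv n))
    obtain ⟨l, -, hl⟩ := isCompact_Icc.ultrafilter_le_nhds _ hm
    exact ⟨l, hl⟩
  have bd : ∀ n, ∀ t ∈ Icc (0:ℝ) 3, |u n t| ≤ 6 ∧ |2 * J n t - u n t| ≤ 10 ∧
      |2 * j n t - u n t| ≤ 10 := by
    intro n t ht
    obtain ⟨a1, a2, a3⟩ := (hP n).h0
    have z : (0:ℝ) ∈ Icc (0:ℝ) 3 := ⟨le_rfl, by norm_num⟩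
    have b1 := (hP n).hu t ht 0 z
    have b2 := (hP n).hJu t ht 0 z
    have b3 := (hP n).hjl t ht 0 z
    have := e1 n
    rw [sub_zero, abs_of_nonneg ht.1] at b1 b2 b3
    have := ht.2
    change |u n 0 - 1| ≤ e n at a2
    change |J n 0 - 1| ≤ e n at a1
    change |j n 0 - 1| ≤ e n at a3
    change _ ≤ t + e n at b1 b2 b3
    rw [abs_le] at a1 a2 a3 b1 b2 b3
    simp only [abs_le]
    refine ⟨⟨?_, ?_⟩, ⟨?_, ?_⟩, ?_, ?_⟩ <;> linarith
  have bdJ : ∀ n, ∀ t ∈ Icc (0:ℝ) 3, |J n t| ≤ 20 := fun n t ht => by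
    obtain ⟨a1, a2, a3⟩ := bd n t ht
    rw [abs_le] at *
    constructor <;> linarith
  have bdj : ∀ n, ∀ t ∈ Icc (0:ℝ) 3, |j n t| ≤ 20 := fun n t ht => by
    obtain ⟨a1, a2, a3⟩ := bd n t ht
    rw [abs_le] at *
    constructor <;> linarith
  choose U hU using fun t => lim (fun n => u n (cl t)) fun n =>
    (bd n _ (clm t)).1.trans (by norm_num)
  choose V hV using fun t => lim (fun n => J n (cl t)) fun n => bdJ n _ (clm t)
  choose W hW using fun t => lim (fun n => j n (cl t)) fun n => bdj n _ (clm t)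
  have key := quadrilateral_profile (u := U) (J := V) (j := W) hc ?_ ?_ ?_ ?_ ?_ ?_ ?_ ?_
    ?_ ?_ ?_ ?_ ?_ ?_
  · obtain ⟨k1, k2, k3, k4⟩ := key
    have U1 := hU 1
    have V1 := hV 1
    have U2 := hU 2
    have W2 := hW 2
    rw [k1, clid 1 (by constructor <;> norm_num)] at U1
    rw [k2, clid 1 (by constructor <;> norm_num)] at V1
    rw [k3, clid 2 (by constructor <;> norm_num)] at U2
    rw [k4, clid 2 (by constructor <;> norm_num)] at W2
    have V1' := V1.sub_const 1
    have U2' := U2.sub_const 1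
    rw [sub_self] at V1' U2'
    have ev : ∀ {v : ℕ → ℝ}, Filter.Tendsto v F (nhds 0) → ∀ᶠ n in F, |v n| ≤ δ := by
      intro v hv
      have h2 := hv.abs
      rw [abs_zero] at h2
      filter_upwards [h2.eventually (gt_mem_nhds hδ)] with n hn using hn.le
    obtain ⟨n, n1, n2, n3, n4⟩ := ((ev U1).and ((ev V1').and ((ev U2').and (ev W2)))).exists
    exact absurd n4 (not_le.2 (hbad n n1 n2 n3))
  · intro t
    have h := (hU t).add eF
    rw [add_zero] at h
    exact le_of_tendsto_of_tendsto (hW t) h (Filter.Eventually.of_forall fun n =>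
      (hP n).hju _ (clm t))
  · intro t
    have h := (hV t).add eF
    rw [add_zero] at h
    exact le_of_tendsto_of_tendsto (hU t) h (Filter.Eventually.of_forall fun n =>
      (hP n).huJ _ (clm t))
  · intro s t
    have h := eF.const_add |cl s - cl t|
    rw [add_zero] at h
    exact (le_of_tendsto_of_tendsto ((hU s).sub (hU t)).abs h (Filter.Eventually.of_forall
      fun n => (hP n).hu _ (clm s) _ (clm t))).trans (cll s t)
  · intro s t
    have h := eF.const_add |cl s - cl t|
    rw [add_zero] at h
    exact (le_of_tendsto_of_tendsto ((((hV s).const_mul 2).sub (hU s)).sub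
      (((hV t).const_mul 2).sub (hU t))).abs h (Filter.Eventually.of_forall
      fun n => (hP n).hJu _ (clm s) _ (clm t))).trans (cll s t)
  · intro s t
    have h := eF.const_add |cl s - cl t|
    rw [add_zero] at h
    exact (le_of_tendsto_of_tendsto ((((hW s).const_mul 2).sub (hU s)).sub
      (((hW t).const_mul 2).sub (hU t))).abs h (Filter.Eventually.of_forall
      fun n => (hP n).hjl _ (clm s) _ (clm t))).trans (cll s t)
  · intro s t hst
    have h1 := eF.const_add (4 * |cl s - cl t|)
    rw [add_zero] at h1
    have h2 := (hV s).sub (hU s)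
    have h3 : ∀ᶠ n in F, |J n (cl s) - J n (cl t)| ≤ e n := by
      filter_upwards [h1.eventually_lt h2 (by linarith [cll s t])] with n hn
      exact (hP n).hJc _ (clm s) _ (clm t) hn
    have := le_of_tendsto_of_tendsto ((hV s).sub (hV t)).abs eF h3
    exact sub_eq_zero.1 (abs_nonpos_iff.1 this)
  · intro s t hst
    have h1 := eF.const_add (4 * |cl s - cl t|)
    rw [add_zero] at h1
    have h2 := (hU s).sub (hW s)
    have h3 : ∀ᶠ n in F, |j n (cl s) - j n (cl t)| ≤ e n := by
      filter_upwards [h1.eventually_lt h2 (by linarith [cll s t])] with n hn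
      exact (hP n).hjc _ (clm s) _ (clm t) hn
    have := le_of_tendsto_of_tendsto ((hW s).sub (hW t)).abs eF h3
    exact sub_eq_zero.1 (abs_nonpos_iff.1 this)
  · intro t
    have h := ((hV t).sub (hW t)).add eF
    rw [add_zero] at h
    have h2 : c * min (cl t) (3 - cl t) ≤ V t - W t := ge_of_tendsto h
      (Filter.Eventually.of_forall fun n => (hP n).hfar _ (clm t))
    refine le_trans (mul_le_mul_of_nonneg_left ?_ hc.le) h2
    rcases le_total t 0 with h | h
    · exact (min_le_left _ _).trans (h.trans (le_min (clm t).1 (by linarith [(clm t).2])))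
    rcases le_total t 3 with h' | h'
    · rw [clid t ⟨h, h'⟩]
    · exact (min_le_right _ _).trans
        ((by linarith : 3 - t ≤ 0).trans (le_min (clm t).1 (by linarith [(clm t).2])))
  all_goals
    first
    | exact tendsto_nhds_unique (hV 0) (by
        rw [clid 0 (by constructor <;> norm_num), tendsto_iff_norm_sub_tendsto_zero]
        exact squeeze_zero (fun _ => norm_nonneg _) (fun n => (hP n).h0.1) eF)
    | exact tendsto_nhds_unique (hU 0) (by
        rw [clid 0 (by constructor <;> norm_num), tendsto_iff_norm_sub_tendsto_zero]
        exact squeeze_zero (fun _ => norm_nonneg _) (fun n => (hP n).h0.2.1) eF)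
    | exact tendsto_nhds_unique (hW 0) (by
        rw [clid 0 (by constructor <;> norm_num), tendsto_iff_norm_sub_tendsto_zero]
        exact squeeze_zero (fun _ => norm_nonneg _) (fun n => (hP n).h0.2.2) eF)
    | exact tendsto_nhds_unique (hV 3) (by
        rw [clid 3 (by constructor <;> norm_num), tendsto_zero_iff_norm_tendsto_zero]
        exact squeeze_zero (fun _ => norm_nonneg _) (fun n => (hP n).h3.1) eF)
    | exact tendsto_nhds_unique (hU 3) (by
        rw [clid 3 (by constructor <;> norm_num), tendsto_zero_iff_norm_tendsto_zero]
        exact squeeze_zero (fun _ => norm_nonneg _) (fun n => (hP n).h3.2.1) eF)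
    | exact tendsto_nhds_unique (hW 3) (by
        rw [clid 3 (by constructor <;> norm_num), tendsto_zero_iff_norm_tendsto_zero]
        exact squeeze_zero (fun _ => norm_nonneg _) (fun n => (hP n).h3.2.2) eF)

/-- Half of the height coordinate; with this normalisation a vertical segment between the heights
`s` and `t` has length `2 |s - t|`. -/
def ht (p : ℝ × ℝ × ℝ) : ℝ := p.2.2 / 2

/-- The height at which the `x`-coordinates of `p` and `q` merge. -/
def upJoin (p q : ℝ × ℝ × ℝ) : ℝ :=
  Real.log (|p.1 - q.1| + (Real.exp (ht p) + Real.exp (ht q)))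

/-- The height at which the `y`-coordinates of `p` and `q` merge. -/
def dnJoin (p q : ℝ × ℝ × ℝ) : ℝ :=
  -Real.log (|p.2.1 - q.2.1| + (Real.exp (-ht p) + Real.exp (-ht q)))

/-- A combinatorial model of half the distance of `Sol`. -/
def rho (p q : ℝ × ℝ × ℝ) : ℝ :=
  2 * (upJoin p q - dnJoin p q) - |ht p - ht q|

/-- The height at which the `x`-coordinate of `p` merges with `a`. -/
def xJoin (a : ℝ) (p : ℝ × ℝ × ℝ) : ℝ := Real.log (|p.1 - a| + Real.exp (ht p))

/-- The height at which the `y`-coordinate of `p` merges with `b`. -/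
def yJoin (b : ℝ) (p : ℝ × ℝ × ℝ) : ℝ := -Real.log (|p.2.1 - b| + Real.exp (-ht p))

/-- The point of height `t` on the vertical line through `(x, y)`. -/
def vpt (x y t : ℝ) : ℝ × ℝ × ℝ := (x, y, 2 * t)

/-- The isometry of `Sol` exchanging the two horizontal coordinates. -/
def swapPt (p : ℝ × ℝ × ℝ) : ℝ × ℝ × ℝ := (p.2.1, p.1, -p.2.2)

@[simp] theorem vpt_fst (x y t : ℝ) : (vpt x y t).1 = x := rfl
@[simp] theorem vpt_snd (x y t : ℝ) : (vpt x y t).2.1 = y := rfl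
@[simp] theorem ht_vpt (x y t : ℝ) : ht (vpt x y t) = t := by simp [ht, vpt]
theorem vpt_eta (p : ℝ × ℝ × ℝ) : vpt p.1 p.2.1 (ht p) = p := by
  simp only [ht, vpt]; ext <;> simp; ring

@[simp] theorem ht_swapPt (p : ℝ × ℝ × ℝ) : ht (swapPt p) = -ht p := by simp [ht, swapPt]; ring
@[simp] theorem swapPt_fst (p : ℝ × ℝ × ℝ) : (swapPt p).1 = p.2.1 := rfl
@[simp] theorem swapPt_snd (p : ℝ × ℝ × ℝ) : (swapPt p).2.1 = p.1 := rfl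
@[simp] theorem swapPt_swapPt (p : ℝ × ℝ × ℝ) : swapPt (swapPt p) = p := by simp [swapPt]
@[simp] theorem swapPt_vpt (x y t : ℝ) : swapPt (vpt x y t) = vpt y x (-t) := by
  simp [swapPt, vpt]

@[simp] theorem upJoin_swapPt (p q : ℝ × ℝ × ℝ) :
    upJoin (swapPt p) (swapPt q) = -dnJoin p q := by simp [upJoin, dnJoin]

@[simp] theorem dnJoin_swapPt (p q : ℝ × ℝ × ℝ) :
    dnJoin (swapPt p) (swapPt q) = -upJoin p q := by simp [upJoin, dnJoin]

@[simp] theorem xJoin_swapPt (a : ℝ) (p : ℝ × ℝ × ℝ) : xJoin a (swapPt p) = -yJoin a p := by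
  simp [xJoin, yJoin]

@[simp] theorem rho_swapPt (p q : ℝ × ℝ × ℝ) : rho (swapPt p) (swapPt q) = rho p q := by
  simp only [rho, upJoin_swapPt, dnJoin_swapPt, ht_swapPt, ← abs_neg (ht p - ht q)]
  ring_nf

theorem upJoin_comm (p q : ℝ × ℝ × ℝ) : upJoin p q = upJoin q p := by
  simp only [upJoin, abs_sub_comm p.1, add_comm (Real.exp (ht p))]

theorem dnJoin_comm (p q : ℝ × ℝ × ℝ) : dnJoin p q = dnJoin q p := by
  simp only [dnJoin, abs_sub_comm p.2.1, add_comm (Real.exp (-ht p))]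

theorem rho_comm (p q : ℝ × ℝ × ℝ) : rho p q = rho q p := by
  simp only [rho, upJoin_comm p, dnJoin_comm p, abs_sub_comm (ht p)]

theorem exp_upJoin (p q : ℝ × ℝ × ℝ) :
    Real.exp (upJoin p q) = |p.1 - q.1| + (Real.exp (ht p) + Real.exp (ht q)) :=
  Real.exp_log (by positivity)

theorem exp_xJoin (a : ℝ) (p : ℝ × ℝ × ℝ) :
    Real.exp (xJoin a p) = |p.1 - a| + Real.exp (ht p) :=
  Real.exp_log (by positivity)

theorem exp_neg_dnJoin (p q : ℝ × ℝ × ℝ) :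
    Real.exp (-dnJoin p q) = |p.2.1 - q.2.1| + (Real.exp (-ht p) + Real.exp (-ht q)) := by
  rw [dnJoin, neg_neg]
  exact Real.exp_log (by positivity)

theorem exp_neg_yJoin (b : ℝ) (p : ℝ × ℝ × ℝ) :
    Real.exp (-yJoin b p) = |p.2.1 - b| + Real.exp (-ht p) := by
  rw [yJoin, neg_neg]
  exact Real.exp_log (by positivity)

theorem ht_le_upJoin_left (p q : ℝ × ℝ × ℝ) : ht p ≤ upJoin p q := by
  rw [← Real.exp_le_exp, exp_upJoin]
  have := abs_nonneg (p.1 - q.1)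
  have := Real.exp_pos (ht q)
  linarith

theorem ht_le_upJoin_right (p q : ℝ × ℝ × ℝ) : ht q ≤ upJoin p q :=
  upJoin_comm q p ▸ ht_le_upJoin_left q p

theorem dnJoin_le_ht_left (p q : ℝ × ℝ × ℝ) : dnJoin p q ≤ ht p := by
  have := ht_le_upJoin_left (swapPt p) (swapPt q)
  simp only [ht_swapPt, upJoin_swapPt] at this
  linarith

theorem dnJoin_le_ht_right (p q : ℝ × ℝ × ℝ) : dnJoin p q ≤ ht q :=
  dnJoin_comm q p ▸ dnJoin_le_ht_left q p

theorem ht_le_xJoin (a : ℝ) (p : ℝ × ℝ × ℝ) : ht p ≤ xJoin a p := by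
  rw [← Real.exp_le_exp, exp_xJoin]
  have := abs_nonneg (p.1 - a)
  linarith

theorem yJoin_le_ht (b : ℝ) (p : ℝ × ℝ × ℝ) : yJoin b p ≤ ht p := by
  have := ht_le_xJoin b (swapPt p)
  simp only [ht_swapPt, xJoin_swapPt] at this
  linarith

theorem two_le_exp_one : 2 ≤ Real.exp 1 := by
  have := Real.add_one_le_exp (1:ℝ); linarith

theorem le_max_add_one_of_exp {a b c : ℝ} (h : Real.exp a ≤ Real.exp b + Real.exp c) :
    a ≤ max b c + 1 := by
  rw [← Real.exp_le_exp, Real.exp_add]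
  have h1 := Real.exp_le_exp.2 (le_max_left b c)
  have h2 := Real.exp_le_exp.2 (le_max_right b c)
  nlinarith [two_le_exp_one, Real.exp_pos (max b c)]

theorem upJoin_le_max (p q r : ℝ × ℝ × ℝ) :
    upJoin p r ≤ max (upJoin p q) (upJoin q r) + 1 := by
  apply le_max_add_one_of_exp
  simp only [exp_upJoin]
  have := abs_sub_le p.1 q.1 r.1
  have := Real.exp_pos (ht q)
  linarith

theorem xJoin_le_max (a : ℝ) (p q : ℝ × ℝ × ℝ) :
    xJoin a p ≤ max (upJoin p q) (xJoin a q) + 1 := by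
  apply le_max_add_one_of_exp
  simp only [exp_upJoin, exp_xJoin]
  have := abs_sub_le p.1 q.1 a
  have := Real.exp_pos (ht q)
  linarith

theorem upJoin_le_max_xJoin (a : ℝ) (p q : ℝ × ℝ × ℝ) :
    upJoin p q ≤ max (xJoin a p) (xJoin a q) + 1 := by
  apply le_max_add_one_of_exp
  simp only [exp_upJoin, exp_xJoin]
  have := abs_sub_le p.1 a q.1
  rw [abs_sub_comm a] at this
  linarith

theorem min_le_dnJoin (p q r : ℝ × ℝ × ℝ) :
    min (dnJoin p q) (dnJoin q r) - 1 ≤ dnJoin p r := by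
  have := upJoin_le_max (swapPt p) (swapPt q) (swapPt r)
  simp only [upJoin_swapPt, max_neg_neg] at this
  linarith

theorem min_le_dnJoin_yJoin (b : ℝ) (p q : ℝ × ℝ × ℝ) :
    min (yJoin b p) (yJoin b q) - 1 ≤ dnJoin p q := by
  have := upJoin_le_max_xJoin b (swapPt p) (swapPt q)
  simp only [upJoin_swapPt, xJoin_swapPt, max_neg_neg] at this
  linarith

theorem upJoin_le_of_abs_le {p q : ℝ × ℝ × ℝ} {h : ℝ} (hp : ht p ≤ h) (hq : ht q ≤ h)
    (hx : |p.1 - q.1| ≤ Real.exp h) : upJoin p q ≤ h + 2 := by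
  rw [← Real.exp_le_exp, exp_upJoin, Real.exp_add]
  have h1 := Real.exp_le_exp.2 hp
  have h2 := Real.exp_le_exp.2 hq
  have := Real.add_one_le_exp (2:ℝ)
  nlinarith [Real.exp_pos h]

theorem le_dnJoin_of_abs_le {p q : ℝ × ℝ × ℝ} {h : ℝ} (hp : h ≤ ht p) (hq : h ≤ ht q)
    (hy : |p.2.1 - q.2.1| ≤ Real.exp (-h)) : h - 2 ≤ dnJoin p q := by
  have := upJoin_le_of_abs_le (p := swapPt p) (q := swapPt q) (h := -h)
    (by simpa using hp) (by simpa using hq) hy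
  simp only [upJoin_swapPt] at this
  linarith

theorem le_upJoin_of_le_abs {p q : ℝ × ℝ × ℝ} {h : ℝ} (hx : Real.exp h ≤ |p.1 - q.1|) :
    h ≤ upJoin p q := by
  rw [← Real.exp_le_exp, exp_upJoin]
  have := Real.exp_pos (ht p)
  have := Real.exp_pos (ht q)
  linarith

theorem dnJoin_le_of_le_abs {p q : ℝ × ℝ × ℝ} {h : ℝ} (hy : Real.exp (-h) ≤ |p.2.1 - q.2.1|) :
    dnJoin p q ≤ h := by
  have := le_upJoin_of_le_abs (p := swapPt p) (q := swapPt q) hy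
  simp only [upJoin_swapPt] at this
  linarith

theorem abs_ht_sub_le_rho (p q : ℝ × ℝ × ℝ) : |ht p - ht q| ≤ rho p q := by
  have h1 := ht_le_upJoin_left p q
  have h2 := ht_le_upJoin_right p q
  have h3 := dnJoin_le_ht_left p q
  have h4 := dnJoin_le_ht_right p q
  rw [rho]
  rcases abs_cases (ht p - ht q) with ⟨h, _⟩ | ⟨h, _⟩ <;> rw [h] <;> linarith

theorem rho_nonneg (p q : ℝ × ℝ × ℝ) : 0 ≤ rho p q :=
  (abs_nonneg _).trans (abs_ht_sub_le_rho p q)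

theorem two_upJoin_le (p q : ℝ × ℝ × ℝ) : 2 * upJoin p q ≤ rho p q + ht p + ht q := by
  have h3 := dnJoin_le_ht_left p q
  have h4 := dnJoin_le_ht_right p q
  rw [rho]
  rcases abs_cases (ht p - ht q) with ⟨h, _⟩ | ⟨h, _⟩ <;> rw [h] <;> linarith

theorem le_two_dnJoin (p q : ℝ × ℝ × ℝ) : ht p + ht q - rho p q ≤ 2 * dnJoin p q := by
  have h3 := ht_le_upJoin_left p q
  have h4 := ht_le_upJoin_right p q
  rw [rho]
  rcases abs_cases (ht p - ht q) with ⟨h, _⟩ | ⟨h, _⟩ <;> rw [h] <;> linarith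

theorem rho_triangle (p q r : ℝ × ℝ × ℝ) : rho p r ≤ rho p q + rho q r + 4 := by
  have a1 := two_upJoin_le p q
  have a2 := two_upJoin_le q r
  have b1 := le_two_dnJoin p q
  have b2 := le_two_dnJoin q r
  have c1 := abs_ht_sub_le_rho p q
  have c2 := abs_ht_sub_le_rho q r
  have d1 := abs_sub_le (ht p) (ht r) (ht q)
  have d2 := abs_sub_le (ht q) (ht p) (ht r)
  rw [abs_sub_comm (ht r)] at d1
  rw [abs_sub_comm (ht q) (ht p)] at d2
  have e1 := le_abs_self (ht p - ht r)
  have e2 := neg_le_abs (ht p - ht r)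
  have u := upJoin_le_max p q r
  have d := min_le_dnJoin p q r
  have r1 : rho p q = 2 * (upJoin p q - dnJoin p q) - |ht p - ht q| := rfl
  have r2 : rho q r = 2 * (upJoin q r - dnJoin q r) - |ht q - ht r| := rfl
  have r3 : rho p r = 2 * (upJoin p r - dnJoin p r) - |ht p - ht r| := rfl
  rcases max_cases (upJoin p q) (upJoin q r) with ⟨h1, _⟩ | ⟨h1, _⟩ <;>
  rcases min_cases (dnJoin p q) (dnJoin q r) with ⟨h2, _⟩ | ⟨h2, _⟩ <;>
  rw [h1] at u <;> rw [h2] at d <;> linarith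

theorem two_xJoin_sub_le (a : ℝ) (p q : ℝ × ℝ × ℝ) :
    |(2 * xJoin a p - ht p) - (2 * xJoin a q - ht q)| ≤ rho p q + 2 := by
  have key : ∀ p q, (2 * xJoin a p - ht p) - (2 * xJoin a q - ht q) ≤ rho p q + 2 := by
    intro p q
    have u := xJoin_le_max a p q
    have a1 := two_upJoin_le p q
    have a2 := ht_le_xJoin a q
    have a3 := abs_ht_sub_le_rho p q
    have a4 := neg_le_abs (ht p - ht q)
    rcases max_cases (upJoin p q) (xJoin a q) with ⟨h1, _⟩ | ⟨h1, _⟩ <;> rw [h1] at u <;> linarith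
  have k1 := key p q
  have k2 := key q p
  rw [rho_comm] at k2
  exact abs_le.2 ⟨by linarith, k1⟩

theorem two_yJoin_sub_le (b : ℝ) (p q : ℝ × ℝ × ℝ) :
    |(2 * yJoin b p - ht p) - (2 * yJoin b q - ht q)| ≤ rho p q + 2 := by
  have := two_xJoin_sub_le b (swapPt p) (swapPt q)
  simp only [xJoin_swapPt, ht_swapPt, rho_swapPt] at this
  rw [← abs_neg]
  convert this using 2
  ring

theorem abs_xJoin_sub_le_of_lt {a : ℝ} {p q : ℝ × ℝ × ℝ}
    (h : rho p q + 1 < xJoin a p - ht p) : |xJoin a p - xJoin a q| ≤ 1 := by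
  have u := xJoin_le_max a p q
  have v := xJoin_le_max a q p
  rw [upJoin_comm] at v
  have a1 := two_upJoin_le p q
  have a3 := abs_ht_sub_le_rho p q
  have a4 := neg_le_abs (ht p - ht q)
  rw [max_eq_right (by linarith)] at v
  rcases max_cases (upJoin p q) (xJoin a q) with ⟨h1, _⟩ | ⟨h1, _⟩ <;> rw [h1] at u
  · linarith
  · exact abs_le.2 ⟨by linarith, by linarith⟩

theorem abs_yJoin_sub_le_of_lt {b : ℝ} {p q : ℝ × ℝ × ℝ}
    (h : rho p q + 1 < ht p - yJoin b p) : |yJoin b p - yJoin b q| ≤ 1 := by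
  have := abs_xJoin_sub_le_of_lt (a := b) (p := swapPt p) (q := swapPt q)
    (by simp only [xJoin_swapPt, ht_swapPt, rho_swapPt]; linarith)
  simp only [xJoin_swapPt] at this
  rw [← abs_neg]
  convert this using 2
  ring

theorem rho_le_of_near {p q : ℝ × ℝ × ℝ} {h : ℝ} (hp : ht p = h) (hq : ht q = h)
    (hx : |p.1 - q.1| ≤ Real.exp h) (hy : |p.2.1 - q.2.1| ≤ Real.exp (-h)) : rho p q ≤ 8 := by
  have h1 := upJoin_le_of_abs_le hp.le hq.le hx
  have h2 := le_dnJoin_of_abs_le hp.ge hq.ge hy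
  have := abs_nonneg (ht p - ht q)
  rw [rho]
  linarith

theorem rho_vertical (x y s t : ℝ) : rho (vpt x y s) (vpt x y t) ≤ |s - t| + 8 := by
  have h1 := upJoin_le_of_abs_le (p := vpt x y s) (q := vpt x y t) (h := max s t) (by simp)
    (by simp) (by simpa using (Real.exp_pos _).le)
  have h2 := le_dnJoin_of_abs_le (p := vpt x y s) (q := vpt x y t) (h := min s t) (by simp)
    (by simp) (by simpa using (Real.exp_pos _).le)
  rw [rho, ht_vpt, ht_vpt]
  have := max_sub_min_eq_abs s t
  rw [abs_sub_comm t s] at this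
  linarith

/-- Quasi-isometric embeddings for the model distance. -/
def RhoQI (K C : ℝ) (φ : ℝ × ℝ × ℝ → ℝ × ℝ × ℝ) : Prop :=
  ∀ p q, rho (φ p) (φ q) ≤ K * rho p q + C ∧ rho p q ≤ K * rho (φ p) (φ q) + C

theorem RhoQI.swap_comp {K C : ℝ} {φ : ℝ × ℝ × ℝ → ℝ × ℝ × ℝ} (h : RhoQI K C φ) :
    RhoQI K C (swapPt ∘ φ) := fun p q => by simpa using h p q

theorem RhoQI.comp_swap {K C : ℝ} {φ : ℝ × ℝ × ℝ → ℝ × ℝ × ℝ} (h : RhoQI K C φ) :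
    RhoQI K C (φ ∘ swapPt) := fun p q => by simpa using h (swapPt p) (swapPt q)

theorem approxProfile_of_scaled {c ε N E B : ℝ} {H J j : ℝ → ℝ} (hN : 0 < N) (hE : E ≤ N * ε)
    (hju : ∀ t ∈ Icc (0:ℝ) 3, j t ≤ H t) (huJ : ∀ t ∈ Icc (0:ℝ) 3, H t ≤ J t)
    (hu : ∀ s ∈ Icc (0:ℝ) 3, ∀ t ∈ Icc (0:ℝ) 3, |H s - H t| ≤ N * |s - t| + E)
    (hJu : ∀ s ∈ Icc (0:ℝ) 3, ∀ t ∈ Icc (0:ℝ) 3,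
      |(2 * J s - H s) - (2 * J t - H t)| ≤ N * |s - t| + E)
    (hjl : ∀ s ∈ Icc (0:ℝ) 3, ∀ t ∈ Icc (0:ℝ) 3,
      |(2 * j s - H s) - (2 * j t - H t)| ≤ N * |s - t| + E)
    (hJc : ∀ s ∈ Icc (0:ℝ) 3, ∀ t ∈ Icc (0:ℝ) 3, N * |s - t| + E < J s - H s → |J s - J t| ≤ E)
    (hjc : ∀ s ∈ Icc (0:ℝ) 3, ∀ t ∈ Icc (0:ℝ) 3, N * |s - t| + E < H s - j s → |j s - j t| ≤ E)
    (hfar : ∀ t ∈ Icc (0:ℝ) 3, N * (c * min t (3 - t)) ≤ J t - j t + E)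
    (h0 : |J 0 - B - N| ≤ E ∧ |H 0 - B - N| ≤ E ∧ |j 0 - B - N| ≤ E)
    (h3 : |J 3 - B| ≤ E ∧ |H 3 - B| ≤ E ∧ |j 3 - B| ≤ E) :
    ApproxProfile c ε (fun t => (H t - B) / N) (fun t => (J t - B) / N)
      (fun t => (j t - B) / N) := by
  have hE0 : 0 ≤ E := (abs_nonneg _).trans h3.1
  have hε : 0 ≤ ε := by
    by_contra h
    have := mul_neg_of_pos_of_neg hN (not_le.1 h)
    linarith
  have abs1 : ∀ {a b r : ℝ}, N * a = b → |b| ≤ N * r + E → |a| ≤ r + ε := by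
    intro a b r h hb
    rw [← h, abs_mul, abs_of_pos hN] at hb
    refine le_of_mul_le_mul_left ?_ hN
    linarith
  have abs0 : ∀ {a b : ℝ}, N * a = b → |b| ≤ E → |a| ≤ ε := by
    intro a b h hb
    have := abs1 (r := 0) h (by linarith)
    linarith
  have le1 : ∀ {a b : ℝ}, a ≤ b → a / N ≤ b / N + ε := by
    intro a b h
    have := div_le_div_of_nonneg_right h hN.le
    linarith
  refine ⟨fun t ht => le1 (by linarith [hju t ht]), fun t ht => le1 (by linarith [huJ t ht]),
    fun s hs t ht => abs1 ?_ (hu s hs t ht), fun s hs t ht => abs1 ?_ (hJu s hs t ht),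
    fun s hs t ht => abs1 ?_ (hjl s hs t ht), fun s hs t ht h => abs0 ?_ (hJc s hs t ht ?_),
    fun s hs t ht h => abs0 ?_ (hjc s hs t ht ?_), fun t ht => ?_,
    ⟨abs0 ?_ h0.1, abs0 ?_ h0.2.1, abs0 ?_ h0.2.2⟩, ⟨abs0 ?_ h3.1, abs0 ?_ h3.2.1, abs0 ?_ h3.2.2⟩⟩
  all_goals try (field_simp <;> ring1)
  · have h' := mul_lt_mul_of_pos_left h hN
    have e : N * ((J s - B) / N - (H s - B) / N) = J s - H s := by field_simp; ring
    rw [e] at h'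
    have := mul_nonneg hN.le (abs_nonneg (s - t))
    linarith
  · have h' := mul_lt_mul_of_pos_left h hN
    have e : N * ((H s - B) / N - (j s - B) / N) = H s - j s := by field_simp; ring
    rw [e] at h'
    have := mul_nonneg hN.le (abs_nonneg (s - t))
    linarith
  · refine le_of_mul_le_mul_left ?_ hN
    have e : N * ((J t - B) / N - (j t - B) / N + ε) = J t - j t + N * ε := by field_simp; ring
    rw [e]
    linarith [hfar t ht]

theorem xJoin_le_upJoin (p q : ℝ × ℝ × ℝ) : xJoin q.1 p ≤ upJoin p q := by
  rw [← Real.exp_le_exp, exp_upJoin, exp_xJoin]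
  linarith [Real.exp_pos (ht q)]

theorem dnJoin_le_yJoin (p q : ℝ × ℝ × ℝ) : dnJoin p q ≤ yJoin q.2.1 p := by
  rw [← neg_le_neg_iff, ← Real.exp_le_exp, exp_neg_dnJoin, exp_neg_yJoin]
  linarith [Real.exp_pos (-ht q)]

theorem upJoin_sub_ht_le_rho (p q : ℝ × ℝ × ℝ) : upJoin p q - ht p ≤ rho p q := by
  have h1 := two_upJoin_le p q
  have h2 := abs_ht_sub_le_rho p q
  have h3 := neg_le_abs (ht p - ht q)
  linarith

theorem ht_sub_dnJoin_le_rho (p q : ℝ × ℝ × ℝ) : ht p - dnJoin p q ≤ rho p q := by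
  have h1 := le_two_dnJoin p q
  have h2 := abs_ht_sub_le_rho p q
  have h3 := le_abs_self (ht p - ht q)
  linarith

theorem upJoin_sub_dnJoin_le_rho (p q : ℝ × ℝ × ℝ) : upJoin p q - dnJoin p q ≤ rho p q := by
  have h2 := abs_ht_sub_le_rho p q
  rw [rho] at *
  linarith

/-- Three sides of a quadrilateral whose fourth side is the vertical segment over `(x, y)` between
the heights `z` and `z + σ`. -/
def boxPath (x y z σ τ : ℝ) : ℝ × ℝ × ℝ :=
  if τ ≤ 1 then vpt (x + Real.exp (z + σ)) y (z + σ * (1 - τ))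
  else if τ < 2 then vpt (x + Real.exp (z + σ)) (y + Real.exp (-z)) (z + σ * (τ - 1))
  else vpt x (y + Real.exp (-z)) (z + σ * (3 - τ))

theorem boxPath_far {x y z σ τ : ℝ} (hσ : 0 < σ) (hτ : τ ∈ Icc (0:ℝ) 3) (t : ℝ) :
    2 / 3 * σ * min τ (3 - τ) ≤ rho (boxPath x y z σ τ) (vpt x y t) := by
  have m1 := min_le_left τ (3 - τ)
  have m2 := min_le_right τ (3 - τ)
  have m3 : 0 ≤ min τ (3 - τ) := le_min hτ.1 (by linarith [hτ.2])
  have m4 : 0 ≤ σ * min τ (3 - τ) := mul_nonneg hσ.le m3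
  have m5 : σ * min τ (3 - τ) ≤ σ * τ := mul_le_mul_of_nonneg_left m1 hσ.le
  have m6 : σ * min τ (3 - τ) ≤ σ * (3 - τ) := mul_le_mul_of_nonneg_left m2 hσ.le
  unfold boxPath
  split_ifs with h1 h2
  · have := upJoin_sub_ht_le_rho (vpt (x + Real.exp (z + σ)) y (z + σ * (1 - τ))) (vpt x y t)
    have h : z + σ ≤ upJoin (vpt (x + Real.exp (z + σ)) y (z + σ * (1 - τ))) (vpt x y t) :=
      le_upJoin_of_le_abs (by simp)
    rw [ht_vpt] at this
    linarith
  · have := upJoin_sub_dnJoin_le_rho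
      (vpt (x + Real.exp (z + σ)) (y + Real.exp (-z)) (z + σ * (τ - 1))) (vpt x y t)
    have h : z + σ ≤ upJoin (vpt (x + Real.exp (z + σ)) (y + Real.exp (-z)) (z + σ * (τ - 1)))
        (vpt x y t) := le_upJoin_of_le_abs (by simp)
    have h' : dnJoin (vpt (x + Real.exp (z + σ)) (y + Real.exp (-z)) (z + σ * (τ - 1)))
        (vpt x y t) ≤ z := dnJoin_le_of_le_abs (by simp)
    linarith
  · have := ht_sub_dnJoin_le_rho (vpt x (y + Real.exp (-z)) (z + σ * (3 - τ))) (vpt x y t)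
    have h : dnJoin (vpt x (y + Real.exp (-z)) (z + σ * (3 - τ))) (vpt x y t) ≤ z :=
      dnJoin_le_of_le_abs (by simp)
    rw [ht_vpt] at this
    linarith

theorem boxPath_lipschitz {φ : ℝ × ℝ × ℝ → ℝ × ℝ × ℝ} {K C L e x y z σ : ℝ}
    (hφ : RhoQI K C φ) (hK : 1 ≤ K) (hC : C ≤ e) (he : 100 * K ≤ e) (hσ : 0 < σ)
    (hvert : ∀ x y s t : ℝ, |s - t| ≤ 16 * σ →
      rho (φ (vpt x y s)) (φ (vpt x y t)) ≤ L * |s - t| + e)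
    {τ τ' : ℝ} (hτ : τ ∈ Icc (0:ℝ) 3) (hτ' : τ' ∈ Icc (0:ℝ) 3) :
    rho (φ (boxPath x y z σ τ)) (φ (boxPath x y z σ τ')) ≤ L * σ * |τ - τ'| + 8 * e := by
  have hor : ∀ p q, rho p q ≤ 8 → rho (φ p) (φ q) ≤ 2 * e := by
    intro p q hpq
    have := (hφ p q).1
    nlinarith
  set x1 := x + Real.exp (z + σ) with hx1
  set y1 := y + Real.exp (-z) with hy1
  have cor1 : rho (φ (vpt x1 y z)) (φ (vpt x1 y1 z)) ≤ 2 * e := by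
    refine hor _ _ (rho_le_of_near (h := z) (by simp) (by simp) ?_ ?_)
    · simpa using (Real.exp_pos _).le
    · simp [hy1]
  have cor2 : rho (φ (vpt x1 y1 (z + σ))) (φ (vpt x y1 (z + σ))) ≤ 2 * e := by
    refine hor _ _ (rho_le_of_near (h := z + σ) (by simp) (by simp) ?_ ?_)
    · simp [hx1]
    · simpa using (Real.exp_pos _).le
  have leg : ∀ x y a b : ℝ, 0 ≤ a → a ≤ b → b ≤ 1 →
      rho (φ (vpt x y (z + σ * a))) (φ (vpt x y (z + σ * b))) ≤ L * σ * (b - a) + e := by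
    intro x y a b ha hab hb
    have e1 : |z + σ * a - (z + σ * b)| = σ * (b - a) := by
      rw [abs_sub_comm, abs_of_nonneg] <;> nlinarith
    have := hvert x y (z + σ * a) (z + σ * b) (by rw [e1]; nlinarith)
    rw [e1] at this
    linarith
  have leg' : ∀ x y a b : ℝ, 0 ≤ a → a ≤ b → b ≤ 1 →
      rho (φ (vpt x y (z + σ * b))) (φ (vpt x y (z + σ * a))) ≤ L * σ * (b - a) + e :=
    fun x y a b ha hab hb => by rw [rho_comm]; exact leg x y a b ha hab hb
  have key : ∀ τ τ' : ℝ, 0 ≤ τ → τ ≤ τ' → τ' ≤ 3 →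
      rho (φ (boxPath x y z σ τ)) (φ (boxPath x y z σ τ')) ≤ L * σ * (τ' - τ) + 8 * e := by
    intro τ τ' h0 h h3
    rcases le_or_gt τ 1 with a1 | a1
    · have b1 : boxPath x y z σ τ = vpt x1 y (z + σ * (1 - τ)) := by simp [boxPath, a1, hx1]
      rcases le_or_gt τ' 1 with a2 | a2
      · have b2 : boxPath x y z σ τ' = vpt x1 y (z + σ * (1 - τ')) := by simp [boxPath, a2, hx1]
        rw [b1, b2]
        have := leg' x1 y (1 - τ') (1 - τ) (by linarith) (by linarith) (by linarith)
        linarith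
      rcases lt_or_ge τ' 2 with a3 | a3
      · have b2 : boxPath x y z σ τ' = vpt x1 y1 (z + σ * (τ' - 1)) := by
          simp [boxPath, a2.not_ge, a3, hx1, hy1]
        rw [b1, b2]
        have l1 := leg' x1 y 0 (1 - τ) le_rfl (by linarith) (by linarith)
        have l2 := leg x1 y1 0 (τ' - 1) le_rfl (by linarith) (by linarith)
        rw [mul_zero, add_zero] at l1 l2
        have t1 := rho_triangle (φ (vpt x1 y (z + σ * (1 - τ)))) (φ (vpt x1 y z))
          (φ (vpt x1 y1 (z + σ * (τ' - 1))))
        have t2 := rho_triangle (φ (vpt x1 y z)) (φ (vpt x1 y1 z))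
          (φ (vpt x1 y1 (z + σ * (τ' - 1))))
        linarith
      · have b2 : boxPath x y z σ τ' = vpt x y1 (z + σ * (3 - τ')) := by
          simp [boxPath, a2.not_ge, a3.not_gt, hy1]
        rw [b1, b2]
        have l1 := leg' x1 y 0 (1 - τ) le_rfl (by linarith) (by linarith)
        have l2 := leg x1 y1 0 1 le_rfl (by linarith) (by linarith)
        have l3 := leg' x y1 (3 - τ') 1 (by linarith) (by linarith) (by linarith)
        rw [mul_zero, add_zero] at l1 l2
        rw [mul_one] at l2 l3
        have t1 := rho_triangle (φ (vpt x1 y (z + σ * (1 - τ)))) (φ (vpt x1 y z))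
          (φ (vpt x y1 (z + σ * (3 - τ'))))
        have t2 := rho_triangle (φ (vpt x1 y z)) (φ (vpt x1 y1 z))
          (φ (vpt x y1 (z + σ * (3 - τ'))))
        have t3 := rho_triangle (φ (vpt x1 y1 z)) (φ (vpt x1 y1 (z + σ)))
          (φ (vpt x y1 (z + σ * (3 - τ'))))
        have t4 := rho_triangle (φ (vpt x1 y1 (z + σ))) (φ (vpt x y1 (z + σ)))
          (φ (vpt x y1 (z + σ * (3 - τ'))))
        linarith
    have a2 : 1 < τ' := a1.trans_le h
    rcases lt_or_ge τ 2 with a3 | a3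
    · have b1 : boxPath x y z σ τ = vpt x1 y1 (z + σ * (τ - 1)) := by
        simp [boxPath, a1.not_ge, a3, hx1, hy1]
      rcases lt_or_ge τ' 2 with a4 | a4
      · have b2 : boxPath x y z σ τ' = vpt x1 y1 (z + σ * (τ' - 1)) := by
          simp [boxPath, a2.not_ge, a4, hx1, hy1]
        rw [b1, b2]
        have := leg x1 y1 (τ - 1) (τ' - 1) (by linarith) (by linarith) (by linarith)
        linarith
      · have b2 : boxPath x y z σ τ' = vpt x y1 (z + σ * (3 - τ')) := by
          simp [boxPath, a2.not_ge, a4.not_gt, hy1]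
        rw [b1, b2]
        have l2 := leg x1 y1 (τ - 1) 1 (by linarith) (by linarith) (by linarith)
        have l3 := leg' x y1 (3 - τ') 1 (by linarith) (by linarith) (by linarith)
        rw [mul_one] at l2 l3
        have t3 := rho_triangle (φ (vpt x1 y1 (z + σ * (τ - 1)))) (φ (vpt x1 y1 (z + σ)))
          (φ (vpt x y1 (z + σ * (3 - τ'))))
        have t4 := rho_triangle (φ (vpt x1 y1 (z + σ))) (φ (vpt x y1 (z + σ)))
          (φ (vpt x y1 (z + σ * (3 - τ'))))
        linarith
    · have b1 : boxPath x y z σ τ = vpt x y1 (z + σ * (3 - τ)) := by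
        simp [boxPath, a1.not_ge, a3.not_gt, hy1]
      have b2 : boxPath x y z σ τ' = vpt x y1 (z + σ * (3 - τ')) := by
        simp [boxPath, a2.not_ge, (a3.trans h).not_gt, hy1]
      rw [b1, b2]
      have := leg' x y1 (3 - τ') (3 - τ) (by linarith) (by linarith) (by linarith)
      linarith
  rcases le_total τ τ' with h | h
  · rw [abs_sub_comm, abs_of_nonneg (sub_nonneg.2 h)]
    exact key τ τ' hτ.1 h hτ'.2
  · rw [rho_comm, abs_of_nonneg (sub_nonneg.2 h)]
    exact key τ' τ hτ'.1 h hτ.2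

set_option maxHeartbeats 1600000 in
/-- If a quasi-isometry stretches a long vertical segment by almost the maximal factor `L`, then it
maps the corners of the quadrilateral over the middle of the segment to roughly the corners of a
quadrilateral of the same shape. -/
theorem quadrilateral_image {K δ : ℝ} (hK : 1 ≤ K) (hδ : 0 < δ) :
    ∃ ε > 0, ∀ (φ : ℝ × ℝ × ℝ → ℝ × ℝ × ℝ) (C L e σ x y z : ℝ), RhoQI K C φ → 0 ≤ C → C ≤ e →
      100 * K ≤ e → 1 ≤ L → L ≤ K → 0 < σ → e ≤ ε * σ →
      (∀ x y s t : ℝ, |s - t| ≤ 16 * σ →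
        rho (φ (vpt x y s)) (φ (vpt x y t)) ≤ L * |s - t| + e) →
      16 * (L * σ) - e ≤ ht (φ (vpt x y (z + 8 * σ))) - ht (φ (vpt x y (z - 8 * σ))) →
      |ht (φ (vpt (x + Real.exp (z + σ)) y z)) - ht (φ (vpt x y z))| ≤ δ * σ ∧
      |xJoin (φ (vpt x y (z - 8 * σ))).1 (φ (vpt (x + Real.exp (z + σ)) y z))
        - (ht (φ (vpt x y z)) + L * σ)| ≤ δ * σ ∧
      |ht (φ (vpt x (y + Real.exp (-z)) (z + σ))) - (ht (φ (vpt x y z)) + L * σ)| ≤ δ * σ ∧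
      |yJoin (φ (vpt x y (z + 8 * σ))).2.1 (φ (vpt x (y + Real.exp (-z)) (z + σ)))
        - ht (φ (vpt x y z))| ≤ δ * σ := by
  have hK0 : 0 < K := by linarith
  obtain ⟨ε, hε, hprof⟩ := approx_quadrilateral_profile (c := 1 / (3 * K ^ 2)) (δ := δ / K)
    (by positivity) (by positivity)
  refine ⟨min (ε / 30) (1 / 10), by positivity, ?_⟩
  intro φ C L e σ x y z hφ hC0 hC he hL hLK hσ heσ hvert hlong
  have heσ1 : 30 * e ≤ ε * σ := by
    have := heσ.trans (mul_le_mul_of_nonneg_right (min_le_left _ _) hσ.le)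
    linarith
  have heσ2 : 10 * e ≤ σ := by
    have := heσ.trans (mul_le_mul_of_nonneg_right (min_le_right _ _) hσ.le)
    linarith
  set U : ℝ → ℝ := fun t => ht (φ (vpt x y t)) with hU
  set B := ht (φ (vpt x y z)) with hB
  set X := (φ (vpt x y (z - 8 * σ))).1 with hX
  set Y := (φ (vpt x y (z + 8 * σ))).2.1 with hY
  set N := L * σ with hN
  have hN0 : 0 < N := by positivity
  have hNσ : σ ≤ N := by nlinarith
  have vU : ∀ s t, |s - t| ≤ 16 * σ → |U s - U t| ≤ L * |s - t| + e := fun s t h =>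
    (abs_ht_sub_le_rho _ _).trans (hvert x y s t h)
  have hUt : ∀ t, |t - z| ≤ 8 * σ → |U t - B - L * (t - z)| ≤ 3 * e ∧
      xJoin X (φ (vpt x y t)) ≤ U t + 2 * e ∧ U t - 2 * e ≤ yJoin Y (φ (vpt x y t)) := by
    intro t ht1
    have ht2 := abs_le.1 ht1
    have a1 : |t - (z - 8 * σ)| = t - z + 8 * σ := by rw [abs_of_nonneg] <;> linarith
    have a2 : |z + 8 * σ - t| = 8 * σ - (t - z) := by rw [abs_of_nonneg] <;> linarith
    have a3 : |z - (z - 8 * σ)| = 8 * σ := by rw [abs_of_nonneg] <;> linarith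
    have a4 : |z + 8 * σ - z| = 8 * σ := by rw [abs_of_nonneg] <;> linarith
    have r1 := hvert x y t (z - 8 * σ) (by rw [a1]; linarith)
    have r2 := hvert x y t (z + 8 * σ) (by rw [abs_sub_comm, a2]; linarith)
    rw [abs_sub_comm t] at r2
    have b1 := abs_le.1 (vU t (z - 8 * σ) (by rw [a1]; linarith))
    have b2 := abs_le.1 (vU (z + 8 * σ) t (by rw [a2]; linarith))
    have b3 := abs_le.1 (vU z (z - 8 * σ) (by rw [a3]; linarith))
    have b4 := abs_le.1 (vU (z + 8 * σ) z (by rw [a4]; linarith))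
    rw [a1] at b1 r1
    rw [a2] at b2 r2
    rw [a3] at b3
    rw [a4] at b4
    have hl : 16 * N - e ≤ U (z + 8 * σ) - U (z - 8 * σ) := hlong
    have hUz : U z = B := rfl
    have c1 : L * (t - z + 8 * σ) = L * (t - z) + 8 * N := by rw [hN]; ring
    have c2 : L * (8 * σ - (t - z)) = 8 * N - L * (t - z) := by rw [hN]; ring
    have c3 : L * (8 * σ) = 8 * N := by rw [hN]; ring
    rw [c1] at b1 r1
    rw [c2] at b2 r2
    rw [c3] at b3 b4
    refine ⟨abs_le.2 ⟨by linarith, by linarith⟩, ?_, ?_⟩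
    · have d1 := xJoin_le_upJoin (φ (vpt x y t)) (φ (vpt x y (z - 8 * σ)))
      have d2 := two_upJoin_le (φ (vpt x y t)) (φ (vpt x y (z - 8 * σ)))
      change _ ≤ _ + U t + U (z - 8 * σ) at d2
      linarith
    · have d1 := dnJoin_le_yJoin (φ (vpt x y t)) (φ (vpt x y (z + 8 * σ)))
      have d2 := le_two_dnJoin (φ (vpt x y t)) (φ (vpt x y (z + 8 * σ)))
      change U t + U (z + 8 * σ) - _ ≤ _ at d2
      linarith
  have lip := fun {τ τ' : ℝ} (h : τ ∈ Icc (0:ℝ) 3) (h' : τ' ∈ Icc (0:ℝ) 3) =>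
    boxPath_lipschitz (x := x) (y := y) (z := z) hφ hK hC he hσ hvert h h'
  have hor : ∀ p q, rho p q ≤ 8 → rho (φ p) (φ q) ≤ 2 * e := by
    intro p q hpq
    have := (hφ p q).1
    nlinarith
  -- closeness of the ends of the path to the segment
  have near : ∀ P t, |t - z| ≤ σ → rho (φ P) (φ (vpt x y t)) ≤ 2 * e →
      |ht (φ P) - B - L * (t - z)| ≤ 5 * e ∧ |xJoin X (φ P) - B - L * (t - z)| ≤ 10 * e ∧
      |yJoin Y (φ P) - B - L * (t - z)| ≤ 10 * e := by
    intro P t ht1 hr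
    obtain ⟨k1, k2, k3⟩ := hUt t (by linarith)
    have k4 := ht_le_xJoin X (φ (vpt x y t))
    have k5 := yJoin_le_ht Y (φ (vpt x y t))
    have l1 := abs_le.1 ((abs_ht_sub_le_rho _ _).trans hr)
    have l2 := abs_le.1 ((two_xJoin_sub_le X (φ P) (φ (vpt x y t))).trans (add_le_add_left hr 2))
    have l3 := abs_le.1 ((two_yJoin_sub_le Y (φ P) (φ (vpt x y t))).trans (add_le_add_left hr 2))
    have k1 := abs_le.1 k1
    change U t ≤ _ at k4
    change _ ≤ U t at k5
    change -_ ≤ _ - U t ∧ _ - U t ≤ _ at l1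
    change -_ ≤ _ - (_ - U t) ∧ _ - (_ - U t) ≤ _ at l2
    change -_ ≤ _ - (_ - U t) ∧ _ - (_ - U t) ≤ _ at l3
    refine ⟨abs_le.2 ⟨?_, ?_⟩, abs_le.2 ⟨?_, ?_⟩, abs_le.2 ⟨?_, ?_⟩⟩ <;> linarith
  have n0 := near (boxPath x y z σ 0) (z + σ) (by simp [abs_of_pos hσ]) (by
    refine hor _ _ (rho_le_of_near (h := z + σ) ?_ ?_ ?_ ?_) <;> simp [boxPath]
    exact (Real.exp_pos _).le)
  have n3 := near (boxPath x y z σ 3) z (by simp [hσ.le]) (by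
    refine hor _ _ (rho_le_of_near (h := z) ?_ ?_ ?_ ?_) <;>
      simp [boxPath, show ¬ (3:ℝ) ≤ 1 by norm_num, show ¬ (3:ℝ) < 2 by norm_num]
    exact (Real.exp_pos _).le)
  have e1 : L * (z + σ - z) = N := by rw [hN]; ring
  rw [e1] at n0
  rw [sub_self, mul_zero] at n3
  simp only [sub_zero] at n3
  have z0 : (0:ℝ) ∈ Icc (0:ℝ) 3 := ⟨le_rfl, by norm_num⟩
  have hfar : ∀ τ ∈ Icc (0:ℝ) 3, N * (1 / (3 * K ^ 2) * min τ (3 - τ)) ≤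
      xJoin X (φ (boxPath x y z σ τ)) - yJoin Y (φ (boxPath x y z σ τ)) + 30 * e := by
    intro τ hτ
    set P := φ (boxPath x y z σ τ) with hP
    set t := z + (ht P - B) / L with ht'
    have htz : L * (t - z) = ht P - B := by rw [ht']; field_simp; ring
    have l1 := abs_le.1 ((abs_ht_sub_le_rho _ _).trans (lip hτ z0))
    rw [sub_zero, abs_of_nonneg hτ.1, ← hN] at l1
    have l2 : N * τ ≤ N * 3 := mul_le_mul_of_nonneg_left hτ.2 hN0.le
    have l3 := abs_le.1 n0.1
    have htz' : |t - z| ≤ 8 * σ := by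
      refine le_of_mul_le_mul_left ?_ (by linarith : 0 < L)
      rw [← abs_of_pos (by linarith : 0 < L), ← abs_mul, abs_of_pos (by linarith : 0 < L), htz]
      have : L * (8 * σ) = 8 * N := by rw [hN]; ring
      rw [this]
      exact abs_le.2 ⟨by linarith, by linarith⟩
    obtain ⟨k1, k2, k3⟩ := hUt t htz'
    rw [htz] at k1
    have k1 := abs_le.1 k1
    have k4 := ht_le_xJoin X P
    have k5 := yJoin_le_ht Y P
    have u1 : upJoin P (φ (vpt x y t)) ≤ xJoin X P + 5 * e + 1 := by
      refine (upJoin_le_max_xJoin X _ _).trans ?_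
      have : max (xJoin X P) (xJoin X (φ (vpt x y t))) ≤ xJoin X P + 5 * e :=
        max_le (by linarith) (by linarith)
      linarith
    have u2 : yJoin Y P - 5 * e - 1 ≤ dnJoin P (φ (vpt x y t)) := by
      refine le_trans ?_ (min_le_dnJoin_yJoin Y _ _)
      have : yJoin Y P - 5 * e ≤ min (yJoin Y P) (yJoin Y (φ (vpt x y t))) :=
        le_min (by linarith) (by linarith)
      linarith
    have r : rho P (φ (vpt x y t)) ≤ 2 * (xJoin X P - yJoin Y P) + 20 * e + 4 := by
      have := abs_nonneg (ht P - ht (φ (vpt x y t)))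
      rw [rho]
      linarith
    have s1 := boxPath_far (x := x) (y := y) (z := z) hσ hτ t
    have s2 := (hφ (boxPath x y z σ τ) (vpt x y t)).2
    have s3 := mul_le_mul_of_nonneg_left r hK0.le
    have m0 : 0 ≤ min τ (3 - τ) := le_min hτ.1 (by linarith [hτ.2])
    refine le_of_mul_le_mul_left ?_ (by linarith : 0 < 2 * K)
    have s4 : 2 * K * (N * (1 / (3 * K ^ 2) * min τ (3 - τ))) =
        L / K * (2 / 3 * σ * min τ (3 - τ)) := by
      rw [hN]; field_simp
    have s5 : L / K ≤ 1 := by rw [div_le_one hK0]; exact hLK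
    have s6 : 0 ≤ 2 / 3 * σ * min τ (3 - τ) := by positivity
    rw [s4]
    nlinarith
  have prof := approxProfile_of_scaled (c := 1 / (3 * K ^ 2)) (ε := ε) (N := N) (E := 30 * e)
    (B := B) (H := fun τ => ht (φ (boxPath x y z σ τ)))
    (J := fun τ => xJoin X (φ (boxPath x y z σ τ)))
    (j := fun τ => yJoin Y (φ (boxPath x y z σ τ))) hN0 (by nlinarith)
    (fun t _ => yJoin_le_ht _ _) (fun t _ => ht_le_xJoin _ _)
    (fun s hs t ht => by
      have := (abs_ht_sub_le_rho _ _).trans (lip hs ht)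
      linarith)
    (fun s hs t ht => by
      have := (two_xJoin_sub_le X _ _).trans (add_le_add_left (lip hs ht) 2)
      linarith)
    (fun s hs t ht => by
      have := (two_yJoin_sub_le Y _ _).trans (add_le_add_left (lip hs ht) 2)
      linarith)
    (fun s hs t ht h => by
      have := abs_xJoin_sub_le_of_lt (a := X) (p := φ (boxPath x y z σ s))
        (q := φ (boxPath x y z σ t)) (by have := lip hs ht; linarith)
      linarith)
    (fun s hs t ht h => by
      have := abs_yJoin_sub_le_of_lt (b := Y) (p := φ (boxPath x y z σ s))
        (q := φ (boxPath x y z σ t)) (by have := lip hs ht; linarith)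
      linarith)
    hfar ⟨by linarith [n0.2.1], by linarith [n0.1], by linarith [n0.2.2]⟩
    ⟨by linarith [n3.2.1], by linarith [n3.1], by linarith [n3.2.2]⟩
  obtain ⟨q1, q2, q3, q4⟩ := hprof _ _ _ prof
  have p1 : boxPath x y z σ 1 = vpt (x + Real.exp (z + σ)) y z := by simp [boxPath]
  have p2 : boxPath x y z σ 2 = vpt x (y + Real.exp (-z)) (z + σ) := by
    simp [boxPath]
    norm_num
  rw [p1] at q1 q2
  rw [p2] at q3 q4
  have unsc : ∀ {a b : ℝ}, N * a = b → |a| ≤ δ / K → |b| ≤ δ * σ := by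
    intro a b h ha
    rw [← h, abs_mul, abs_of_pos hN0]
    refine (mul_le_mul_of_nonneg_left ha hN0.le).trans ?_
    rw [hN, mul_div_assoc', div_le_iff₀ hK0]
    nlinarith [mul_pos hσ hδ]
  refine ⟨unsc ?_ q1, unsc ?_ q2, unsc ?_ q3, unsc ?_ q4⟩ <;> field_simp <;> ring

theorem upJoin_chain {P : ℕ → ℝ × ℝ × ℝ} {H : ℝ} (n : ℕ)
    (h1 : ∀ i < n, upJoin (P i) (P (i + 1)) ≤ H) (h2 : ∀ i ≤ n, ht (P i) ≤ H) :
    upJoin (P 0) (P n) ≤ H + Real.log (n + 2) := by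
  have h3 : ∀ m ≤ n, |(P 0).1 - (P m).1| ≤ m * Real.exp H := by
    intro m
    induction m with
    | zero => simp
    | succ k ih =>
      intro hk
      have i1 := ih (by omega)
      have i2 := Real.exp_le_exp.2 (h1 k (by omega))
      rw [exp_upJoin] at i2
      have i3 := abs_sub_le (P 0).1 (P k).1 (P (k + 1)).1
      have := Real.exp_pos (ht (P k))
      have := Real.exp_pos (ht (P (k + 1)))
      push_cast
      linarith
  rw [← Real.exp_le_exp, exp_upJoin, Real.exp_add, Real.exp_log (by positivity)]
  have i1 := h3 n le_rfl
  have i2 := Real.exp_le_exp.2 (h2 0 (by omega))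
  have i3 := Real.exp_le_exp.2 (h2 n le_rfl)
  linarith

theorem exists_upJoin_chain_le {P : ℕ → ℝ × ℝ × ℝ} {R : ℝ} (n : ℕ) (hR : 0 ≤ R)
    (h : ∀ i < n, rho (P i) (P (i + 1)) ≤ R) :
    ∃ i ≤ n, upJoin (P 0) (P n) ≤ ht (P i) + R + Real.log (n + 2) := by
  obtain ⟨i, hi, hmax⟩ := Finset.exists_max_image (Finset.range (n + 1)) (fun i => ht (P i))
    ⟨0, by simp⟩
  have hmax' : ∀ k ≤ n, ht (P k) ≤ ht (P i) := fun k hk =>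
    hmax k (Finset.mem_range.2 (by omega))
  refine ⟨i, by have := Finset.mem_range.1 hi; omega, upJoin_chain n ?_ ?_⟩
  · intro k hk
    have := upJoin_sub_ht_le_rho (P k) (P (k + 1))
    linarith [h k hk, hmax' k hk.le]
  · intro k hk
    linarith [hmax' k hk]

theorem exists_log_le {η : ℝ} (hη : 0 < η) : ∃ M, 0 ≤ M ∧ ∀ x : ℝ, 0 ≤ x →
    Real.log (x + 4) ≤ η * x + M := by
  refine ⟨|4 * η - 1 - Real.log η|, abs_nonneg _, fun x hx => ?_⟩
  have h1 := Real.log_le_sub_one_of_pos (by positivity : 0 < η * (x + 4))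
  rw [Real.log_mul hη.ne' (by positivity)] at h1
  have := le_abs_self (4 * η - 1 - Real.log η)
  linarith

/-- Coarsely Lipschitz along vertical lines. -/
def VertLip (a b : ℝ) (φ : ℝ × ℝ × ℝ → ℝ × ℝ × ℝ) : Prop :=
  ∀ x y s t, rho (φ (vpt x y s)) (φ (vpt x y t)) ≤ a * |s - t| + b

theorem RhoQI.vertLip {K C : ℝ} {φ : ℝ × ℝ × ℝ → ℝ × ℝ × ℝ} (h : RhoQI K C φ) (hK : 1 ≤ K) :
    VertLip K (8 * K + C) φ := fun x y s t => by
  have h1 := (h (vpt x y s) (vpt x y t)).1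
  have h2 := rho_vertical x y s t
  nlinarith

theorem VertLip.swap_comp {a b : ℝ} {φ : ℝ × ℝ × ℝ → ℝ × ℝ × ℝ} (h : VertLip a b φ) :
    VertLip a b (swapPt ∘ φ) := fun x y s t => by simpa using h x y s t

theorem exists_upJoin_le {K C : ℝ} {φ : ℝ × ℝ × ℝ → ℝ × ℝ × ℝ} (hK : 0 ≤ K) (hC : 0 ≤ C)
    (h : VertLip K C φ) (x y : ℝ) {s t : ℝ} (hst : s ≤ t) :
    ∃ w ∈ Icc s t, upJoin (φ (vpt x y s)) (φ (vpt x y t)) ≤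
      ht (φ (vpt x y w)) + (K + C) + Real.log (t - s + 4) := by
  set n := ⌈t - s⌉₊ with hn
  have hn1 : t - s ≤ n := Nat.le_ceil _
  have hn2 : (n : ℝ) < t - s + 1 := Nat.ceil_lt_add_one (by linarith)
  obtain ⟨i, hi, hle⟩ := exists_upJoin_chain_le (P := fun i : ℕ => φ (vpt x y (min (s + i) t)))
    (R := K + C) n (by linarith) (fun i _ => by
      refine (h x y _ _).trans ?_
      have := abs_min_sub_min_le_max (s + i) t (s + (i + 1 : ℕ)) t
      have e : |s + (i:ℝ) - (s + (i + 1 : ℕ))| = 1 := by push_cast; ring_nf; norm_num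
      rw [e, sub_self, abs_zero, max_eq_left zero_le_one] at this
      nlinarith)
  simp only [Nat.cast_zero, add_zero, min_eq_left hst] at hle
  rw [min_eq_right (by linarith : t ≤ s + n)] at hle
  refine ⟨min (s + i) t, ⟨le_min (by linarith [(Nat.cast_nonneg i : (0:ℝ) ≤ i)]) hst,
    min_le_right _ _⟩, hle.trans ?_⟩
  have : Real.log (n + 2) ≤ Real.log (t - s + 4) :=
    Real.log_le_log (by positivity) (by linarith)
  linarith

theorem exists_le_dnJoin {K C : ℝ} {φ : ℝ × ℝ × ℝ → ℝ × ℝ × ℝ} (hK : 0 ≤ K) (hC : 0 ≤ C)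
    (h : VertLip K C φ) (x y : ℝ) {s t : ℝ} (hst : s ≤ t) :
    ∃ w ∈ Icc s t, ht (φ (vpt x y w)) - (K + C) - Real.log (t - s + 4) ≤
      dnJoin (φ (vpt x y s)) (φ (vpt x y t)) := by
  obtain ⟨w, hw, hle⟩ := exists_upJoin_le hK hC h.swap_comp x y hst
  refine ⟨w, hw, ?_⟩
  simp only [Function.comp, upJoin_swapPt, ht_swapPt] at hle
  linarith

/-- The image of a vertical segment has length controlled by a path with at most two turns. -/
theorem exists_turns {K C : ℝ} {φ : ℝ × ℝ × ℝ → ℝ × ℝ × ℝ} (hK : 0 ≤ K) (hC : 0 ≤ C)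
    (h : VertLip K C φ) {η : ℝ} (hη : 0 < η) :
    ∃ M, 0 ≤ M ∧ ∀ x y s t, s ≤ t → ∃ w1 ∈ Icc s t, ∃ w2 ∈ Icc s t,
      rho (φ (vpt x y s)) (φ (vpt x y t)) + |ht (φ (vpt x y s)) - ht (φ (vpt x y t))| ≤
        2 * (ht (φ (vpt x y w1)) - ht (φ (vpt x y w2))) + η * (t - s) + M := by
  obtain ⟨M, hM, hlog⟩ := exists_log_le (η := η / 4) (by positivity)
  refine ⟨4 * (K + C) + 4 * M, by positivity, fun x y s t hst => ?_⟩
  obtain ⟨w1, hw1, h1⟩ := exists_upJoin_le hK hC h x y hst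
  obtain ⟨w2, hw2, h2⟩ := exists_le_dnJoin hK hC h x y hst
  refine ⟨w1, hw1, w2, hw2, ?_⟩
  have := hlog (t - s) (by linarith)
  rw [rho]
  linarith

theorem vertLip_of_ht {K C a b : ℝ} {φ : ℝ × ℝ × ℝ → ℝ × ℝ × ℝ} (hK : 0 ≤ K) (hC : 0 ≤ C)
    (h : VertLip K C φ)
    (hu : ∀ x y s t, |ht (φ (vpt x y s)) - ht (φ (vpt x y t))| ≤ a * |s - t| + b)
    {η : ℝ} (hη : 0 < η) : ∃ b', 0 ≤ b' ∧ VertLip (a + η) b' φ := by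
  obtain ⟨M, hM, hturn⟩ := exists_turns hK hC h hη
  have key : ∀ x y s t, s ≤ t →
      rho (φ (vpt x y s)) (φ (vpt x y t)) ≤ (a + η) * |s - t| + (M + 3 * |b|) := by
    intro x y s t hst
    obtain ⟨w1, hw1, w2, hw2, hle⟩ := hturn x y s t hst
    have hb := le_abs_self b
    rw [abs_sub_comm s t, abs_of_nonneg (sub_nonneg.2 hst)]
    have u0 := abs_le.1 (le_refl |ht (φ (vpt x y s)) - ht (φ (vpt x y t))|)
    rcases le_total w1 w2 with hw | hw
    · have u1 := (abs_le.1 (hu x y s w1)).1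
      have u2 := (abs_le.1 (hu x y w1 w2)).2
      have u3 := (abs_le.1 (hu x y w2 t)).1
      rw [abs_sub_comm, abs_of_nonneg (by linarith [hw1.1])] at u1
      rw [abs_sub_comm, abs_of_nonneg (by linarith)] at u2
      rw [abs_sub_comm, abs_of_nonneg (by linarith [hw2.2])] at u3
      linarith
    · have u1 := (abs_le.1 (hu x y s w2)).2
      have u2 := (abs_le.1 (hu x y w2 w1)).1
      have u3 := (abs_le.1 (hu x y w1 t)).2
      rw [abs_sub_comm, abs_of_nonneg (by linarith [hw2.1])] at u1
      rw [abs_sub_comm, abs_of_nonneg (by linarith)] at u2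
      rw [abs_sub_comm, abs_of_nonneg (by linarith [hw1.2])] at u3
      linarith
  refine ⟨M + 3 * |b|, by positivity, fun x y s t => ?_⟩
  rcases le_total s t with h | h
  · exact key x y s t h
  · rw [rho_comm, abs_sub_comm]
    exact key x y t s h

/-- A map which is coarsely Lipschitz on vertical lines, and moves points close to each other at
bounded distance, is coarsely Lipschitz. -/
theorem rho_le_of_vertLip {a b R : ℝ} {φ : ℝ × ℝ × ℝ → ℝ × ℝ × ℝ} (h : VertLip a b φ)
    (hR : ∀ p q, rho p q ≤ 8 → rho (φ p) (φ q) ≤ R) (p q : ℝ × ℝ × ℝ) :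
    rho (φ p) (φ q) ≤ a * rho p q + (3 * b + 2 * R + 16) := by
  have key : ∀ p q : ℝ × ℝ × ℝ, ht p ≤ ht q →
      rho (φ p) (φ q) ≤ a * rho p q + (3 * b + 2 * R + 16) := by
    intro p q hpq
    set u := upJoin p q with hu
    set d := dnJoin p q with hd
    have e : rho p q = (ht p - d) + (u - d) + (u - ht q) := by
      rw [rho, abs_of_nonpos (by linarith)]; ring
    have hu1 := ht_le_upJoin_left p q
    have hu2 := ht_le_upJoin_right p q
    have hd1 := dnJoin_le_ht_left p q
    have hd2 := dnJoin_le_ht_right p q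
    have v1 := h p.1 p.2.1 (ht p) d
    have v2 := h p.1 q.2.1 d u
    have v3 := h q.1 q.2.1 u (ht q)
    rw [abs_of_nonneg (by linarith)] at v1 v3
    rw [abs_sub_comm, abs_of_nonneg (by linarith)] at v2
    rw [vpt_eta] at v1 v3
    have c1 := hR (vpt p.1 p.2.1 d) (vpt p.1 q.2.1 d) (rho_le_of_near (h := d) (by simp) (by simp)
      (by simpa using (Real.exp_pos _).le) (by
        simp only [vpt_snd, hd, exp_neg_dnJoin]
        linarith [Real.exp_pos (-ht p), Real.exp_pos (-ht q)]))
    have c2 := hR (vpt p.1 q.2.1 u) (vpt q.1 q.2.1 u) (rho_le_of_near (h := u) (by simp) (by simp)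
      (by
        simp only [vpt_fst, hu, exp_upJoin]
        linarith [Real.exp_pos (ht p), Real.exp_pos (ht q)])
      (by simpa using (Real.exp_pos _).le))
    have t1 := rho_triangle (φ p) (φ (vpt p.1 p.2.1 d)) (φ q)
    have t2 := rho_triangle (φ (vpt p.1 p.2.1 d)) (φ (vpt p.1 q.2.1 d)) (φ q)
    have t3 := rho_triangle (φ (vpt p.1 q.2.1 d)) (φ (vpt p.1 q.2.1 u)) (φ q)
    have t4 := rho_triangle (φ (vpt p.1 q.2.1 u)) (φ (vpt q.1 q.2.1 u)) (φ q)
    rw [e]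
    linarith
  rcases le_total (ht p) (ht q) with h' | h'
  · exact key p q h'
  · rw [rho_comm, rho_comm p]
    exact key q p h'

set_option maxHeartbeats 1600000 in
theorem no_overstretched_segment {K L C c : ℝ} {b : ℝ → ℝ} (hK : 1 ≤ K) (hL : 1 < L)
    (hLK : L ≤ K) (hC : 0 ≤ C) (hc : 0 ≤ c) (hb : ∀ η > 0, 0 ≤ b η) :
    ∃ T > 0, ∀ φ : ℝ × ℝ × ℝ → ℝ × ℝ × ℝ, RhoQI K C φ → (∀ η > 0, VertLip (L + η) (b η) φ) →
      ∀ x y z, ht (φ (vpt x y (z + 8 * T))) - ht (φ (vpt x y (z - 8 * T))) <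
        16 * (L * T) - c := by
  set μ := L - 1 with hμ
  have hμ0 : 0 < μ := by linarith
  have hK0 : 0 < K := by linarith
  obtain ⟨ε, hε, hbox⟩ := quadrilateral_image (K := K) (δ := μ / 16) hK (by positivity)
  set ε' := min ε 1 with hε'
  have hε'0 : 0 < ε' := lt_min hε one_pos
  set θ := μ / (32 * K) with hθ
  have hθ0 : 0 < θ := by positivity
  have hKθ : K * θ = μ / 32 := by rw [hθ]; field_simp
  have hθ1 : θ ≤ 1 / 32 := by
    rw [hθ, div_le_div_iff₀ (by positivity) (by norm_num)]; linarith
  set η := ε' * θ / 64 with hη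
  have hη0 : 0 < η := by positivity
  have hεθ0 : 0 < ε' * θ := by positivity
  set c1 := 2 * b η + c + C + 100 * K with hc1
  have hbη := hb η hη0
  have hc10 : 0 < c1 := by positivity
  set T0 := 4 + 2 * c1 / (ε' * θ) + 2 * (16 * K + 2 * C + 4) / μ with hT0
  have hT04 : 4 ≤ T0 := by
    have : 0 ≤ 2 * c1 / (ε' * θ) := by positivity
    have : 0 ≤ 2 * (16 * K + 2 * C + 4) / μ := by positivity
    linarith
  set N := ⌈Real.exp T0⌉₊ with hN
  have hN1 : Real.exp T0 ≤ N := Nat.le_ceil _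
  have hN0 : (0:ℝ) < N := (Real.exp_pos _).trans_le hN1
  set T := Real.log N with hT
  have hexpT : Real.exp T = N := Real.exp_log hN0
  have hTT0 : T0 ≤ T := by rw [hT, Real.le_log_iff_exp_le hN0]; exact hN1
  have hTpos : 0 < T := by linarith
  have hT1 : 2 * c1 ≤ ε' * θ * T := by
    have h1 : 2 * c1 / (ε' * θ) ≤ T := by
      have : 0 ≤ 2 * (16 * K + 2 * C + 4) / μ := by positivity
      linarith
    rw [div_le_iff₀ hεθ0] at h1
    linarith
  have hT2 : 2 * (16 * K + 2 * C + 4) ≤ μ * T := by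
    have h1 : 2 * (16 * K + 2 * C + 4) / μ ≤ T := by
      have : 0 ≤ 2 * c1 / (ε' * θ) := by positivity
      linarith
    rw [div_le_iff₀ hμ0] at h1
    linarith
  refine ⟨T, hTpos, fun φ hφ hlip x y z => ?_⟩
  by_contra! hlong
  set e := 16 * (η * T) + c1 with he
  have heT : e ≤ ε' * θ * T := by
    have : 16 * (η * T) = ε' * θ * T / 4 := by rw [hη]; ring
    linarith
  have hηT : 0 < η * T := by positivity
  set B := ht (φ (vpt x y z)) with hB
  have vl := hlip η hη0
  have vU : ∀ s t, |ht (φ (vpt x y s)) - ht (φ (vpt x y t))| ≤ (L + η) * |s - t| + b η :=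
    fun s t => (abs_ht_sub_le_rho _ _).trans (vl x y s t)
  have hboxσ : ∀ σ, θ * T ≤ σ → σ ≤ T →
      |ht (φ (vpt (x + Real.exp (z + σ)) y z)) - B| ≤ μ / 16 * σ ∧
      |xJoin (φ (vpt x y (z - 8 * σ))).1 (φ (vpt (x + Real.exp (z + σ)) y z))
        - (B + L * σ)| ≤ μ / 16 * σ := by
    intro σ h1 h2
    have hσ0 : 0 < σ := lt_of_lt_of_le (by positivity) h1
    have := hbox φ C L e σ x y z hφ hC (by linarith) (by linarith) hL.le hLK hσ0 ?_ ?_ ?_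
    · exact ⟨this.1, this.2.1⟩
    · refine heT.trans ?_
      rw [mul_assoc]
      exact mul_le_mul (min_le_left _ _) h1 (by positivity) hε.le
    · intro x y s t hst
      have h3 := vl x y s t
      have h4 := mul_le_mul_of_nonneg_left (hst.trans (by linarith : 16 * σ ≤ 16 * T)) hη0.le
      linarith
    · have h3 := (abs_le.1 (vU (z + 8 * T) (z + 8 * σ))).2
      have h4 := (abs_le.1 (vU (z - 8 * σ) (z - 8 * T))).2
      rw [abs_of_nonneg (by linarith)] at h3 h4
      have h5 : 0 ≤ η * σ := by positivity
      linarith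
  -- heights along the horizontal segment
  have hhor : ∀ i ≤ N, ht (φ (vpt (x + i * Real.exp z) y z)) ≤
      B + μ / 16 * T + K * (2 * (θ * T) + 8) + C := by
    intro i hi
    have hp1 : 0 ≤ μ / 16 * T := by positivity
    have hp2 : 0 ≤ K * (2 * (θ * T) + 8) := by positivity
    rcases le_or_gt (i : ℝ) (Real.exp (θ * T)) with h | h
    · have hr : rho (vpt (x + i * Real.exp z) y z) (vpt x y z) ≤ 2 * (θ * T) + 8 := by
        have u1 := upJoin_le_of_abs_le (p := vpt (x + i * Real.exp z) y z) (q := vpt x y z)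
          (h := z + θ * T) (by simp; positivity) (by simp; positivity) (by
            simp only [vpt_fst, add_sub_cancel_left, Real.exp_add]
            rw [abs_of_nonneg (by positivity), mul_comm]
            exact mul_le_mul_of_nonneg_left h (Real.exp_pos _).le)
        have u2 := le_dnJoin_of_abs_le (p := vpt (x + i * Real.exp z) y z) (q := vpt x y z)
          (h := z) (by simp) (by simp) (by simpa using (Real.exp_pos _).le)
        rw [rho, ht_vpt, ht_vpt, sub_self, abs_zero]
        linarith
      have h1 := (hφ _ _).1.trans (add_le_add_left (mul_le_mul_of_nonneg_left hr hK0.le) C)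
      have h2 := (abs_le.1 ((abs_ht_sub_le_rho _ _).trans h1)).2
      linarith
    · have hi0 : (0:ℝ) < i := (Real.exp_pos _).trans h
      have e1 : x + i * Real.exp z = x + Real.exp (z + Real.log i) := by
        rw [Real.exp_add, Real.exp_log hi0, mul_comm]
      have l1 : θ * T ≤ Real.log i := by rw [Real.le_log_iff_exp_le hi0]; exact h.le
      have l2 : Real.log i ≤ T := Real.log_le_log hi0 (by exact_mod_cast hi)
      have h1 := (abs_le.1 (hboxσ _ l1 l2).1).2
      have : μ / 16 * Real.log i ≤ μ / 16 * T := by gcongr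
      rw [e1]
      linarith
  obtain ⟨i, hi, hchain⟩ := exists_upJoin_chain_le
    (P := fun i : ℕ => φ (vpt (x + i * Real.exp z) y z)) (R := 8 * K + C) N (by positivity)
    (fun i _ => by
      have h1 : rho (vpt (x + i * Real.exp z) y z) (vpt (x + (i + 1 : ℕ) * Real.exp z) y z) ≤ 8 :=
        rho_le_of_near (h := z) (by simp) (by simp) (by
          simp only [vpt_fst]
          rw [show x + i * Real.exp z - (x + (i + 1 : ℕ) * Real.exp z) = -Real.exp z by
            push_cast; ring, abs_neg, abs_of_pos (Real.exp_pos _)])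
          (by simpa using (Real.exp_pos _).le)
      have h2 := (hφ _ _).1.trans (add_le_add_left (mul_le_mul_of_nonneg_left h1 hK0.le) C)
      linarith)
  have hhi := hhor i hi
  have e2 : x + N * Real.exp z = x + Real.exp (z + T) := by
    rw [Real.exp_add, hexpT, mul_comm]
  simp only [Nat.cast_zero, zero_mul, add_zero] at hchain
  rw [e2, upJoin_comm] at hchain
  have hlog : Real.log (N + 2) ≤ T + 2 := by
    have h1 := Real.add_one_le_exp (2:ℝ)
    have h2 : 1 ≤ (N:ℝ) := (Real.one_le_exp (by linarith)).trans hN1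
    have h3 : (N:ℝ) + 2 ≤ N * Real.exp 2 := by nlinarith
    refine (Real.log_le_log (by positivity) h3).trans ?_
    rw [Real.log_mul hN0.ne' (Real.exp_pos _).ne', Real.log_exp]
  have hθT : θ * T ≤ T := by nlinarith
  have hend := (abs_le.1 (hboxσ T hθT le_rfl).2).1
  have hmax := xJoin_le_max (φ (vpt x y (z - 8 * T))).1 (φ (vpt (x + Real.exp (z + T)) y z))
    (φ (vpt x y z))
  have hx0 : xJoin (φ (vpt x y (z - 8 * T))).1 (φ (vpt x y z)) ≤ B + e := by
    refine (xJoin_le_upJoin _ _).trans ?_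
    have h1 := two_upJoin_le (φ (vpt x y z)) (φ (vpt x y (z - 8 * T)))
    have h2 := vl x y z (z - 8 * T)
    have h3 := (abs_le.1 (vU (z + 8 * T) z)).2
    rw [abs_of_nonneg (by linarith)] at h2 h3
    linarith
  have hKθT : K * (2 * (θ * T) + 8) = μ / 16 * T + 8 * K := by
    rw [show K * (2 * (θ * T) + 8) = 2 * (K * θ) * T + 8 * K by ring, hKθ]; ring
  rw [hKθT] at hhi
  have hLT : L * T = T + μ * T := by rw [hμ]; ring
  rcases max_cases (upJoin (φ (vpt (x + Real.exp (z + T)) y z)) (φ (vpt x y z)))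
    (xJoin (φ (vpt x y (z - 8 * T))).1 (φ (vpt x y z))) with ⟨h, _⟩ | ⟨h, _⟩ <;> rw [h] at hmax
  · linarith
  · have h1 : ε' * θ * T ≤ T / 2 := by
      have : ε' * θ ≤ 1 * (1 / 32) := mul_le_mul (min_le_right _ _) hθ1 hθ0.le zero_le_one
      nlinarith
    linarith

theorem RhoQI.mono {K K' C : ℝ} {φ : ℝ × ℝ × ℝ → ℝ × ℝ × ℝ} (h : RhoQI K C φ) (hK : K ≤ K') :
    RhoQI K' C φ := fun p q =>
  ⟨(h p q).1.trans (by have := mul_le_mul_of_nonneg_right hK (rho_nonneg p q); linarith),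
    (h p q).2.trans (by have := mul_le_mul_of_nonneg_right hK (rho_nonneg (φ p) (φ q)); linarith)⟩

/-- The largest height difference of the images of two points on a vertical line. -/
def maxStretch (φ : ℝ × ℝ × ℝ → ℝ × ℝ × ℝ) (n : ℕ) : ℝ :=
  ⨆ p : ℝ × ℝ × ℝ, |ht (φ (vpt p.1 p.2.1 (p.2.2 + n))) - ht (φ (vpt p.1 p.2.1 p.2.2))|

section
variable {a b : ℝ} {φ : ℝ × ℝ × ℝ → ℝ × ℝ × ℝ}

theorem VertLip.abs_ht_le (h : VertLip a b φ) (x y s t : ℝ) :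
    |ht (φ (vpt x y s)) - ht (φ (vpt x y t))| ≤ a * |s - t| + b :=
  (abs_ht_sub_le_rho _ _).trans (h x y s t)

theorem VertLip.bddAbove_stretch (h : VertLip a b φ) (n : ℕ) : BddAbove (range fun p : ℝ × ℝ × ℝ =>
    |ht (φ (vpt p.1 p.2.1 (p.2.2 + n))) - ht (φ (vpt p.1 p.2.1 p.2.2))|) := by
  refine ⟨a * n + b, ?_⟩
  rintro _ ⟨p, rfl⟩
  simpa using h.abs_ht_le p.1 p.2.1 (p.2.2 + n) p.2.2

theorem VertLip.le_maxStretch (h : VertLip a b φ) (x y s : ℝ) (n : ℕ) :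
    |ht (φ (vpt x y (s + n))) - ht (φ (vpt x y s))| ≤ maxStretch φ n :=
  le_ciSup (h.bddAbove_stretch n) (x, y, s)

theorem VertLip.maxStretch_le (h : VertLip a b φ) (n : ℕ) : maxStretch φ n ≤ a * n + b :=
  ciSup_le fun p => by simpa using h.abs_ht_le p.1 p.2.1 (p.2.2 + n) p.2.2

theorem maxStretch_nonneg (φ : ℝ × ℝ × ℝ → ℝ × ℝ × ℝ) (n : ℕ) : 0 ≤ maxStretch φ n :=
  Real.iSup_nonneg fun _ => abs_nonneg _

theorem VertLip.subadditive (h : VertLip a b φ) : Subadditive (maxStretch φ) := fun m n => by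
  refine ciSup_le fun p => ?_
  have h1 := h.le_maxStretch p.1 p.2.1 p.2.2 m
  have h2 := h.le_maxStretch p.1 p.2.1 (p.2.2 + m) n
  have h3 := abs_sub_le (ht (φ (vpt p.1 p.2.1 (p.2.2 + m + n))))
    (ht (φ (vpt p.1 p.2.1 (p.2.2 + m)))) (ht (φ (vpt p.1 p.2.1 p.2.2)))
  rw [Nat.cast_add, ← add_assoc]
  linarith

theorem bddBelow_maxStretch_div (φ : ℝ × ℝ × ℝ → ℝ × ℝ × ℝ) :
    BddBelow (range fun n : ℕ => maxStretch φ n / n) := by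
  refine ⟨0, ?_⟩
  rintro _ ⟨n, rfl⟩
  exact div_nonneg (maxStretch_nonneg φ n) n.cast_nonneg

theorem VertLip.exists_ht_lipschitz (h : VertLip a b φ) (ha : 0 ≤ a) (hb : 0 ≤ b) {L : ℝ}
    (hL : h.subadditive.lim < L) (hL0 : 0 ≤ L) :
    ∃ b', ∀ x y s t, |ht (φ (vpt x y s)) - ht (φ (vpt x y t))| ≤ L * |s - t| + b' := by
  have hlt := (h.subadditive.tendsto_lim (bddBelow_maxStretch_div φ)).eventually_lt_const hL
  obtain ⟨m0, hm0⟩ := Filter.eventually_atTop.1 hlt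
  have hS : ∀ m : ℕ, maxStretch φ m ≤ L * m + (a * m0 + b) := by
    intro m
    rcases le_or_gt m0 m with hm | hm
    · have h1 := hm0 m hm
      rcases Nat.eq_zero_or_pos m with rfl | hpos
      · have := h.maxStretch_le 0
        have : 0 ≤ a * m0 := by positivity
        simp at *; linarith
      · have hpos' : (0:ℝ) < m := by exact_mod_cast hpos
        rw [div_lt_iff₀ hpos'] at h1
        have : 0 ≤ a * m0 := by positivity
        linarith
    · have h1 := h.maxStretch_le m
      have h2 : a * m ≤ a * m0 := mul_le_mul_of_nonneg_left (by exact_mod_cast hm.le) ha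
      have : 0 ≤ L * m := by positivity
      linarith
  have key : ∀ x y s t, s ≤ t → |ht (φ (vpt x y t)) - ht (φ (vpt x y s))| ≤
      L * |t - s| + (a * m0 + b + a + b) := by
    intro x y s t hst
    set m := ⌊t - s⌋₊
    have m1 : (m : ℝ) ≤ t - s := Nat.floor_le (by linarith)
    have m2 : t - s < m + 1 := Nat.lt_floor_add_one _
    have h1 := (h.le_maxStretch x y s m).trans (hS m)
    have h2 := h.abs_ht_le x y t (s + m)
    have h3 := abs_sub_le (ht (φ (vpt x y t))) (ht (φ (vpt x y (s + m))))
      (ht (φ (vpt x y s)))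
    rw [abs_of_nonneg (by linarith : 0 ≤ t - (s + m))] at h2
    have h4 : a * (t - (s + m)) ≤ a * 1 := mul_le_mul_of_nonneg_left (by linarith) ha
    have h5 : L * m ≤ L * (t - s) := mul_le_mul_of_nonneg_left m1 hL0
    rw [abs_of_nonneg (by linarith : 0 ≤ t - s)]
    linarith
  refine ⟨a * m0 + b + a + b, fun x y s t => ?_⟩
  rcases le_total s t with h | h
  · rw [abs_sub_comm, abs_sub_comm s]
    exact key x y s t h
  · exact key x y t s h

end

/-- Quasi-isometries do not asymptotically stretch vertical lines. -/
theorem RhoQI.lim_maxStretch_le_one {K C : ℝ} {φ : ℝ × ℝ × ℝ → ℝ × ℝ × ℝ} (hφ : RhoQI K C φ)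
    (hK : 1 ≤ K) (hC : 0 ≤ C) : (hφ.vertLip hK).subadditive.lim ≤ 1 := by
  have hv := hφ.vertLip hK
  set L := (hφ.vertLip hK).subadditive.lim with hLdef
  by_contra! hL
  set k := 9 * K + C with hk
  have hdiv : ∀ n : ℕ, L * n ≤ maxStretch φ n := by
    intro n
    rcases Nat.eq_zero_or_pos n with rfl | hpos
    · simpa using maxStretch_nonneg φ 0
    · have := (hφ.vertLip hK).subadditive.lim_le_div (bddBelow_maxStretch_div φ) hpos.ne'
      rwa [le_div_iff₀ (by exact_mod_cast hpos)] at this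
  have hLk : L ≤ k := by
    have h1 := hdiv 1
    have h2 := hv.maxStretch_le 1
    simp at h1 h2
    linarith
  have hbex : ∀ η : ℝ, 0 < η → ∃ b, 0 ≤ b ∧ VertLip (L + η) b φ := by
    intro η hη
    obtain ⟨b', hb'⟩ := hv.exists_ht_lipschitz (L := L + η / 2) (by linarith) (by linarith)
      (by linarith) (by linarith)
    obtain ⟨b, hb, hl⟩ := vertLip_of_ht (by linarith) (by linarith) hv hb' (half_pos hη)
    exact ⟨b, hb, by rwa [add_assoc, add_halves] at hl⟩
  choose! b hb hbl using hbex
  obtain ⟨T, hT, hno⟩ := no_overstretched_segment (K := k) (L := L) (C := C) (c := 1 + k) (b := b)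
    (by linarith) hL hLk hC (by linarith) hb
  set n := ⌈16 * T⌉₊ with hn
  have n1 : 16 * T ≤ n := Nat.le_ceil _
  have n2 : (n : ℝ) < 16 * T + 1 := Nat.ceil_lt_add_one (by positivity)
  have hlt : maxStretch φ n - 1 < maxStretch φ n := by linarith
  obtain ⟨⟨x, y, s⟩, hp⟩ := exists_lt_of_lt_ciSup hlt
  simp only at hp
  have h1 := hv.abs_ht_le x y (s + n) (s + 16 * T)
  rw [abs_of_nonneg (by linarith : 0 ≤ s + n - (s + 16 * T))] at h1
  have h2 : K * (s + n - (s + 16 * T)) ≤ K * 1 := mul_le_mul_of_nonneg_left (by linarith)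
    (by linarith)
  have h3 := hdiv n
  have h4 : L * (16 * T) ≤ L * n := mul_le_mul_of_nonneg_left n1 (by linarith)
  have h5 := abs_sub_le (ht (φ (vpt x y (s + n)))) (ht (φ (vpt x y (s + 16 * T))))
    (ht (φ (vpt x y s)))
  have n3 := hno φ (hφ.mono (by linarith)) hbl x y (s + 8 * T)
  have n4 := hno (swapPt ∘ φ) (hφ.swap_comp.mono (by linarith))
    (fun η hη => (hbl η hη).swap_comp) x y (s + 8 * T)
  rw [show s + 8 * T + 8 * T = s + 16 * T by ring, add_sub_cancel_right] at n3 n4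
  simp only [Function.comp, ht_swapPt] at n4
  have := abs_lt.2 ⟨by linarith, n3⟩
  linarith

/-- Quasi-isometries are asymptotically non-expanding. -/
theorem RhoQI.exists_rho_le {K C : ℝ} {φ : ℝ × ℝ × ℝ → ℝ × ℝ × ℝ} (hφ : RhoQI K C φ)
    (hK : 1 ≤ K) (hC : 0 ≤ C) {η : ℝ} (hη : 0 < η) :
    ∃ C', 0 ≤ C' ∧ ∀ p q, rho (φ p) (φ q) ≤ (1 + η) * rho p q + C' := by
  have hv := hφ.vertLip hK
  have hL := hφ.lim_maxStretch_le_one hK hC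
  obtain ⟨b', hb'⟩ := hv.exists_ht_lipschitz (L := 1 + η / 2) (by linarith) (by linarith)
    (by linarith) (by linarith)
  obtain ⟨b, hb, hl⟩ := vertLip_of_ht (by linarith) (by linarith) hv hb' (half_pos hη)
  rw [add_assoc, add_halves] at hl
  refine ⟨3 * b + 2 * (8 * K + C) + 16, by linarith, rho_le_of_vertLip hl fun p q h => ?_⟩
  have h1 := (hφ p q).1
  have h2 := mul_le_mul_of_nonneg_left h (by linarith : 0 ≤ K)
  linarith

set_option maxHeartbeats 1000000 in
theorem no_tight_turn {K : ℝ} (hK : 1 ≤ K) :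
    ∃ ε > 0, ∀ (φ : ℝ × ℝ × ℝ → ℝ × ℝ × ℝ) (C e T x y s : ℝ), RhoQI K C φ → 0 ≤ C → C ≤ e →
      100 * K ≤ e → 0 < T → 2 * e ≤ ε * T →
      (∀ p q, rho p q ≤ 40 * T → rho (φ p) (φ q) ≤ rho p q + e) →
      (∀ p q, rho p q ≤ 40 * T → rho p q ≤ rho (φ p) (φ q) + e) →
      16 * T - e ≤ ht (φ (vpt x y s)) - ht (φ (vpt x y (s - 16 * T))) →
      16 * T - e ≤ ht (φ (vpt x y s)) - ht (φ (vpt x y (s + 16 * T))) → False := by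
  obtain ⟨ε, hε, hbox⟩ := quadrilateral_image (K := K) (δ := 1 / 32) hK (by norm_num)
  refine ⟨min ε (1 / 32), by positivity, ?_⟩
  intro φ C e T x y s hφ hC0 hC he hT heT hup hlo hl1 hl2
  have he1 : 2 * e ≤ ε * T := heT.trans (mul_le_mul_of_nonneg_right (min_le_left _ _) hT.le)
  have he2 : 2 * e ≤ 1 / 32 * T := heT.trans (mul_le_mul_of_nonneg_right (min_le_right _ _) hT.le)
  have he0 : 100 ≤ e := by linarith
  have hvert : ∀ x y s t : ℝ, |s - t| ≤ 16 * T →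
      rho (φ (vpt x y s)) (φ (vpt x y t)) ≤ 1 * |s - t| + 2 * e := by
    intro x y s t hst
    have h1 := rho_vertical x y s t
    have h2 := hup (vpt x y s) (vpt x y t) (by linarith)
    linarith
  have vU : ∀ x y s t : ℝ, |s - t| ≤ 16 * T →
      |ht (φ (vpt x y s)) - ht (φ (vpt x y t))| ≤ |s - t| + 2 * e := fun x y s t hst =>
    (abs_ht_sub_le_rho _ _).trans (by simpa using hvert x y s t hst)
  have b1 := hbox φ C 1 (2 * e) T x y (s - 8 * T) hφ hC0 (by linarith) (by linarith) le_rfl hK hT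
    he1 hvert (by
      rw [sub_add_cancel, show s - 8 * T - 8 * T = s - 16 * T by ring]
      linarith)
  have b2 := hbox (swapPt ∘ φ) C 1 (2 * e) T x y (s + 8 * T) hφ.swap_comp hC0 (by linarith)
    (by linarith) le_rfl hK hT he1 (by simpa using hvert) (by
      rw [add_sub_cancel_right, show s + 8 * T + 8 * T = s + 16 * T by ring]
      simp only [Function.comp, ht_swapPt]
      linarith)
  simp only [Function.comp, ht_swapPt, xJoin_swapPt, swapPt_fst, add_sub_cancel_right,
    sub_add_cancel] at b1 b2
  obtain ⟨-, -, b3, b4⟩ := b1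
  obtain ⟨b5, b6, -, -⟩ := b2
  set c := ht (φ (vpt x y s)) with hc
  set Y := (φ (vpt x y s)).2.1 with hY
  set P := vpt x (y + Real.exp (-(s - 8 * T))) (s - 8 * T + T) with hP
  set Q := vpt (x + Real.exp (s + 8 * T + T)) y (s + 8 * T) with hQ
  have a8 : |8 * T| = 8 * T := abs_of_nonneg (by positivity)
  have u1 := abs_le.1 (vU x y s (s - 8 * T) (by rw [sub_sub_cancel, a8]; linarith))
  have u2 := abs_le.1 (vU x y (s - 8 * T) (s - 16 * T)
    (by rw [show s - 8 * T - (s - 16 * T) = 8 * T by ring, a8]; linarith))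
  have u3 := abs_le.1 (vU x y (s + 8 * T) s (by rw [add_sub_cancel_left, a8]; linarith))
  have u4 := abs_le.1 (vU x y (s + 16 * T) (s + 8 * T)
    (by rw [show s + 16 * T - (s + 8 * T) = 8 * T by ring, a8]; linarith))
  have u5 := abs_le.1 (vU x y (s + 9 * T) (s + 16 * T)
    (by rw [show s + 9 * T - (s + 16 * T) = -(7 * T) by ring, abs_neg, abs_of_nonneg (by positivity)]
        linarith))
  have u6 := abs_le.1 (vU x y (s + 9 * T) s
    (by rw [add_sub_cancel_left, abs_of_nonneg (by positivity)]; linarith))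
  rw [sub_sub_cancel, a8] at u1
  rw [show s - 8 * T - (s - 16 * T) = 8 * T by ring, a8] at u2
  rw [add_sub_cancel_left, a8] at u3
  rw [show s + 16 * T - (s + 8 * T) = 8 * T by ring, a8] at u4
  rw [show s + 9 * T - (s + 16 * T) = -(7 * T) by ring, abs_neg, abs_of_nonneg (by positivity)] at u5
  rw [add_sub_cancel_left, abs_of_nonneg (by positivity)] at u6
  have r1 : rho P (vpt x y (s - 8 * T)) ≤ T + 8 := by
    have m1 := upJoin_le_of_abs_le (p := P) (q := vpt x y (s - 8 * T)) (h := s - 8 * T + T)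
      (by simp [hP]) (by simp; positivity) (by simp [hP]; positivity)
    have m2 := le_dnJoin_of_abs_le (p := P) (q := vpt x y (s - 8 * T)) (h := s - 8 * T)
      (by simp [hP]; positivity) (by simp) (by simp [hP])
    rw [rho, hP, ht_vpt, ht_vpt, add_sub_cancel_left, abs_of_pos hT, ← hP]
    linarith
  have r2 : rho Q (vpt x y (s + 9 * T)) ≤ T + 8 := by
    have m1 := upJoin_le_of_abs_le (p := Q) (q := vpt x y (s + 9 * T)) (h := s + 9 * T)
      (by simp [hQ]; linarith) (by simp) (by
        simp only [hQ, vpt_fst, add_sub_cancel_left]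
        rw [abs_of_pos (Real.exp_pos _), show s + 8 * T + T = s + 9 * T by ring])
    have m2 := le_dnJoin_of_abs_le (p := Q) (q := vpt x y (s + 9 * T)) (h := s + 8 * T)
      (by simp [hQ]) (by simp; linarith) (by simp [hQ]; positivity)
    rw [rho, hQ, ht_vpt, ht_vpt, show s + 8 * T - (s + 9 * T) = -T by ring, abs_neg,
      abs_of_pos hT, ← hQ]
    linarith
  have r3 : 19 * T ≤ rho P Q := by
    have m1 := le_upJoin_of_le_abs (p := P) (q := Q) (h := s + 8 * T + T) (by
      simp [hP, hQ])
    have m2 := dnJoin_le_of_le_abs (p := P) (q := Q) (h := s - 8 * T) (by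
      simp only [hP, hQ, vpt_snd, add_sub_cancel_left]; exact le_abs_self _)
    rw [rho, hP, hQ, ht_vpt, ht_vpt, ← hP, ← hQ, show s - 8 * T + T - (s + 8 * T) = -(15 * T) by ring,
      abs_neg, abs_of_nonneg (by positivity)]
    linarith
  have r4 : rho P Q ≤ 40 * T := by
    have t1 := rho_triangle P (vpt x y (s - 8 * T)) Q
    have t2 := rho_triangle (vpt x y (s - 8 * T)) (vpt x y (s + 9 * T)) Q
    have t3 := rho_vertical x y (s - 8 * T) (s + 9 * T)
    rw [rho_comm (vpt x y (s + 9 * T)) Q] at t2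
    rw [show s - 8 * T - (s + 9 * T) = -(17 * T) by ring, abs_neg, abs_of_nonneg (by positivity)]
      at t3
    linarith
  have i1 := hup _ _ (r1.trans (by linarith))
  have i2 := hup _ _ (r2.trans (by linarith))
  have i3 := hlo P Q r4
  have i4 := hvert x y s (s - 8 * T) (by rw [sub_sub_cancel, a8]; linarith)
  have i5 := hvert x y (s + 9 * T) s
    (by rw [add_sub_cancel_left, abs_of_nonneg (by positivity)]; linarith)
  rw [sub_sub_cancel, a8] at i4
  rw [add_sub_cancel_left, abs_of_nonneg (by positivity)] at i5
  have d := min_le_dnJoin_yJoin Y (φ P) (φ Q)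
  have v1 := two_upJoin_le (φ P) (φ (vpt x y (s - 8 * T)))
  have v2 := two_upJoin_le (φ Q) (φ (vpt x y (s + 9 * T)))
  have v3 := two_upJoin_le (φ (vpt x y s)) (φ (vpt x y (s - 8 * T)))
  have v4 := two_upJoin_le (φ (vpt x y (s + 9 * T))) (φ (vpt x y s))
  rw [abs_le] at b3 b4 b5 b6
  have w1 : upJoin (φ P) (φ (vpt x y s)) ≤ c + T / 4 := by
    refine (upJoin_le_max _ (φ (vpt x y (s - 8 * T))) _).trans ?_
    rw [upJoin_comm _ (φ (vpt x y s)), ← le_sub_iff_add_le]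
    exact max_le (by linarith) (by linarith)
  have w2 : upJoin (φ Q) (φ (vpt x y s)) ≤ c + T / 4 := by
    refine (upJoin_le_max _ (φ (vpt x y (s + 9 * T))) _).trans ?_
    rw [← le_sub_iff_add_le]
    exact max_le (by linarith) (by linarith)
  have w3 : upJoin (φ P) (φ Q) ≤ c + T / 3 := by
    refine (upJoin_le_max _ (φ (vpt x y s)) _).trans ?_
    rw [upJoin_comm _ (φ Q), ← le_sub_iff_add_le]
    exact max_le (by linarith) (by linarith)
  have w4 : c - 9 * T - T / 4 ≤ dnJoin (φ P) (φ Q) := by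
    refine le_trans ?_ d
    rw [le_sub_iff_add_le]
    exact le_min (by linarith) (by linarith)
  have w5 := le_abs_self (ht (φ P) - ht (φ Q))
  have w6 : rho (φ P) (φ Q) = 2 * (upJoin (φ P) (φ Q) - dnJoin (φ P) (φ Q)) -
    |ht (φ P) - ht (φ Q)| := rfl
  linarith

/-- Coarsely surjective quasi-isometries are asymptotic isometries. -/
theorem RhoQI.near_isometry {K C D : ℝ} {φ : ℝ × ℝ × ℝ → ℝ × ℝ × ℝ} (hφ : RhoQI K C φ)
    (hK : 1 ≤ K) (hC : 0 ≤ C) (hD : 0 ≤ D) (hs : ∀ q, ∃ p, rho (φ p) q ≤ D) {η : ℝ}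
    (hη : 0 < η) : ∃ C', 0 ≤ C' ∧ RhoQI (1 + η) C' φ := by
  choose ψ hψ using hs
  have hK0 : 0 ≤ K := by linarith
  have hψ' : RhoQI K (K * (2 * D + 8) + C + 2 * D + 8) ψ := by
    intro p q
    have h1 := hψ p
    have h2 := hψ q
    have t1 := rho_triangle (φ (ψ p)) p (φ (ψ q))
    have t2 := rho_triangle p q (φ (ψ q))
    have t3 := rho_triangle p (φ (ψ p)) q
    have t4 := rho_triangle (φ (ψ p)) (φ (ψ q)) q
    rw [rho_comm q] at t2
    rw [rho_comm p (φ (ψ p))] at t3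
    have h3 := hφ (ψ p) (ψ q)
    have h4 : K * rho (φ (ψ p)) (φ (ψ q)) ≤ K * (rho p q + (2 * D + 8)) :=
      mul_le_mul_of_nonneg_left (by linarith) hK0
    have h5 : 0 ≤ K * (2 * D + 8) := by positivity
    exact ⟨by linarith, by linarith⟩
  obtain ⟨C1, hC1, h1⟩ := hφ.exists_rho_le hK hC hη
  obtain ⟨C2, hC2, h2⟩ := hψ'.exists_rho_le hK (by positivity) hη
  refine ⟨C1 + C2 + 2 * (K * D + C) + 8, by positivity, fun p q => ?_⟩
  have hKD : 0 ≤ K * D := by positivity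
  have hp : ∀ p, rho (ψ (φ p)) p ≤ K * D + C := fun p => by
    have := mul_le_mul_of_nonneg_left (hψ (φ p)) hK0
    linarith [(hφ (ψ (φ p)) p).2]
  have t1 := rho_triangle p (ψ (φ p)) q
  have t2 := rho_triangle (ψ (φ p)) (ψ (φ q)) q
  rw [rho_comm p (ψ (φ p))] at t1
  have h3 := h1 p q
  have h4 := h2 (φ p) (φ q)
  have h5 := hp p
  have h6 := hp q
  exact ⟨by linarith, by linarith⟩

theorem exists_turn_point {U : ℝ → ℝ} {s t w1 w2 F R : ℝ} (hw1 : s ≤ w1) (hw : w1 ≤ w2)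
    (hw2 : w2 ≤ t) (hF : 0 ≤ F) (hR : 0 ≤ R) (hRt : 10 * R + 40 * F ≤ t - s)
    (hU : ∀ a b, s ≤ a → a ≤ b → b ≤ t → |U a - U b| ≤ b - a + F)
    (hsmall : |U s - U t| < (t - s) / 2)
    (hlong : t - s - F + |U s - U t| ≤ 2 * (U w1 - U w2)) :
    ∃ w, (R - 4 * F ≤ U w - U (w - R) ∧ R - 4 * F ≤ U w - U (w + R)) ∨
      (R - 4 * F ≤ U (w - R) - U w ∧ R - 4 * F ≤ U (w + R) - U w) := by
  have u1 := abs_le.1 (hU s w1 le_rfl hw1 (hw.trans hw2))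
  have u2 := abs_le.1 (hU w1 w2 hw1 hw hw2)
  have u3 := abs_le.1 (hU w2 t (hw1.trans hw) hw2 le_rfl)
  have a1 := le_abs_self (U s - U t)
  have a2 := neg_le_abs (U s - U t)
  have a3 := abs_lt.1 hsmall
  rcases le_total (U t - U w2) (U w1 - U s) with h | h
  · refine ⟨w1, Or.inl ⟨?_, ?_⟩⟩
    · have := abs_le.1 (hU s (w1 - R) le_rfl (by linarith) (by linarith))
      linarith
    · have := abs_le.1 (hU (w1 + R) w2 (by linarith) (by linarith) hw2)
      linarith
  · refine ⟨w2, Or.inr ⟨?_, ?_⟩⟩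
    · have := abs_le.1 (hU w1 (w2 - R) hw1 (by linarith) (by linarith))
      linarith
    · have := abs_le.1 (hU (w2 + R) t (by linarith) (by linarith) le_rfl)
      linarith

/-- An asymptotic isometry coarsely expands vertical lines vertically. -/
theorem RhoQI.exists_half_le_abs_ht {K C : ℝ} {φ : ℝ × ℝ × ℝ → ℝ × ℝ × ℝ} (hφ : RhoQI K C φ)
    (hK : 1 ≤ K) (hC : 0 ≤ C) (hn : ∀ η > 0, ∃ C', 0 ≤ C' ∧ RhoQI (1 + η) C' φ) :
    ∃ T0 > 0, ∀ x y s t, s + T0 ≤ t →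
      (t - s) / 2 ≤ |ht (φ (vpt x y s)) - ht (φ (vpt x y t))| := by
  obtain ⟨ε₀, hε₀, hturn⟩ := no_tight_turn hK
  set ε := min ε₀ 1 with hε
  have hε0 : 0 < ε := by positivity
  have hε1 : ε ≤ 1 := min_le_right _ _
  set η := ε / 20000 with hη
  have hη0 : 0 < η := by positivity
  obtain ⟨C', hC', hφ'⟩ := hn η hη0
  have hv := hφ'.vertLip (by linarith)
  obtain ⟨M, hM, hM'⟩ := exists_turns (by linarith) (by linarith) hv hη0
  set G := 100 * K + C + C' + M + (8 * (1 + η) + C') with hG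
  have hG0 : 0 < G := by positivity
  refine ⟨34000 * G / ε, by positivity, fun x y s t hst => ?_⟩
  by_contra! hsmall
  set T := (t - s) / 170 with hT
  have hℓ : t - s = 170 * T := by rw [hT]; ring
  have hTG : 200 * G ≤ ε * T := by
    have : 34000 * G / ε ≤ 170 * T := by linarith
    rw [div_le_iff₀ hε0] at this
    linarith
  have hT0 : 0 < T := by
    have : 0 < ε * T := by linarith
    exact pos_of_mul_pos_right this hε0.le
  have hεT : ε * T ≤ T := by nlinarith
  have hηT : η * T = ε * T / 20000 := by rw [hη]; ring
  set F := ε * T / 20 with hF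
  set e := ε * T / 2 with he
  have hlip : ∀ a b, s ≤ a → a ≤ b → b ≤ t →
      |ht (φ (vpt x y a)) - ht (φ (vpt x y b))| ≤ b - a + F := by
    intro a b ha hab hb
    have h1 := hv.abs_ht_le x y a b
    rw [abs_sub_comm a, abs_of_nonneg (sub_nonneg.2 hab)] at h1
    have h2 : η * (b - a) ≤ η * (170 * T) := mul_le_mul_of_nonneg_left (by linarith) hη0.le
    linarith
  have hup : ∀ p q, rho p q ≤ 40 * T → rho (φ p) (φ q) ≤ rho p q + e := by
    intro p q hpq
    have h1 := (hφ' p q).1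
    have h2 := mul_le_mul_of_nonneg_left hpq hη0.le
    linarith
  have hlo : ∀ p q, rho p q ≤ 40 * T → rho p q ≤ rho (φ p) (φ q) + e := by
    intro p q hpq
    have h1 := (hφ' p q).2
    have h2 := mul_le_mul_of_nonneg_left ((hup p q hpq).trans (by linarith : _ ≤ 41 * T)) hη0.le
    linarith
  have hno : ∀ w, ¬ ((16 * T - 4 * F ≤ ht (φ (vpt x y w)) - ht (φ (vpt x y (w - 16 * T))) ∧
        16 * T - 4 * F ≤ ht (φ (vpt x y w)) - ht (φ (vpt x y (w + 16 * T)))) ∨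
      (16 * T - 4 * F ≤ ht (φ (vpt x y (w - 16 * T))) - ht (φ (vpt x y w)) ∧
        16 * T - 4 * F ≤ ht (φ (vpt x y (w + 16 * T))) - ht (φ (vpt x y w)))) := by
    have he2 : 2 * e ≤ ε₀ * T := by
      have := mul_le_mul_of_nonneg_right (min_le_left ε₀ 1) hT0.le
      linarith
    rintro w (⟨h1, h2⟩ | ⟨h1, h2⟩)
    · exact hturn φ C e T x y w hφ hC (by linarith) (by linarith) hT0 he2 hup hlo (by linarith)
        (by linarith)
    · refine hturn (swapPt ∘ φ) C e T x y w hφ.swap_comp hC (by linarith) (by linarith) hT0 he2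
        (by simpa using hup) (by simpa using hlo) ?_ ?_ <;>
      · simp only [Function.comp, ht_swapPt]
        linarith
  obtain ⟨w1, hw1, w2, hw2, hle⟩ := hM' x y s t (by linarith)
  have hrho : t - s - η * (171 * T) - C' ≤ rho (φ (vpt x y s)) (φ (vpt x y t)) := by
    have h1 := (hφ' (vpt x y s) (vpt x y t)).2
    have h2 := abs_ht_sub_le_rho (vpt x y s) (vpt x y t)
    rw [ht_vpt, ht_vpt, abs_sub_comm, abs_of_nonneg (by linarith)] at h2
    by_contra! hlt
    have h3 : rho (φ (vpt x y s)) (φ (vpt x y t)) ≤ 171 * T := by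
      have : 0 ≤ η * (171 * T) := by positivity
      linarith
    have := mul_le_mul_of_nonneg_left h3 hη0.le
    linarith
  have hlong : t - s - F + |ht (φ (vpt x y s)) - ht (φ (vpt x y t))| ≤
      2 * (ht (φ (vpt x y w1)) - ht (φ (vpt x y w2))) := by
    rw [hℓ] at hle hrho ⊢
    linarith
  rcases le_total w1 w2 with hw | hw
  · obtain ⟨w, hw⟩ := exists_turn_point (U := fun a => ht (φ (vpt x y a))) (F := F) (R := 16 * T) hw1.1 hw
      hw2.2 (by positivity) (by positivity) (by linarith) hlip hsmall hlong
    exact hno w hw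
  · obtain ⟨w, hw⟩ := exists_turn_point (U := fun a => -ht (φ (vpt x y a))) (F := F) (R := 16 * T) hw2.1 hw
      hw1.2 (by positivity) (by positivity) (by linarith)
      (fun a b ha hab hb => by
        rw [neg_sub_neg, abs_sub_comm]; exact hlip a b ha hab hb)
      (by rw [neg_sub_neg, abs_sub_comm]; exact hsmall)
      (by rw [neg_sub_neg, abs_sub_comm]; linarith)
    refine hno w ?_
    simp only [neg_sub_neg] at hw
    exact hw.symm

/-- Coarsely increasing, at definite speed, along vertical lines. -/
def Ascending (A : ℝ) (φ : ℝ × ℝ × ℝ → ℝ × ℝ × ℝ) : Prop :=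
  ∀ x y s t, s ≤ t → (t - s) / 2 - A ≤ ht (φ (vpt x y t)) - ht (φ (vpt x y s))

theorem ascending_of_steps {a b T : ℝ} {φ : ℝ × ℝ × ℝ → ℝ × ℝ × ℝ} (hT : 0 < T) (ha : 0 ≤ a)
    (hv : VertLip a b φ)
    (h : ∀ x y s, T / 2 ≤ ht (φ (vpt x y (s + T))) - ht (φ (vpt x y s))) :
    Ascending (a * T + b + T) φ := by
  have key : ∀ (n : ℕ) x y s, n * T / 2 ≤ ht (φ (vpt x y (s + n * T))) - ht (φ (vpt x y s)) := by
    intro n x y s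
    induction n with
    | zero => simp
    | succ n ih =>
      have := h x y (s + n * T)
      rw [show s + n * T + T = s + (n + 1 : ℕ) * T by push_cast; ring] at this
      push_cast at this ⊢
      linarith
  intro x y s t hst
  set n := ⌊(t - s) / T⌋₊ with hn
  have n1 : n * T ≤ t - s := by
    rw [← le_div_iff₀ hT]; exact Nat.floor_le (div_nonneg (by linarith) hT.le)
  have n2 : t - s < (n + 1) * T := by
    rw [← div_lt_iff₀ hT]; exact Nat.lt_floor_add_one _
  have h1 := key n x y s
  have h2 := (abs_le.1 (hv.abs_ht_le x y t (s + n * T))).1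
  rw [abs_of_nonneg (by linarith)] at h2
  have h3 : a * (t - (s + n * T)) ≤ a * T := mul_le_mul_of_nonneg_left (by linarith) ha
  linarith

theorem forall_real_of_steps {P : ℝ → Prop} (h : ∀ s t, |s - t| ≤ 1 → P s → P t) {s : ℝ}
    (hs : P s) (t : ℝ) : P t := by
  set N := ⌈|t - s|⌉₊ + 1 with hN
  have hN0 : (0:ℝ) < N := by rw [hN]; positivity
  have hN1 : |t - s| ≤ N := by
    rw [hN]; push_cast; linarith [Nat.le_ceil |t - s|]
  have key : ∀ i : ℕ, P (s + (t - s) * i / N) := by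
    intro i
    induction i with
    | zero => simpa using hs
    | succ i ih =>
      refine h _ _ ?_ ih
      rw [show s + (t - s) * i / N - (s + (t - s) * (i + 1 : ℕ) / N) = -((t - s) / N) by
        push_cast; ring, abs_neg, abs_div, abs_of_pos hN0, div_le_one hN0]
      exact hN1
  have := key N
  rwa [mul_div_cancel_right₀ _ hN0.ne', add_sub_cancel] at this

/-- A map that coarsely expands vertical lines is ascending, possibly after exchanging the
horizontal directions. -/
theorem RhoQI.exists_ascending {K C : ℝ} {φ : ℝ × ℝ × ℝ → ℝ × ℝ × ℝ} (hφ : RhoQI K C φ)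
    (hK : 1 ≤ K) (hC : 0 ≤ C) {T0 : ℝ} (hT0 : 0 < T0) (hT : ∀ x y s t, s + T0 ≤ t →
      (t - s) / 2 ≤ |ht (φ (vpt x y s)) - ht (φ (vpt x y t))|) :
    ∃ A, 0 ≤ A ∧ (Ascending A φ ∨ Ascending A (swapPt ∘ φ)) := by
  have hv := hφ.vertLip hK
  set T := T0 + 2 * (9 * K + C) with hTdef
  have hTpos : 0 < T := by linarith
  set P : ℝ → ℝ → ℝ → Prop := fun x y s =>
    0 < ht (φ (vpt x y (s + T))) - ht (φ (vpt x y s)) with hP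
  have hbig : ∀ x y s, T / 2 ≤ |ht (φ (vpt x y (s + T))) - ht (φ (vpt x y s))| := by
    intro x y s
    have := hT x y s (s + T) (by linarith)
    rwa [add_sub_cancel_left, abs_sub_comm] at this
  have hstep : ∀ x y s x' y' s',
      |ht (φ (vpt x y s)) - ht (φ (vpt x' y' s'))| ≤ 9 * K + C →
      |ht (φ (vpt x y (s + T))) - ht (φ (vpt x' y' (s' + T)))| ≤ 9 * K + C →
      P x y s → P x' y' s' := by
    intro x y s x' y' s' h1 h2 hp
    have b1 := hbig x y s
    have b2 := hbig x' y' s'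
    simp only [hP] at hp ⊢
    rw [abs_le] at h1 h2
    rw [abs_of_pos hp] at b1
    by_contra! hn
    rw [abs_of_nonpos hn] at b2
    linarith
  have hs : ∀ x y s t, P x y s → P x y t := by
    intro x y s t hp
    refine forall_real_of_steps (fun a b hab => hstep x y a x y b ?_ ?_) hp t
    · have := hv.abs_ht_le x y a b
      nlinarith
    · have := hv.abs_ht_le x y (a + T) (b + T)
      rw [add_sub_add_right_eq_sub] at this
      nlinarith
  have hnear : ∀ p q, rho p q ≤ 8 → |ht (φ p) - ht (φ q)| ≤ 9 * K + C := by
    intro p q hpq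
    have h1 := abs_ht_sub_le_rho (φ p) (φ q)
    have h2 := (hφ p q).1
    nlinarith
  have hx : ∀ x x' y s, P x y s → P x' y s := by
    intro x x' y s hp
    set h := Real.log (|x - x'| + 1)
    have hh : |x - x'| ≤ Real.exp h := by rw [Real.exp_log (by positivity)]; linarith
    have hh' : |x - x'| ≤ Real.exp (h + T) := hh.trans (Real.exp_le_exp.2 (by linarith))
    refine hs x' y h s (hstep x y h x' y h (hnear _ _ ?_) (hnear _ _ ?_) (hs x y s h hp))
    · exact rho_le_of_near (ht_vpt _ _ _) (ht_vpt _ _ _) hh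
        (by simpa using (Real.exp_pos _).le)
    · exact rho_le_of_near (ht_vpt _ _ _) (ht_vpt _ _ _) hh'
        (by simpa using (Real.exp_pos _).le)
  have hy : ∀ x y y' s, P x y s → P x y' s := by
    intro x y y' s hp
    set h := -Real.log (|y - y'| + 1) - T with hh
    have h1 : |y - y'| ≤ Real.exp (-(h + T)) := by
      rw [hh, sub_add_cancel, neg_neg, Real.exp_log (by positivity)]; linarith
    have h2 : |y - y'| ≤ Real.exp (-h) := h1.trans (Real.exp_le_exp.2 (by linarith))
    refine hs x y' h s (hstep x y h x y' h (hnear _ _ ?_) (hnear _ _ ?_) (hs x y s h hp))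
    · exact rho_le_of_near (ht_vpt _ _ _) (ht_vpt _ _ _) (by simpa using (Real.exp_pos _).le) h2
    · exact rho_le_of_near (ht_vpt _ _ _) (ht_vpt _ _ _) (by simpa using (Real.exp_pos _).le) h1
  refine ⟨K * T + (8 * K + C) + T, by positivity, ?_⟩
  by_cases h0 : P 0 0 0
  · refine Or.inl (ascending_of_steps hTpos (by linarith) hv fun x y s => ?_)
    have hp : P x y s := hs x y 0 s (hy x 0 y 0 (hx 0 x 0 0 h0))
    have := hbig x y s
    rwa [abs_of_pos hp] at this
  · refine Or.inr (ascending_of_steps hTpos (by linarith) hv.swap_comp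
      fun x y s => ?_)
    have hp : ¬ P x y s := fun hp => h0 (hx x 0 0 0 (hy x y 0 0 (hs x y s 0 hp)))
    simp only [hP, not_lt] at hp
    have := hbig x y s
    rw [abs_of_nonpos hp] at this
    simp only [Function.comp, ht_swapPt]
    linarith

/-- The boundary value of the first coordinate along downward vertical lines. -/
theorem exists_limit_of_ascending {X U : ℝ → ℝ} {A r M : ℝ} (hr : 0 < r) (hM : 0 ≤ M)
    (hX : ∀ s t, s ≤ t → t - s ≤ r → |X t - X s| ≤ M * Real.exp (U t))
    (hU : ∀ t, U (t - r) ≤ U t - 1)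
    (hA : ∀ s t, s ≤ t → (t - s) / 2 - A ≤ U t - U s) :
    ∃ f, ∀ t, |X t - f| ≤ 2 * M * Real.exp (U t) := by
  have key : ∀ (n : ℕ) s t, s ≤ t → t - s ≤ n * r → |X t - X s| ≤ 2 * M * Real.exp (U t) := by
    intro n
    induction n with
    | zero =>
      intro s t hst h
      have : s = t := by simp at h; linarith
      rw [this, sub_self, abs_zero]
      positivity
    | succ n ih =>
      intro s t hst h
      have hpos : 0 ≤ M * Real.exp (U t) := by positivity
      rcases le_or_gt (t - s) r with h1 | h1
      · have := hX s t hst h1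
        linarith
      · have h2 := ih s (t - r) (by linarith) (by push_cast at h; linarith)
        have h3 := hX (t - r) t (by linarith) (by linarith)
        have h4 := abs_sub_le (X t) (X (t - r)) (X s)
        have h5 : Real.exp (U (t - r)) * 2 ≤ Real.exp (U t) := by
          calc _ ≤ Real.exp (U (t - r)) * Real.exp 1 := by gcongr; exact two_le_exp_one
            _ ≤ _ := by rw [← Real.exp_add]; exact Real.exp_le_exp.2 (by linarith [hU t])
        have h6 := mul_le_mul_of_nonneg_left h5 hM
        linarith
  have key' : ∀ s t, s ≤ t → |X t - X s| ≤ 2 * M * Real.exp (U t) := fun s t hst =>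
    key ⌈(t - s) / r⌉₊ s t hst (by rw [← div_le_iff₀ hr]; exact Nat.le_ceil _)
  have hcau : CauchySeq fun n : ℕ => X (-n) := by
    refine cauchySeq_of_le_tendsto_0 (fun n : ℕ => 2 * M * Real.exp (U 0 + A) *
      Real.exp (-(1 / 2)) ^ n * 2) (fun n m N hn hm => ?_) ?_
    · have hb : ∀ n : ℕ, N ≤ n → |X (-N) - X (-n)| ≤
          2 * M * Real.exp (U 0 + A) * Real.exp (-(1 / 2)) ^ N := by
        intro n hn
        have hn' : (N:ℝ) ≤ n := by exact_mod_cast hn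
        refine (key' _ _ (by linarith)).trans ?_
        rw [mul_assoc (2 * M) (Real.exp _), ← Real.exp_nat_mul, ← Real.exp_add]
        have := hA (-N) 0 (by simp)
        gcongr
        linarith
      rw [Real.dist_eq, mul_two]
      refine (abs_sub_le _ (X (-N)) _).trans (add_le_add ?_ (hb m hm))
      rw [abs_sub_comm]
      exact hb n hn
    · have h1 : Filter.Tendsto (fun n : ℕ => Real.exp (-(1 / 2)) ^ n) Filter.atTop (nhds 0) :=
        tendsto_pow_atTop_nhds_zero_of_lt_one (Real.exp_pos _).le
          (by rw [← Real.exp_zero]; exact Real.exp_lt_exp.2 (by norm_num))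
      simpa using (h1.const_mul (2 * M * Real.exp (U 0 + A))).mul_const 2
  obtain ⟨f, hf⟩ := cauchySeq_tendsto_of_complete hcau
  refine ⟨f, fun t => ?_⟩
  have h1 := (hf.const_sub (X t)).abs
  refine le_of_tendsto h1 ?_
  filter_upwards [Filter.eventually_ge_atTop ⌈-t⌉₊] with n hn
  refine key' _ _ ?_
  have := Nat.le_ceil (-t)
  have h2 : (⌈-t⌉₊ : ℝ) ≤ n := by exact_mod_cast hn
  linarith

section
variable {K C A : ℝ} {φ : ℝ × ℝ × ℝ → ℝ × ℝ × ℝ}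

theorem Ascending.conj_swap (h : Ascending A φ) : Ascending A (swapPt ∘ φ ∘ swapPt) :=
  fun x y s t hst => by
    have := h y x (-t) (-s) (by linarith)
    simp only [Function.comp, swapPt_vpt, ht_swapPt]
    linarith

theorem RhoQI.conj_swap (h : RhoQI K C φ) : RhoQI K C (swapPt ∘ φ ∘ swapPt) :=
  h.comp_swap.swap_comp

theorem Ascending.exists_ht_lt (h : Ascending A φ) (x y v T : ℝ) :
    ∃ t ≤ T, ht (φ (vpt x y t)) < v := by
  have h0 := abs_nonneg (ht (φ (vpt x y T)) + A - v)
  refine ⟨T - 2 * (|ht (φ (vpt x y T)) + A - v| + 1), by linarith, ?_⟩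
  have h1 := h x y (T - 2 * (|ht (φ (vpt x y T)) + A - v| + 1)) T (by linarith)
  have h2 := le_abs_self (ht (φ (vpt x y T)) + A - v)
  linarith

theorem Ascending.exists_ht_near (h : Ascending A φ) (hφ : RhoQI K C φ) (hK : 1 ≤ K)
    (x y v : ℝ) : ∃ t, |ht (φ (vpt x y t)) - v| ≤ 9 * K + C := by
  obtain ⟨a, -, ha⟩ := h.exists_ht_lt x y v 0
  set S := {t | ht (φ (vpt x y t)) ≤ v} with hS
  have hne : S.Nonempty := ⟨a, ha.le⟩
  have hbdd : BddAbove S := by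
    refine ⟨|a| + 2 * (|v - ht (φ (vpt x y a))| + |A|), fun t ht' => ?_⟩
    have h3 := le_abs_self (v - ht (φ (vpt x y a)))
    have h4 := le_abs_self A
    have h5 := le_abs_self a
    rcases le_total t a with hta | hta
    · have h1 := abs_nonneg (v - ht (φ (vpt x y a)))
      have h2 := abs_nonneg A
      linarith
    · have h1 := h x y a t hta
      have h2 : ht (φ (vpt x y t)) ≤ v := ht'
      linarith
  obtain ⟨s, hs, hs1⟩ := exists_lt_of_lt_csSup hne (sub_lt_self (sSup S) one_half_pos)
  have h2 : s ≤ sSup S := le_csSup hbdd hs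
  have h1 : v < ht (φ (vpt x y (sSup S + 1 / 2))) := by
    by_contra! hle
    have : sSup S + 1 / 2 ≤ sSup S := le_csSup hbdd hle
    linarith
  have h3 := (abs_le.1 ((hφ.vertLip hK).abs_ht_le x y (sSup S + 1 / 2) s)).2
  rw [abs_of_nonneg (by linarith)] at h3
  have h4 : K * (sSup S + 1 / 2 - s) ≤ K * 1 :=
    mul_le_mul_of_nonneg_left (by linarith) (by linarith)
  have h5 : ht (φ (vpt x y s)) ≤ v := hs
  exact ⟨s, abs_le.2 ⟨by linarith, by linarith⟩⟩

/-- Images of points at the same height with nearby first coordinates. -/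
theorem RhoQI.abs_fst_sub_le_of_rho_le (hφ : RhoQI K C φ) (hK : 1 ≤ K) {p q : ℝ × ℝ × ℝ}
    (h : rho p q ≤ 8) : ht (φ q) ≤ ht (φ p) + (8 * K + C) ∧
      |(φ p).1 - (φ q).1| ≤ Real.exp (8 * K + C) * Real.exp (ht (φ p)) := by
  have h1 := (hφ p q).1
  have h2 : K * rho p q ≤ K * 8 := mul_le_mul_of_nonneg_left h (by linarith)
  have h3 := (abs_le.1 (abs_ht_sub_le_rho (φ p) (φ q))).1
  have h4 := two_upJoin_le (φ p) (φ q)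
  refine ⟨by linarith, ?_⟩
  have h5 := exp_upJoin (φ p) (φ q)
  rw [← Real.exp_add]
  calc _ ≤ Real.exp (upJoin (φ p) (φ q)) := by
        rw [h5]; linarith [Real.exp_pos (ht (φ p)), Real.exp_pos (ht (φ q))]
    _ ≤ _ := Real.exp_le_exp.2 (by linarith)

theorem Ascending.exists_fst_limit (h : Ascending A φ) (hφ : RhoQI K C φ) (hK : 1 ≤ K)
    (hA : 0 ≤ A) : ∃ M, 0 ≤ M ∧ ∃ F : ℝ → ℝ → ℝ,
      ∀ x y t, |(φ (vpt x y t)).1 - F x y| ≤ M * Real.exp (ht (φ (vpt x y t))) := by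
  set r := 2 * (A + 1) with hr
  set M := Real.exp ((K * r + (8 * K + C) + A) / 2) with hM
  have hex : ∀ x y, ∃ f, ∀ t, |(φ (vpt x y t)).1 - f| ≤
      2 * M * Real.exp (ht (φ (vpt x y t))) := by
    intro x y
    refine exists_limit_of_ascending (X := fun t => (φ (vpt x y t)).1)
      (U := fun t => ht (φ (vpt x y t))) (A := A) (r := r) (by linarith) (Real.exp_pos _).le ?_ ?_
      (h x y)
    · intro s t hst hr'
      have h1 := hφ.vertLip hK x y t s
      rw [abs_of_nonneg (by linarith)] at h1
      have h2 : K * (t - s) ≤ K * r := mul_le_mul_of_nonneg_left hr' (by linarith)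
      have h3 := two_upJoin_le (φ (vpt x y t)) (φ (vpt x y s))
      have h4 := h x y s t hst
      have h5 := exp_upJoin (φ (vpt x y t)) (φ (vpt x y s))
      rw [hM, ← Real.exp_add]
      calc _ ≤ Real.exp (upJoin (φ (vpt x y t)) (φ (vpt x y s))) := by
            rw [h5]
            linarith [Real.exp_pos (ht (φ (vpt x y t))), Real.exp_pos (ht (φ (vpt x y s)))]
        _ ≤ _ := Real.exp_le_exp.2 (by linarith)
    · intro t
      have := h x y (t - r) t (by linarith)
      linarith
  choose F hF using hex
  exact ⟨2 * M, by positivity, F, hF⟩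

/-- An ascending quasi-isometry induces a map on the first coordinate. -/
theorem Ascending.exists_boundary_fst (h : Ascending A φ) (hφ : RhoQI K C φ) (hK : 1 ≤ K)
    (hA : 0 ≤ A) : ∃ M, 0 ≤ M ∧ ∃ f : ℝ → ℝ,
      ∀ x y t, |(φ (vpt x y t)).1 - f x| ≤ M * Real.exp (ht (φ (vpt x y t))) := by
  obtain ⟨M, hM, F, hF⟩ := h.exists_fst_limit hφ hK hA
  refine ⟨M, hM, fun x => F x 0, fun x y t => ?_⟩
  suffices F x y = F x 0 by simpa only [this] using hF x y t
  by_contra hne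
  have hd : 0 < |F x y - F x 0| := abs_pos.2 (sub_ne_zero.2 hne)
  set E := Real.exp (8 * K + C) with hE
  have hE0 : 0 < E := Real.exp_pos _
  set Q := M + M * E + E with hQ
  have hQ0 : 0 < Q := by positivity
  obtain ⟨s, hs, hs'⟩ := h.exists_ht_lt x y (Real.log (|F x y - F x 0| / Q))
    (-Real.log (|y| + 1))
  rw [Real.lt_log_iff_exp_lt (by positivity), lt_div_iff₀ hQ0] at hs'
  have hnear : rho (vpt x y s) (vpt x 0 s) ≤ 8 := by
    refine rho_le_of_near (ht_vpt _ _ _) (ht_vpt _ _ _) (by simpa using (Real.exp_pos _).le) ?_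
    simp only [vpt_snd, sub_zero]
    have : |y| + 1 ≤ Real.exp (-s) := by
      rw [← Real.log_le_iff_le_exp (by positivity)]; linarith
    linarith
  obtain ⟨h1, h2⟩ := hφ.abs_fst_sub_le_of_rho_le hK hnear
  have h3 := hF x y s
  have h4 := hF x 0 s
  have h5 : Real.exp (ht (φ (vpt x 0 s))) ≤ E * Real.exp (ht (φ (vpt x y s))) := by
    rw [hE, ← Real.exp_add]; exact Real.exp_le_exp.2 (by linarith)
  have h6 := mul_le_mul_of_nonneg_left h5 hM
  have h7 := abs_sub_le (F x y) (φ (vpt x y s)).1 (F x 0)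
  have h8 := abs_sub_le (φ (vpt x y s)).1 (φ (vpt x 0 s)).1 (F x 0)
  rw [abs_sub_comm] at h3
  nlinarith

/-- An ascending quasi-isometry induces a map on the second coordinate. -/
theorem Ascending.exists_boundary_snd (h : Ascending A φ) (hφ : RhoQI K C φ) (hK : 1 ≤ K)
    (hA : 0 ≤ A) : ∃ M, 0 ≤ M ∧ ∃ g : ℝ → ℝ,
      ∀ x y t, |(φ (vpt x y t)).2.1 - g y| ≤ M * Real.exp (-ht (φ (vpt x y t))) := by
  obtain ⟨M, hM, g, hg⟩ := h.conj_swap.exists_boundary_fst hφ.conj_swap hK hA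
  refine ⟨M, hM, g, fun x y t => ?_⟩
  simpa using hg y x (-t)

end

section
variable {K C A M : ℝ} {φ : ℝ × ℝ × ℝ → ℝ × ℝ × ℝ} {f g : ℝ → ℝ}

theorem Ascending.log_boundary_le (h : Ascending A φ) (hφ : RhoQI K C φ) (hK : 1 ≤ K)
    (hC : 0 ≤ C) (hA : 0 ≤ A) (hM : 0 ≤ M)
    (hf : ∀ x y t, |(φ (vpt x y t)).1 - f x| ≤ M * Real.exp (ht (φ (vpt x y t))))
    (hg : ∀ x y t, |(φ (vpt x y t)).2.1 - g y| ≤ M * Real.exp (-ht (φ (vpt x y t)))) :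
    ∃ B, 0 ≤ B ∧ ∀ x x' y, x ≠ x' →
      Real.exp (ht (φ (vpt x y (Real.log |x - x'|))) - B) ≤ |f x - f x'| ∧
      |f x - f x'| ≤ Real.exp (ht (φ (vpt x y (Real.log |x - x'|))) + B) := by
  set E := Real.exp (8 * K + C) with hE
  have hE1 : 1 ≤ E := Real.one_le_exp (by linarith)
  set Q := M + M * E + E with hQ
  have hQ1 : 1 ≤ Q := by nlinarith
  set c := 9 * K + C with hc
  set N := Real.log (2 * M + 1) with hN
  have hN0 : 0 ≤ N := Real.log_nonneg (by linarith)
  have hexpN : Real.exp N = 2 * M + 1 := Real.exp_log (by linarith)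
  set R := 2 * (2 * c + 2 * N + 4) with hR
  have hc0 : 0 ≤ c := by linarith
  have hR0 : 0 ≤ R := by linarith
  set R' := K * R + C with hR'
  have hR'0 : 0 ≤ R' := by positivity
  set B1 := c + A + K * R' + (8 * K + C) with hB1
  have hKR : 0 ≤ K * R' := by positivity
  refine ⟨B1 + 1 + Real.log Q, by have := Real.log_nonneg hQ1; linarith,
    fun x x' y hne => ?_⟩
  have hd : 0 < |x - x'| := abs_pos.2 (sub_ne_zero.2 hne)
  set t := Real.log |x - x'| with ht'
  have hexpt : Real.exp t = |x - x'| := Real.exp_log hd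
  set u := ht (φ (vpt x y t)) with hu
  constructor
  · by_contra! hlt
    set v := u - (B1 + 1 + Real.log Q) with hv
    have hlQ := Real.log_nonneg hQ1
    obtain ⟨s, hs⟩ := h.exists_ht_near hφ hK x y v
    obtain ⟨s', hs'⟩ := h.exists_ht_near hφ hK x' y v
    rw [abs_le] at hs hs'
    have e1 : Real.exp (ht (φ (vpt x y s))) ≤ Real.exp (v + c) := Real.exp_le_exp.2 (by linarith)
    have e2 : Real.exp (ht (φ (vpt x' y s'))) ≤ Real.exp (v + c) := Real.exp_le_exp.2 (by linarith)
    have e3 : Real.exp (-ht (φ (vpt x y s))) ≤ Real.exp (-(v - c)) :=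
      Real.exp_le_exp.2 (by linarith)
    have e4 : Real.exp (-ht (φ (vpt x' y s'))) ≤ Real.exp (-(v - c)) :=
      Real.exp_le_exp.2 (by linarith)
    have e5 : Real.exp v ≤ Real.exp (v + c) := Real.exp_le_exp.2 (by linarith)
    have x1 := (hf x y s).trans (mul_le_mul_of_nonneg_left e1 hM)
    have x2 := (hf x' y s').trans (mul_le_mul_of_nonneg_left e2 hM)
    have y1 := (hg x y s).trans (mul_le_mul_of_nonneg_left e3 hM)
    have y2 := (hg x' y s').trans (mul_le_mul_of_nonneg_left e4 hM)
    have hX : |(φ (vpt x y s)).1 - (φ (vpt x' y s')).1| ≤ Real.exp (v + c + N) := by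
      have t1 := abs_sub_le (φ (vpt x y s)).1 (f x) (φ (vpt x' y s')).1
      have t2 := abs_sub_le (f x) (f x') (φ (vpt x' y s')).1
      rw [abs_sub_comm (f x') _] at t2
      rw [Real.exp_add _ N, hexpN]
      linarith
    have hY : |(φ (vpt x y s)).2.1 - (φ (vpt x' y s')).2.1| ≤ Real.exp (-(v - c - N)) := by
      have t1 := abs_sub_le (φ (vpt x y s)).2.1 (g y) (φ (vpt x' y s')).2.1
      rw [abs_sub_comm (g y)] at t1
      rw [show -(v - c - N) = -(v - c) + N by ring, Real.exp_add _ N, hexpN]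
      linarith [Real.exp_pos (-(v - c))]
    have j1 := upJoin_le_of_abs_le (by linarith) (by linarith) hX
    have j2 := le_dnJoin_of_abs_le (by linarith) (by linarith) hY
    have j3 : rho (φ (vpt x y s)) (φ (vpt x' y s')) ≤ R := by
      rw [rho]
      linarith [abs_nonneg (ht (φ (vpt x y s)) - ht (φ (vpt x' y s')))]
    have j4 : rho (vpt x y s) (vpt x' y s') ≤ R' := by
      have := mul_le_mul_of_nonneg_left j3 (by linarith : 0 ≤ K)
      linarith [(hφ (vpt x y s) (vpt x' y s')).2]
    have j5 : t ≤ upJoin (vpt x y s) (vpt x' y s') := le_upJoin_of_le_abs hexpt.le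
    have j6 := upJoin_sub_ht_le_rho (vpt x y s) (vpt x' y s')
    rw [ht_vpt] at j6
    rcases le_total t s with hts | hts
    · have := h x y t s hts
      linarith
    · have h1 := (abs_le.1 ((hφ.vertLip hK).abs_ht_le x y t s)).2
      rw [abs_of_nonneg (sub_nonneg.2 hts)] at h1
      have h2 : K * (t - s) ≤ K * R' := mul_le_mul_of_nonneg_left (by linarith) (by linarith)
      linarith
  · obtain ⟨h1, h2⟩ := hφ.abs_fst_sub_le_of_rho_le hK (p := vpt x y t) (q := vpt x' y t)
      (rho_le_of_near (ht_vpt _ _ _) (ht_vpt _ _ _) hexpt.ge (by simpa using (Real.exp_pos _).le))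
    have h3 := hf x y t
    have h4 := hf x' y t
    have h5 : Real.exp (ht (φ (vpt x' y t))) ≤ E * Real.exp u := by
      rw [hE, ← Real.exp_add]; exact Real.exp_le_exp.2 (by linarith)
    have h6 := mul_le_mul_of_nonneg_left h5 hM
    have h7 := abs_sub_le (f x) (φ (vpt x y t)).1 (f x')
    have h8 := abs_sub_le (φ (vpt x y t)).1 (φ (vpt x' y t)).1 (f x')
    rw [abs_sub_comm] at h3
    calc |f x - f x'| ≤ Q * Real.exp u := by rw [hQ]; linarith
      _ = Real.exp (u + Real.log Q) := by
        rw [Real.exp_add, Real.exp_log (by linarith), mul_comm]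
      _ ≤ _ := Real.exp_le_exp.2 (by linarith)

/-- The image height only depends on the height, up to a bounded error. -/
theorem Ascending.exists_height_map (h : Ascending A φ) (hφ : RhoQI K C φ) (hK : 1 ≤ K)
    (hC : 0 ≤ C) (hA : 0 ≤ A) (hM : 0 ≤ M)
    (hf : ∀ x y t, |(φ (vpt x y t)).1 - f x| ≤ M * Real.exp (ht (φ (vpt x y t))))
    (hg : ∀ x y t, |(φ (vpt x y t)).2.1 - g y| ≤ M * Real.exp (-ht (φ (vpt x y t)))) :
    ∃ B, 0 ≤ B ∧ ∀ x y t, |ht (φ (vpt x y t)) - ht (φ (vpt 0 0 t))| ≤ B := by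
  obtain ⟨B1, hB1, h1⟩ := h.log_boundary_le hφ hK hC hA hM hf hg
  obtain ⟨B2, hB2, h2⟩ := h.conj_swap.log_boundary_le hφ.conj_swap hK hC hA hM (f := g) (g := f)
    (fun x y t => by simpa using hg y x (-t)) (fun x y t => by simpa using hf y x (-t))
  refine ⟨2 * B1 + 2 * B2, by positivity, fun x y t => ?_⟩
  have k1 := h1 x (x + Real.exp t) y (by simp [(Real.exp_pos t).ne'])
  have k2 := h1 x (x + Real.exp t) 0 (by simp [(Real.exp_pos t).ne'])
  have k3 := h2 0 (Real.exp (-t)) x (Real.exp_pos _).ne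
  have k4 := h2 0 (Real.exp (-t)) 0 (Real.exp_pos _).ne
  simp only [sub_add_cancel_left, zero_sub, abs_neg, Real.abs_exp, Real.log_exp, Function.comp, swapPt_vpt,
    ht_swapPt, neg_neg] at k1 k2 k3 k4
  have m1 := Real.exp_le_exp.1 (k1.1.trans k2.2)
  have m2 := Real.exp_le_exp.1 (k2.1.trans k1.2)
  have m3 := Real.exp_le_exp.1 (k3.1.trans k4.2)
  have m4 := Real.exp_le_exp.1 (k4.1.trans k3.2)
  exact abs_le.2 ⟨by linarith, by linarith⟩

end

section
variable {B A K k : ℝ} {f q : ℝ → ℝ}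

theorem log_natFloor_exp_bounds {r : ℝ} (hr : 0 ≤ r) :
    1 ≤ ⌊Real.exp r⌋₊ ∧ Real.log ⌊Real.exp r⌋₊ ≤ r ∧ r ≤ Real.log ⌊Real.exp r⌋₊ + 1 := by
  have h1 : 1 ≤ ⌊Real.exp r⌋₊ := Nat.le_floor (by simpa using Real.one_le_exp hr)
  have h2 : (1 : ℝ) ≤ ⌊Real.exp r⌋₊ := by exact_mod_cast h1
  refine ⟨h1, ?_, ?_⟩
  · rw [Real.log_le_iff_le_exp (by linarith)]
    exact Nat.floor_le (Real.exp_pos r).le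
  · have h3 := Nat.lt_floor_add_one (Real.exp r)
    have h4 : Real.exp r ≤ Real.exp (Real.log ⌊Real.exp r⌋₊ + 1) := by
      rw [Real.exp_add, Real.exp_log (by linarith)]
      have := Real.add_one_le_exp (1 : ℝ)
      nlinarith
    exact Real.exp_le_exp.1 h4

theorem continuous_of_exp_bound (hA : ∀ s t, s ≤ t → (t - s) / 2 - A ≤ q t - q s)
    (hf : ∀ x x', x ≠ x' → |f x - f x'| ≤ Real.exp (q (Real.log |x - x'|) + B)) :
    Continuous f := by
  rw [Metric.continuous_iff]
  intro x ε hε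
  set s := min 0 (2 * (Real.log (ε / 2) - q 0 - A - B)) with hs
  refine ⟨Real.exp s, Real.exp_pos s, fun x' hx' => ?_⟩
  rw [Real.dist_eq] at hx' ⊢
  rcases eq_or_ne x' x with rfl | hne
  · simpa using hε
  have hpos : 0 < |x' - x| := abs_pos.2 (sub_ne_zero.2 hne)
  have hlog : Real.log |x' - x| < s := (Real.log_lt_iff_lt_exp hpos).2 hx'
  have h0 := hA _ 0 (hlog.le.trans (min_le_left _ _))
  have h1 := min_le_right 0 (2 * (Real.log (ε / 2) - q 0 - A - B))
  calc |f x' - f x| ≤ Real.exp (q (Real.log |x' - x|) + B) := hf _ _ hne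
    _ ≤ Real.exp (Real.log (ε / 2)) := Real.exp_le_exp.2 (by linarith)
    _ = ε / 2 := Real.exp_log (by linarith)
    _ < ε := by linarith

theorem injective_of_exp_bound
    (hf : ∀ x x', x ≠ x' → Real.exp (q (Real.log |x - x'|) - B) ≤ |f x - f x'|) :
    Function.Injective f := by
  intro x x' h
  by_contra hne
  have := hf x x' hne
  rw [h, sub_self, abs_zero] at this
  exact absurd this (not_le.2 (Real.exp_pos _))

theorem StrictMono.abs_sub_log_le (hm : StrictMono f)
    (hf : ∀ x x', x ≠ x' → Real.exp (q (Real.log |x - x'|) - B) ≤ |f x - f x'| ∧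
      |f x - f x'| ≤ Real.exp (q (Real.log |x - x'|) + B)) (t : ℝ) {N : ℕ} (hN : 1 ≤ N) :
    |q (t + Real.log N) - q t - Real.log N| ≤ 2 * B := by
  have hN' : (0 : ℝ) < N := by exact_mod_cast hN
  have hstep : ∀ x d, 0 < d → Real.exp (q (Real.log d) - B) ≤ f (x + d) - f x ∧
      f (x + d) - f x ≤ Real.exp (q (Real.log d) + B) := by
    intro x d hd
    have h1 := hf (x + d) x (by simpa using hd.ne')
    have h2 : f x < f (x + d) := hm (by linarith)
    rwa [add_sub_cancel_left, abs_of_pos hd, abs_of_pos (sub_pos.2 h2)] at h1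
  have hsum : ∀ n : ℕ, n * Real.exp (q t - B) ≤ f (n * Real.exp t) - f 0 ∧
      f (n * Real.exp t) - f 0 ≤ n * Real.exp (q t + B) := by
    intro n
    induction n with
    | zero => simp
    | succ n ih =>
      have := hstep (n * Real.exp t) (Real.exp t) (Real.exp_pos t)
      rw [Real.log_exp] at this
      push_cast
      rw [add_mul, add_mul, add_mul, one_mul, one_mul, one_mul]
      exact ⟨by linarith, by linarith⟩
  have h1 := hstep 0 (N * Real.exp t) (mul_pos hN' (Real.exp_pos t))
  have h2 := hsum N
  rw [zero_add, Real.log_mul hN'.ne' (Real.exp_pos t).ne', Real.log_exp,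
    add_comm (Real.log N) t] at h1
  have e : ∀ a, (N : ℝ) * Real.exp a = Real.exp (Real.log N + a) := fun a => by
    rw [Real.exp_add, Real.exp_log hN']
  rw [e (q t - B), e (q t + B)] at h2
  have m1 := Real.exp_le_exp.1 (h1.1.trans h2.2)
  have m2 := Real.exp_le_exp.1 (h2.1.trans h1.2)
  exact abs_le.2 ⟨by linarith, by linarith⟩

theorem exists_abs_sub_self_le (hB : 0 ≤ B)
    (hA : ∀ s t, s ≤ t → (t - s) / 2 - A ≤ q t - q s)
    (hK : ∀ s t, s ≤ t → q t - q s ≤ K * (t - s) + k) (hK0 : 0 ≤ K) (hA0 : 0 ≤ A) (hk0 : 0 ≤ k)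
    (hf : ∀ x x', x ≠ x' → Real.exp (q (Real.log |x - x'|) - B) ≤ |f x - f x'| ∧
      |f x - f x'| ≤ Real.exp (q (Real.log |x - x'|) + B)) :
    ∃ B', 0 ≤ B' ∧ ∀ t, |q t - t| ≤ B' := by
  have hN : ∀ (t : ℝ) {N : ℕ}, 1 ≤ N → |q (t + Real.log N) - q t - Real.log N| ≤ 2 * B := by
    rcases (continuous_of_exp_bound hA fun x x' h => (hf x x' h).2).strictMono_of_inj
      (injective_of_exp_bound fun x x' h => (hf x x' h).1) with hm | hm
    · exact fun t N h => hm.abs_sub_log_le hf t h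
    · refine fun t N h => hm.neg.abs_sub_log_le (fun x x' hne => ?_) t h
      rw [neg_sub_neg, abs_sub_comm (f x')]
      exact hf x x' hne
  set c := 2 * B + 1 + A + K + k with hc
  have hr : ∀ t r, 0 ≤ r → |q (t + r) - q t - r| ≤ c := by
    intro t r hr
    obtain ⟨n1, n2, n3⟩ := log_natFloor_exp_bounds hr
    have h1 := abs_le.1 (hN t n1)
    have h2 := hA (t + Real.log ⌊Real.exp r⌋₊) (t + r) (by linarith)
    have h3 := hK (t + Real.log ⌊Real.exp r⌋₊) (t + r) (by linarith)
    have h4 : K * (t + r - (t + Real.log ⌊Real.exp r⌋₊)) ≤ K * 1 :=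
      mul_le_mul_of_nonneg_left (by linarith) hK0
    exact abs_le.2 ⟨by linarith, by linarith⟩
  refine ⟨c + |q 0|, by positivity, fun t => ?_⟩
  have a1 := le_abs_self (q 0)
  have a2 := neg_abs_le (q 0)
  rcases le_total 0 t with ht | ht
  · have := abs_le.1 (hr 0 t ht)
    rw [zero_add] at this
    exact abs_le.2 ⟨by linarith, by linarith⟩
  · have := abs_le.1 (hr t (-t) (by linarith))
    rw [add_neg_cancel] at this
    exact abs_le.2 ⟨by linarith, by linarith⟩

theorem isBilip_of_bounds {M : ℝ} (hM : 1 ≤ M)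
    (h : ∀ s t : ℝ, (1 / M) * |s - t| ≤ |f s - f t| ∧ |f s - f t| ≤ M * |s - t|) :
    IsBilip f := by
  refine ⟨?_, M, hM, h⟩
  have hM0 : 0 < 1 / M := by positivity
  have hcont : Continuous f := by
    have : LipschitzWith M.toNNReal f := LipschitzWith.of_dist_le_mul fun s t => by
      rw [Real.dist_eq, Real.dist_eq, Real.coe_toNNReal _ (by linarith)]
      exact (h s t).2
    exact this.continuous
  have hinj : Function.Injective f := fun s t hst => by
    have := (h s t).1
    rw [hst, sub_self, abs_zero] at this
    have h3 : |s - t| ≤ 0 := by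
      by_contra! h4
      linarith [mul_pos hM0 h4]
    exact sub_eq_zero.1 (abs_nonpos_iff.1 h3)
  have hpos : Filter.Tendsto (fun t : ℝ => 1 / M * t) Filter.atTop Filter.atTop :=
    Filter.tendsto_id.const_mul_atTop hM0
  have hneg : Filter.Tendsto (fun t : ℝ => 1 / M * t) Filter.atBot Filter.atBot :=
    Filter.tendsto_id.const_mul_atBot hM0
  rcases hcont.strictMono_of_inj hinj with hm | hm
  · refine hcont.surjective (Filter.tendsto_atTop_mono' _ ?_
      (Filter.tendsto_atTop_add_const_left _ (f 0) hpos)) (Filter.tendsto_atBot_mono' _ ?_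
      (Filter.tendsto_atBot_add_const_left _ (f 0) hneg))
    · filter_upwards [Filter.eventually_ge_atTop 0] with t ht
      have := (h t 0).1
      rw [sub_zero, abs_of_nonneg ht, abs_of_nonneg (sub_nonneg.2 (hm.monotone ht))] at this
      linarith
    · filter_upwards [Filter.eventually_le_atBot 0] with t ht
      have := (h t 0).1
      rw [sub_zero, abs_of_nonpos ht, abs_of_nonpos (sub_nonpos.2 (hm.monotone ht))] at this
      linarith
  · refine hcont.surjective' (Filter.tendsto_atTop_mono' _ ?_
      (Filter.tendsto_atTop_add_const_left _ (f 0) (Filter.tendsto_neg_atBot_atTop.comp hneg)))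
      (Filter.tendsto_atBot_mono' _ ?_
      (Filter.tendsto_atBot_add_const_left _ (f 0) (Filter.tendsto_neg_atTop_atBot.comp hpos)))
    · filter_upwards [Filter.eventually_le_atBot 0] with t ht
      have := (h t 0).1
      rw [sub_zero, abs_of_nonpos ht, abs_of_nonneg (sub_nonneg.2 (hm.antitone ht))] at this
      simp only [Function.comp]
      linarith
    · filter_upwards [Filter.eventually_ge_atTop 0] with t ht
      have := (h t 0).1
      rw [sub_zero, abs_of_nonneg ht, abs_of_nonpos (sub_nonpos.2 (hm.antitone ht))] at this
      simp only [Function.comp]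
      linarith

theorem isBilip_of_exp_bounds {B' : ℝ} (hB : 0 ≤ B) (hB' : 0 ≤ B') (hq : ∀ t, |q t - t| ≤ B')
    (hf : ∀ x x', x ≠ x' → Real.exp (q (Real.log |x - x'|) - B) ≤ |f x - f x'| ∧
      |f x - f x'| ≤ Real.exp (q (Real.log |x - x'|) + B)) : IsBilip f := by
  refine isBilip_of_bounds (M := Real.exp (B + B')) (Real.one_le_exp (by positivity))
    fun s t => ?_
  rcases eq_or_ne s t with rfl | hne
  · simp
  have hpos : 0 < |s - t| := abs_pos.2 (sub_ne_zero.2 hne)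
  have h1 := hf s t hne
  have h2 := abs_le.1 (hq (Real.log |s - t|))
  have e : ∀ a, Real.exp a * |s - t| = Real.exp (a + Real.log |s - t|) := fun a => by
    rw [Real.exp_add, Real.exp_log hpos]
  rw [one_div, ← Real.exp_neg, e, e]
  exact ⟨(Real.exp_le_exp.2 (by linarith)).trans h1.1,
    h1.2.trans (Real.exp_le_exp.2 (by linarith))⟩

end

section
variable {K C A B M : ℝ} {φ : ℝ × ℝ × ℝ → ℝ × ℝ × ℝ} {f g : ℝ → ℝ}

theorem Ascending.exists_isBilip (h : Ascending A φ) (hφ : RhoQI K C φ) (hK : 1 ≤ K)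
    (hC : 0 ≤ C) (hA : 0 ≤ A) (hM : 0 ≤ M)
    (hf : ∀ x y t, |(φ (vpt x y t)).1 - f x| ≤ M * Real.exp (ht (φ (vpt x y t))))
    (hg : ∀ x y t, |(φ (vpt x y t)).2.1 - g y| ≤ M * Real.exp (-ht (φ (vpt x y t)))) :
    IsBilip f ∧ ∃ B, 0 ≤ B ∧ ∀ x y t, |ht (φ (vpt x y t)) - t| ≤ B := by
  obtain ⟨B1, hB1, h1⟩ := h.log_boundary_le hφ hK hC hA hM hf hg
  obtain ⟨B2, hB2, h2⟩ := h.exists_height_map hφ hK hC hA hM hf hg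
  have hf' : ∀ x x', x ≠ x' →
      Real.exp (ht (φ (vpt 0 0 (Real.log |x - x'|))) - (B1 + B2)) ≤ |f x - f x'| ∧
      |f x - f x'| ≤ Real.exp (ht (φ (vpt 0 0 (Real.log |x - x'|))) + (B1 + B2)) := by
    intro x x' hne
    have k1 := h1 x x' 0 hne
    have k2 := abs_le.1 (h2 x 0 (Real.log |x - x'|))
    exact ⟨(Real.exp_le_exp.2 (by linarith)).trans k1.1,
      k1.2.trans (Real.exp_le_exp.2 (by linarith))⟩
  obtain ⟨B3, hB3, h3⟩ := exists_abs_sub_self_le (q := fun t => ht (φ (vpt 0 0 t)))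
    (add_nonneg hB1 hB2) (A := A) (K := K) (k := 8 * K + C) (fun s t hst => h 0 0 s t hst)
    (fun s t hst => by
      have := (abs_le.1 ((hφ.vertLip hK).abs_ht_le 0 0 t s)).2
      rwa [abs_of_nonneg (sub_nonneg.2 hst)] at this)
    (by linarith) hA (by linarith) hf'
  refine ⟨isBilip_of_exp_bounds (q := fun t => ht (φ (vpt 0 0 t))) (add_nonneg hB1 hB2) hB3 h3
    hf', B2 + B3, by positivity, fun x y t => ?_⟩
  have := abs_sub_le (ht (φ (vpt x y t))) (ht (φ (vpt 0 0 t))) t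
  linarith [h2 x y t, h3 t]

theorem rho_le_of_height_near (hM : 0 ≤ M) (hB : 0 ≤ B) {p : ℝ × ℝ × ℝ} {a b t : ℝ}
    (ht' : |ht p - t| ≤ B) (ha : |p.1 - a| ≤ M * Real.exp (ht p))
    (hb : |p.2.1 - b| ≤ M * Real.exp (-ht p)) :
    rho p (vpt a b t) ≤ 2 * (2 * (B + Real.log (M + 1)) + 4) := by
  obtain ⟨h1, h2⟩ := abs_le.1 ht'
  set N := Real.log (M + 1) with hN
  have hN0 : 0 ≤ N := Real.log_nonneg (by linarith)
  have hexp : Real.exp N = M + 1 := Real.exp_log (by linarith)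
  have key : ∀ u, M * Real.exp u ≤ Real.exp (N + u) := fun u => by
    rw [Real.exp_add, hexp]; nlinarith [Real.exp_pos u]
  have j1 := upJoin_le_of_abs_le (p := p) (q := vpt a b t) (h := t + B + N) (by linarith)
    (by rw [ht_vpt]; linarith)
    (ha.trans ((key _).trans (Real.exp_le_exp.2 (by linarith))))
  have j2 := le_dnJoin_of_abs_le (p := p) (q := vpt a b t) (h := t - B - N) (by linarith)
    (by rw [ht_vpt]; linarith)
    (hb.trans ((key _).trans (Real.exp_le_exp.2 (by linarith))))
  rw [rho]
  linarith [abs_nonneg (ht p - ht (vpt a b t))]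

theorem Ascending.exists_standard_form (h : Ascending A φ) (hφ : RhoQI K C φ) (hK : 1 ≤ K)
    (hC : 0 ≤ C) (hA : 0 ≤ A) :
    ∃ f g : ℝ → ℝ, IsBilip f ∧ IsBilip g ∧
      ∃ D, ∀ x y t, rho (φ (vpt x y t)) (vpt (f x) (g y) t) ≤ D := by
  obtain ⟨M1, hM1, f, hf⟩ := h.exists_boundary_fst hφ hK hA
  obtain ⟨M2, hM2, g, hg⟩ := h.exists_boundary_snd hφ hK hA
  set M := max M1 M2 with hM
  have hM0 : 0 ≤ M := hM1.trans (le_max_left _ _)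
  replace hf : ∀ x y t, |(φ (vpt x y t)).1 - f x| ≤ M * Real.exp (ht (φ (vpt x y t))) :=
    fun x y t => (hf x y t).trans
      (mul_le_mul_of_nonneg_right (le_max_left _ _) (Real.exp_pos _).le)
  replace hg : ∀ x y t, |(φ (vpt x y t)).2.1 - g y| ≤ M * Real.exp (-ht (φ (vpt x y t))) :=
    fun x y t => (hg x y t).trans
      (mul_le_mul_of_nonneg_right (le_max_right _ _) (Real.exp_pos _).le)
  obtain ⟨hfb, B, hB, h3⟩ := h.exists_isBilip hφ hK hC hA hM0 hf hg
  obtain ⟨hgb, -⟩ := h.conj_swap.exists_isBilip hφ.conj_swap hK hC hA hM0 (f := g) (g := f)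
    (fun x y t => by simpa using hg y x (-t)) (fun x y t => by simpa using hf y x (-t))
  exact ⟨f, g, hfb, hgb, _, fun x y t =>
    rho_le_of_height_near hM0 hB (h3 x y t) (hf x y t) (hg x y t)⟩

/-- Coarsely surjective quasi-isometric embeddings for `rho` have the standard form. -/
theorem RhoQI.exists_standard_form {D : ℝ} (hφ : RhoQI K C φ) (hK : 1 ≤ K) (hC : 0 ≤ C)
    (hD : 0 ≤ D) (hs : ∀ q, ∃ p, rho (φ p) q ≤ D) :
    ∃ f g : ℝ → ℝ, IsBilip f ∧ IsBilip g ∧ ∃ D',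
      ((∀ x y z : ℝ, rho (φ (x, y, z)) (f x, g y, z) ≤ D') ∨
       (∀ x y z : ℝ, rho (φ (x, y, z)) (f y, g x, -z) ≤ D')) := by
  obtain ⟨T0, hT0, hT⟩ := hφ.exists_half_le_abs_ht hK hC
    fun η hη => hφ.near_isometry hK hC hD hs hη
  have hz : ∀ x y z : ℝ, vpt x y (z / 2) = (x, y, z) := fun x y z => by
    simp [vpt, mul_div_cancel₀]
  obtain ⟨A, hA, h | h⟩ := hφ.exists_ascending hK hC hT0 hT
  · obtain ⟨f, g, hf, hg, D', hD'⟩ := h.exists_standard_form hφ hK hC hA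
    exact ⟨f, g, hf, hg, D', Or.inl fun x y z => by simpa only [hz] using hD' x y (z / 2)⟩
  · obtain ⟨f, g, hf, hg, D', hD'⟩ := h.exists_standard_form hφ.swap_comp hK hC hA
    refine ⟨g, f, hg, hf, D', Or.inr fun x y z => ?_⟩
    have := hD' x y (z / 2)
    rw [hz, hz, Function.comp, ← rho_swapPt] at this
    simpa [swapPt] using this

end

section
open MeasureTheory

/-- The speed of a path in `Sol`. -/
def solSpeed (γ : ℝ → ℝ × ℝ × ℝ) (t : ℝ) : ℝ :=
  Real.sqrt (Real.exp (-(γ t).2.2) * (deriv (fun s => (γ s).1) t) ^ 2 +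
    Real.exp ((γ t).2.2) * (deriv (fun s => (γ s).2.1) t) ^ 2 +
    (deriv (fun s => (γ s).2.2) t) ^ 2)

theorem solLength_eq (γ : ℝ → ℝ × ℝ × ℝ) : solLength γ = ∫ t in (0:ℝ)..1, solSpeed γ t := rfl

theorem solSpeed_nonneg (γ : ℝ → ℝ × ℝ × ℝ) (t : ℝ) : 0 ≤ solSpeed γ t := Real.sqrt_nonneg _

theorem solLength_nonneg (γ : ℝ → ℝ × ℝ × ℝ) : 0 ≤ solLength γ :=
  intervalIntegral.integral_nonneg zero_le_one fun t _ => solSpeed_nonneg γ t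

theorem abs_deriv_height_le_solSpeed (γ : ℝ → ℝ × ℝ × ℝ) (t : ℝ) :
    |deriv (fun s => (γ s).2.2) t| ≤ solSpeed γ t := by
  apply Real.abs_le_sqrt
  have h1 := (Real.exp_pos (-(γ t).2.2)).le
  have h2 := (Real.exp_pos ((γ t).2.2)).le
  nlinarith [mul_nonneg h1 (sq_nonneg (deriv (fun s => (γ s).1) t)),
    mul_nonneg h2 (sq_nonneg (deriv (fun s => (γ s).2.1) t))]

theorem abs_deriv_fst_le_solSpeed (γ : ℝ → ℝ × ℝ × ℝ) (t : ℝ) :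
    |deriv (fun s => (γ s).1) t| ≤ Real.exp ((γ t).2.2 / 2) * solSpeed γ t := by
  have h : |Real.exp (-(γ t).2.2 / 2) * deriv (fun s => (γ s).1) t| ≤ solSpeed γ t := by
    apply Real.abs_le_sqrt
    rw [mul_pow, ← Real.exp_nat_mul]
    have h2 := (Real.exp_pos ((γ t).2.2)).le
    have e : ((2 : ℕ) : ℝ) * (-(γ t).2.2 / 2) = -(γ t).2.2 := by push_cast; ring
    rw [e]
    nlinarith [sq_nonneg (deriv (fun s => (γ s).2.2) t),
      mul_nonneg h2 (sq_nonneg (deriv (fun s => (γ s).2.1) t))]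
  rw [abs_mul, Real.abs_exp] at h
  have h3 := mul_le_mul_of_nonneg_left h (Real.exp_pos ((γ t).2.2 / 2)).le
  rwa [← mul_assoc, ← Real.exp_add, neg_div, add_neg_cancel, Real.exp_zero, one_mul] at h3

theorem abs_deriv_snd_le_solSpeed (γ : ℝ → ℝ × ℝ × ℝ) (t : ℝ) :
    |deriv (fun s => (γ s).2.1) t| ≤ Real.exp (-(γ t).2.2 / 2) * solSpeed γ t := by
  have h : |Real.exp ((γ t).2.2 / 2) * deriv (fun s => (γ s).2.1) t| ≤ solSpeed γ t := by
    apply Real.abs_le_sqrt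
    rw [mul_pow, ← Real.exp_nat_mul]
    have h2 := (Real.exp_pos (-(γ t).2.2)).le
    have e : ((2 : ℕ) : ℝ) * ((γ t).2.2 / 2) = (γ t).2.2 := by push_cast; ring
    rw [e]
    nlinarith [sq_nonneg (deriv (fun s => (γ s).2.2) t),
      mul_nonneg h2 (sq_nonneg (deriv (fun s => (γ s).1) t))]
  rw [abs_mul, Real.abs_exp] at h
  have h3 := mul_le_mul_of_nonneg_left h (Real.exp_pos (-(γ t).2.2 / 2)).le
  rw [neg_div] at h3 ⊢
  rwa [← mul_assoc, ← Real.exp_add, neg_add_cancel, Real.exp_zero, one_mul] at h3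

theorem deriv_eqOn_derivWithin_Icc (u : ℝ → ℝ) (a b : ℝ) :
    EqOn (derivWithin u (Icc a b)) (deriv u) (Ioo a b) := fun _ ht =>
  derivWithin_of_mem_nhds (Icc_mem_nhds ht.1 ht.2)

theorem solSpeed_intervalIntegrable {γ : ℝ → ℝ × ℝ × ℝ} {a b : ℝ} (hab : a ≤ b)
    (h : ContDiffOn ℝ 1 γ (Icc a b)) : IntervalIntegrable (solSpeed γ) volume a b := by
  rcases hab.eq_or_lt with rfl | hab'
  · exact IntervalIntegrable.refl
  have h1 : ContDiffOn ℝ 1 (fun s => (γ s).1) (Icc a b) := h.fst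
  have h2 : ContDiffOn ℝ 1 (fun s => (γ s).2.1) (Icc a b) := h.snd.fst
  have h3 : ContDiffOn ℝ 1 (fun s => (γ s).2.2) (Icc a b) := h.snd.snd
  have hU := uniqueDiffOn_Icc hab'
  have c1 := h1.continuousOn_derivWithin hU le_rfl
  have c2 := h2.continuousOn_derivWithin hU le_rfl
  have c3 := h3.continuousOn_derivWithin hU le_rfl
  have c4 := h3.continuousOn
  have hc : ContinuousOn (fun t => Real.sqrt (
      Real.exp (-(γ t).2.2) * (derivWithin (fun s => (γ s).1) (Icc a b) t) ^ 2 +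
      Real.exp ((γ t).2.2) * (derivWithin (fun s => (γ s).2.1) (Icc a b) t) ^ 2 +
      (derivWithin (fun s => (γ s).2.2) (Icc a b) t) ^ 2)) (Icc a b) := by
    fun_prop
  refine (hc.intervalIntegrable_of_Icc hab).congr_uIoo fun t ht => ?_
  rw [uIoo_of_le hab] at ht
  simp only [solSpeed, deriv_eqOn_derivWithin_Icc _ a b ht]

theorem abs_sub_le_integral_of_pieces {u w : ℝ → ℝ} {τ : ℕ → ℝ} {n : ℕ}
    (hτ : ∀ i < n, τ i ≤ τ (i + 1)) (hu : ∀ i < n, ContDiffOn ℝ 1 u (Icc (τ i) (τ (i + 1))))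
    (hw : ∀ i < n, IntervalIntegrable w volume (τ i) (τ (i + 1)))
    (hle : ∀ i < n, ∀ t ∈ Ioo (τ i) (τ (i + 1)), |deriv u t| ≤ w t) :
    ∀ k ≤ n, ∀ t ∈ Icc (τ 0) (τ k), |u t - u (τ 0)| ≤ ∫ s in (τ 0)..t, w s := by
  intro k
  induction k with
  | zero =>
    intro _ t ht
    obtain rfl : t = τ 0 := le_antisymm ht.2 ht.1
    simp
  | succ k ih =>
    intro hk t ht
    rcases le_total t (τ k) with htk | htk
    · exact ih (by omega) t ⟨ht.1, htk⟩
    have hmono : τ 0 ≤ τ k := by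
      have : ∀ j ≤ k, τ 0 ≤ τ j := fun j => by
        induction j with
        | zero => intro _; exact le_rfl
        | succ j ihj => exact fun hj => (ihj (by omega)).trans (hτ j (by omega))
      exact this k le_rfl
    have h1 := ih (by omega) (τ k) ⟨hmono, le_rfl⟩
    have hi : IntervalIntegrable w volume (τ 0) (τ k) :=
      IntervalIntegrable.trans_iterate fun j hj => hw j (by omega)
    have hi2 : IntervalIntegrable w volume (τ k) t :=
      (hw k (by omega)).mono_set (by
        rw [uIcc_of_le htk, uIcc_of_le (htk.trans ht.2)]
        exact Icc_subset_Icc_right ht.2)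
    have huk := hu k (by omega)
    have h2 := norm_sub_le_integral_of_norm_deriv_le_of_le htk
      (huk.continuousOn.mono (Icc_subset_Icc_right ht.2))
      ((huk.differentiableOn one_ne_zero).mono
        (Ioo_subset_Icc_self.trans (Icc_subset_Icc_right ht.2)))
      (Filter.Eventually.of_forall fun s hs =>
        hle k (by omega) s ⟨hs.1, hs.2.trans_le ht.2⟩) hi2
    rw [Real.norm_eq_abs] at h2
    rw [← intervalIntegral.integral_add_adjacent_intervals hi hi2]
    have := abs_sub_le (u t) (u (τ k)) (u (τ 0))
    linarith

theorem rho_le_solLength {γ : ℝ → ℝ × ℝ × ℝ} (h : PiecewiseC1 γ) :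
    rho (γ 0) (γ 1) ≤ 6 * solLength γ + 8 := by
  obtain ⟨n, τ, h0, h1, hτ, hγ⟩ := h
  have hmono : ∀ i, ∀ j ≤ n, i ≤ j → τ i ≤ τ j := by
    intro i j
    induction j with
    | zero => intro _ hij; rw [Nat.le_zero.1 hij]
    | succ j ih =>
      intro hj hij
      rcases Nat.lt_or_ge j i with hji | hji
      · rw [show i = j + 1 by omega]
      · exact (ih (by omega) hji).trans (hτ j (by omega))
  have hw : ∀ i < n, IntervalIntegrable (solSpeed γ) volume (τ i) (τ (i + 1)) := fun i hi =>
    solSpeed_intervalIntegrable (hτ i hi) (hγ i hi)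
  have hwt : IntervalIntegrable (solSpeed γ) volume 0 1 := by
    rw [← h0, ← h1]
    exact IntervalIntegrable.trans_iterate hw
  set ℓ := solLength γ with hℓ
  have hℓ0 : 0 ≤ ℓ := solLength_nonneg γ
  have hz : ∀ t ∈ Icc (0 : ℝ) 1, |(γ t).2.2 - (γ 0).2.2| ≤ ℓ := by
    intro t ht
    have := abs_sub_le_integral_of_pieces (u := fun s => (γ s).2.2) hτ
      (fun i hi => (hγ i hi).snd.snd) hw (fun i _ t _ => abs_deriv_height_le_solSpeed γ t)
      n le_rfl t (by rwa [h0, h1])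
    rw [h0] at this
    exact this.trans (intervalIntegral.integral_mono_interval le_rfl ht.1 ht.2
      (Filter.Eventually.of_forall (solSpeed_nonneg γ)) hwt)
  have hin : ∀ i < n, ∀ t ∈ Ioo (τ i) (τ (i + 1)), t ∈ Icc (0 : ℝ) 1 := fun i hi t ht =>
    ⟨h0 ▸ (hmono 0 i hi.le (Nat.zero_le _)).trans ht.1.le,
      ht.2.le.trans (h1 ▸ hmono (i + 1) n le_rfl hi)⟩
  have hexp : ℓ ≤ Real.exp ℓ := by linarith [Real.add_one_le_exp ℓ]
  have gen : ∀ (u : ℝ → ℝ) (b : ℝ), (∀ i < n, ContDiffOn ℝ 1 u (Icc (τ i) (τ (i + 1)))) →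
      (∀ t ∈ Icc (0 : ℝ) 1, |deriv u t| ≤ Real.exp b * solSpeed γ t) →
      |u 0 - u 1| ≤ Real.exp (b + ℓ) := by
    intro u b hu hd
    have := abs_sub_le_integral_of_pieces (w := fun t => Real.exp b * solSpeed γ t) hτ hu
      (fun i hi => (hw i hi).const_mul _) (fun i hi t ht => hd t (hin i hi t ht)) n le_rfl 1
      (by rw [h0, h1]; simp)
    rw [h0, intervalIntegral.integral_const_mul, ← solLength_eq, abs_sub_comm] at this
    rw [Real.exp_add]
    exact this.trans (mul_le_mul_of_nonneg_left hexp (Real.exp_pos _).le)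
  have hx := gen (fun s => (γ s).1) (ht (γ 0) + ℓ / 2) (fun i hi => (hγ i hi).fst)
    fun t ht' => (abs_deriv_fst_le_solSpeed γ t).trans (mul_le_mul_of_nonneg_right
      (Real.exp_le_exp.2 (by rw [ht]; linarith [(abs_le.1 (hz t ht')).2])) (solSpeed_nonneg γ t))
  have hy := gen (fun s => (γ s).2.1) (-ht (γ 0) + ℓ / 2) (fun i hi => (hγ i hi).snd.fst)
    fun t ht' => (abs_deriv_snd_le_solSpeed γ t).trans (mul_le_mul_of_nonneg_right
      (Real.exp_le_exp.2 (by rw [ht]; linarith [(abs_le.1 (hz t ht')).1])) (solSpeed_nonneg γ t))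
  have hz1 := abs_le.1 (hz 1 (by simp))
  have j1 := upJoin_le_of_abs_le (p := γ 0) (q := γ 1) (h := ht (γ 0) + ℓ / 2 + ℓ)
    (by linarith) (by simp only [ht]; linarith [hz1.2]) hx
  have j2 := le_dnJoin_of_abs_le (p := γ 0) (q := γ 1) (h := ht (γ 0) - ℓ / 2 - ℓ)
    (by linarith) (by simp only [ht]; linarith [hz1.1])
    (by rwa [show -(ht (γ 0) - ℓ / 2 - ℓ) = -ht (γ 0) + ℓ / 2 + ℓ by ring])
  rw [rho]
  linarith [abs_nonneg (ht (γ 0) - ht (γ 1))]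

end

section
open MeasureTheory

/-- The function that rises linearly from `0` to `1` on `[k/5, (k+1)/5]`. -/
def ramp (k : ℕ) (t : ℝ) : ℝ := max 0 (min 1 (5 * t - k))

theorem ramp_of_le {k : ℕ} {t : ℝ} (h : 5 * t ≤ k) : ramp k t = 0 :=
  max_eq_left ((min_le_right _ _).trans (by linarith))

theorem ramp_of_ge {k : ℕ} {t : ℝ} (h : k + 1 ≤ 5 * t) : ramp k t = 1 := by
  rw [ramp, min_eq_left (by linarith), max_eq_right zero_le_one]

theorem ramp_of_mem {k : ℕ} {t : ℝ} (h : k ≤ 5 * t) (h' : 5 * t ≤ k + 1) :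
    ramp k t = 5 * t - k := by
  rw [ramp, min_eq_right (by linarith), max_eq_right (by linarith)]

theorem ramp_eqOn (i k : ℕ) : EqOn (ramp k)
    (fun t => if i < k then 0 else if i = k then 5 * t - k else 1)
    (Icc ((i : ℝ) / 5) (((i + 1 : ℕ) : ℝ) / 5)) := by
  rintro t ⟨h1, h2⟩
  push_cast at h2
  rcases lt_trichotomy i k with h | h | h
  · have : (i : ℝ) + 1 ≤ k := by exact_mod_cast h
    simp only [if_pos h]
    exact ramp_of_le (by linarith)
  · subst h
    simp only [lt_irrefl, if_false, if_true]
    exact ramp_of_mem (by linarith) (by linarith)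
  · have : (k : ℝ) + 1 ≤ i := by exact_mod_cast h
    simp only [if_neg h.not_gt, if_neg h.ne']
    exact ramp_of_ge (by linarith)

theorem ramp_contDiffOn (i k : ℕ) :
    ContDiffOn ℝ 1 (ramp k) (Icc ((i : ℝ) / 5) (((i + 1 : ℕ) : ℝ) / 5)) := by
  refine ContDiffOn.congr ?_ (ramp_eqOn i k)
  split_ifs <;> fun_prop

theorem ramp_hasDerivAt (i k : ℕ) {t : ℝ} (h : t ∈ Ioo ((i : ℝ) / 5) (((i + 1 : ℕ) : ℝ) / 5)) :
    HasDerivAt (ramp k) (if i = k then 5 else 0) t := by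
  have hd : HasDerivAt (fun t : ℝ => if i < k then 0 else if i = k then 5 * t - k else 1)
      (if i = k then 5 else 0) t := by
    rcases lt_trichotomy i k with h | h | h
    · simpa only [if_pos h, if_neg h.ne] using hasDerivAt_const t (0 : ℝ)
    · simp only [h, lt_irrefl, if_false, if_true]
      simpa using ((hasDerivAt_id t).const_mul (5 : ℝ)).sub_const (k : ℝ)
    · simpa only [if_neg h.not_gt, if_neg h.ne'] using hasDerivAt_const t (1 : ℝ)
  exact hd.congr_of_eventuallyEq
    ((ramp_eqOn i k).eventuallyEq_of_mem (Icc_mem_nhds h.1 h.2))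

/-- A path moving in turn along the vertical, first, vertical, second and vertical directions,
reaching height `H` and then height `L`. -/
def legPath (p q : ℝ × ℝ × ℝ) (H L : ℝ) (t : ℝ) : ℝ × ℝ × ℝ :=
  (p.1 + (q.1 - p.1) * ramp 1 t, p.2.1 + (q.2.1 - p.2.1) * ramp 3 t,
    p.2.2 + (H - p.2.2) * ramp 0 t + (L - H) * ramp 2 t + (q.2.2 - L) * ramp 4 t)

theorem legPath_zero (p q : ℝ × ℝ × ℝ) (H L : ℝ) : legPath p q H L 0 = p := by
  have : ∀ k, ramp k 0 = 0 := fun k => ramp_of_le (by simp)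
  simp [legPath, this]

theorem legPath_one (p q : ℝ × ℝ × ℝ) (H L : ℝ) : legPath p q H L 1 = q := by
  have : ∀ k ≤ 4, ramp k 1 = 1 := fun k hk => ramp_of_ge (by
    have : (k : ℝ) ≤ 4 := by exact_mod_cast hk
    linarith)
  simp [legPath, this]

theorem legPath_piecewiseC1 (p q : ℝ × ℝ × ℝ) (H L : ℝ) : PiecewiseC1 (legPath p q H L) := by
  refine ⟨5, fun i => (i : ℝ) / 5, by simp, by simp, fun i _ => ?_, fun i _ => ?_⟩
  · push_cast; linarith
  · have := fun k => ramp_contDiffOn i k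
    unfold legPath
    exact (contDiffOn_const.add (contDiffOn_const.mul (this 1))).prodMk
      ((contDiffOn_const.add (contDiffOn_const.mul (this 3))).prodMk
        (((contDiffOn_const.add (contDiffOn_const.mul (this 0))).add
          (contDiffOn_const.mul (this 2))).add (contDiffOn_const.mul (this 4))))

theorem legPath_solSpeed_le {p q : ℝ × ℝ × ℝ} {H L m : ℝ} (hm : 0 ≤ m)
    (h0 : |H - p.2.2| ≤ m) (h2 : |L - H| ≤ m) (h4 : |q.2.2 - L| ≤ m)
    (h1 : Real.exp (-H / 2) * |q.1 - p.1| ≤ m) (h3 : Real.exp (L / 2) * |q.2.1 - p.2.1| ≤ m)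
    {i : ℕ} (hi : i < 5) {t : ℝ} (ht : t ∈ Ioo ((i : ℝ) / 5) (((i + 1 : ℕ) : ℝ) / 5)) :
    solSpeed (legPath p q H L) t ≤ 5 * m := by
  have d := fun k => ramp_hasDerivAt i k ht
  have e := fun k => ramp_eqOn i k (Ioo_subset_Icc_self ht)
  have dx : deriv (fun s => (legPath p q H L s).1) t = _ :=
    (((d 1).const_mul (q.1 - p.1)).const_add p.1).deriv
  have dy : deriv (fun s => (legPath p q H L s).2.1) t = _ :=
    (((d 3).const_mul (q.2.1 - p.2.1)).const_add p.2.1).deriv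
  have dz : deriv (fun s => (legPath p q H L s).2.2) t = _ :=
    (((((d 0).const_mul (H - p.2.2)).const_add p.2.2).add ((d 2).const_mul (L - H))).add
      ((d 4).const_mul (q.2.2 - L))).deriv
  have sq : ∀ {a}, |a| ≤ m → a ^ 2 ≤ m ^ 2 := fun h => sq_le_sq' (abs_le.1 h).1 (abs_le.1 h).2
  have k1 : Real.exp (-H) * (q.1 - p.1) ^ 2 ≤ m ^ 2 := by
    have := sq (a := Real.exp (-H / 2) * (q.1 - p.1)) (by rwa [abs_mul, Real.abs_exp])
    rw [mul_pow, ← Real.exp_nat_mul] at this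
    convert this using 3
    push_cast; ring
  have k3 : Real.exp L * (q.2.1 - p.2.1) ^ 2 ≤ m ^ 2 := by
    have := sq (a := Real.exp (L / 2) * (q.2.1 - p.2.1)) (by rwa [abs_mul, Real.abs_exp])
    rw [mul_pow, ← Real.exp_nat_mul] at this
    convert this using 3
    push_cast; ring
  have k0 := sq h0
  have k2 := sq h2
  have k4 := sq h4
  rw [solSpeed, dx, dy, dz]
  refine Real.sqrt_le_iff.2 ⟨by positivity, ?_⟩
  simp only [legPath, e]
  interval_cases i <;> norm_num <;> nlinarith

theorem solLength_legPath_le {p q : ℝ × ℝ × ℝ} {H L m : ℝ} (hm : 0 ≤ m)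
    (h0 : |H - p.2.2| ≤ m) (h2 : |L - H| ≤ m) (h4 : |q.2.2 - L| ≤ m)
    (h1 : Real.exp (-H / 2) * |q.1 - p.1| ≤ m) (h3 : Real.exp (L / 2) * |q.2.1 - p.2.1| ≤ m) :
    solLength (legPath p q H L) ≤ 5 * m := by
  have hae : ∀ᵐ t : ℝ, t ∈ uIoc (0 : ℝ) 1 → ‖solSpeed (legPath p q H L) t‖ ≤ 5 * m := by
    have hfin : (range fun i : ℕ => (i : ℝ) / 5).Countable := countable_range _
    filter_upwards [hfin.ae_notMem volume] with t ht ht'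
    rw [uIoc_of_le zero_le_one] at ht'
    rw [Real.norm_eq_abs, abs_of_nonneg (solSpeed_nonneg _ _)]
    have hne : ∀ i : ℕ, (i : ℝ) ≠ 5 * t := fun i hi => ht ⟨i, by simp only [hi]; ring⟩
    have hlt1 := (Nat.floor_le (by linarith [ht'.1] : 0 ≤ 5 * t)).lt_of_ne (hne _)
    have hlt2 := Nat.lt_floor_add_one (5 * t)
    have h5 : ⌊5 * t⌋₊ < 5 := by
      have : (⌊5 * t⌋₊ : ℝ) < 5 := by linarith [ht'.2]
      exact_mod_cast this
    exact legPath_solSpeed_le hm h0 h2 h4 h1 h3 h5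
      ⟨by linarith, by push_cast; linarith⟩
  have := intervalIntegral.norm_integral_le_of_norm_le_const_ae hae
  rw [sub_zero, abs_one, mul_one] at this
  exact (le_abs_self _).trans this

theorem exists_path_le (p q : ℝ × ℝ × ℝ) : ∃ γ : ℝ → ℝ × ℝ × ℝ,
    γ 0 = p ∧ γ 1 = q ∧ PiecewiseC1 γ ∧ solLength γ ≤ 10 * rho p q + 5 := by
  refine ⟨legPath p q (2 * upJoin p q) (2 * dnJoin p q), legPath_zero _ _ _ _,
    legPath_one _ _ _ _, legPath_piecewiseC1 _ _ _ _, ?_⟩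
  have hr := rho_nonneg p q
  have r1 := upJoin_sub_ht_le_rho p q
  have r2 := ht_sub_dnJoin_le_rho q p
  rw [rho_comm, dnJoin_comm] at r2
  have r3 := upJoin_sub_dnJoin_le_rho p q
  have s1 := ht_le_upJoin_left p q
  have s2 := dnJoin_le_ht_right p q
  have s3 := dnJoin_le_ht_left p q
  have z1 : p.2.2 = 2 * ht p := by rw [ht]; ring
  have z2 : q.2.2 = 2 * ht q := by rw [ht]; ring
  refine (solLength_legPath_le (m := 2 * rho p q + 1) (by linarith) ?_ ?_ ?_ ?_ ?_).trans
    (by linarith)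
  · rw [z1, abs_of_nonneg (by linarith)]; linarith
  · rw [abs_of_nonpos (by linarith)]; linarith
  · rw [z2, abs_of_nonneg (by linarith)]; linarith
  · have h : |q.1 - p.1| ≤ Real.exp (upJoin p q) := by
      rw [exp_upJoin, abs_sub_comm]
      linarith [Real.exp_pos (ht p), Real.exp_pos (ht q)]
    calc Real.exp (-(2 * upJoin p q) / 2) * |q.1 - p.1|
        ≤ Real.exp (-(2 * upJoin p q) / 2) * Real.exp (upJoin p q) := by gcongr
      _ = 1 := by rw [← Real.exp_add, Real.exp_eq_one_iff]; ring
      _ ≤ _ := by linarith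
  · have h : |q.2.1 - p.2.1| ≤ Real.exp (-dnJoin p q) := by
      rw [exp_neg_dnJoin, abs_sub_comm]
      linarith [Real.exp_pos (-ht p), Real.exp_pos (-ht q)]
    calc Real.exp (2 * dnJoin p q / 2) * |q.2.1 - p.2.1|
        ≤ Real.exp (2 * dnJoin p q / 2) * Real.exp (-dnJoin p q) := by gcongr
      _ = 1 := by rw [← Real.exp_add, Real.exp_eq_one_iff]; ring
      _ ≤ _ := by linarith

theorem dSol_le_rho (p q : ℝ × ℝ × ℝ) : dSol p q ≤ 10 * rho p q + 5 := by
  obtain ⟨γ, h0, h1, hγ, hl⟩ := exists_path_le p q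
  refine le_trans (csInf_le ⟨0, ?_⟩ ⟨γ, h0, h1, hγ, rfl⟩) hl
  rintro _ ⟨γ', -, -, -, rfl⟩
  exact solLength_nonneg γ'

theorem rho_le_dSol (p q : ℝ × ℝ × ℝ) : rho p q ≤ 6 * dSol p q + 8 := by
  have : (rho p q - 8) / 6 ≤ dSol p q := by
    obtain ⟨γ, h0, h1, hγ, -⟩ := exists_path_le p q
    refine le_csInf ⟨_, γ, h0, h1, hγ, rfl⟩ ?_
    rintro _ ⟨γ', rfl, rfl, hγ', rfl⟩
    linarith [rho_le_solLength hγ']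
  linarith

theorem IsQIE.rhoQI {K C : ℝ} {φ : ℝ × ℝ × ℝ → ℝ × ℝ × ℝ} (hK : 1 ≤ K) (hC : 0 ≤ C)
    (h : IsQIE dSol dSol K C φ) : RhoQI (60 * K) (K * (6 * C + 38) + 6 * C + 38) φ := by
  intro p q
  obtain ⟨h1, h2⟩ := h p q
  have a1 := dSol_le_rho p q
  have a2 := rho_le_dSol p q
  have b1 := dSol_le_rho (φ p) (φ q)
  have b2 := rho_le_dSol (φ p) (φ q)
  have hKC : 0 ≤ K * C := by positivity
  have h3 : dSol p q ≤ K * (dSol (φ p) (φ q) + C) := by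
    have : dSol p q = K * (1 / K * dSol p q) := by field_simp
    rw [this]
    exact mul_le_mul_of_nonneg_left (by linarith) (by linarith)
  constructor
  · have := mul_le_mul_of_nonneg_left a1 (by linarith : 0 ≤ K)
    linarith
  · have := mul_le_mul_of_nonneg_left b1 (by linarith : 0 ≤ K)
    linarith

end

/-- **Theorem (Eskin–Fisher–Whyte).** Any quasi-isometry of `Sol` is at bounded distance from a
map of the form `(x,y,z) ↦ (f x, g y, z)` or `(x,y,z) ↦ (f y, g x, -z)` with `f, g`
bilipschitz homeomorphisms of `ℝ`. -/
theorem sol_qi_standard_form :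
    ∀ (φ : ℝ × ℝ × ℝ → ℝ × ℝ × ℝ) (K C : ℝ), 1 ≤ K → 0 ≤ C → IsQI dSol dSol K C φ →
      ∃ f g : ℝ → ℝ, IsBilip f ∧ IsBilip g ∧ ∃ D : ℝ, 0 ≤ D ∧
        ((∀ x y z : ℝ, dSol (φ (x, y, z)) (f x, g y, z) ≤ D) ∨
         (∀ x y z : ℝ, dSol (φ (x, y, z)) (f y, g x, -z) ≤ D)) := by
  intro φ K C hK hC h
  have hKC : 0 ≤ K * (6 * C + 38) := by positivity
  obtain ⟨f, g, hf, hg, D, hD⟩ := (h.1.rhoQI hK hC).exists_standard_form (by linarith)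
    (by linarith) (D := 6 * C + 8) (by linarith) fun q => by
      obtain ⟨p, hp⟩ := h.2 q
      exact ⟨p, (rho_le_dSol _ _).trans (by linarith)⟩
  have key : ∀ p q, rho p q ≤ D → dSol p q ≤ 10 * |D| + 5 := fun p q hpq =>
    (dSol_le_rho p q).trans (by linarith [le_abs_self D])
  exact ⟨f, g, hf, hg, 10 * |D| + 5, by positivity,
    hD.imp (fun h x y z => key _ _ (h x y z)) fun h x y z => key _ _ (h x y z)⟩

end
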